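/- Let k be a field of characteristic not equal to 2, let n > 1 be an integer, and let f be a non-degenerate quadratic form in k[x₁,…,xₙ]. Set R = k[x₁,…,xₙ]/(f). If C₀(f), the even part of the Clifford algebra of f, is a simple algebra, then the Grothendieck group G(R) of finitely generated R-modules is isomorphic to ℤ ⊕ ℤ/2ℤ. (Swan's theorem; Corollary 2.1.) -/

import Mathlib

/-!
Swan's theorem (Corollary 2.1): if `k` is a field of characteristic `≠ 2`, `n > 1`, `f` a
non-degenerate quadratic form in `k[x₁,…,xₙ]`, and the even Clifford algebra `C₀(f)` is simple,
then `G(k[x₁,…,xₙ]/(f)) ≅ ℤ ⊕ ℤ/2ℤ`.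
-/

universe u

/-- A bundled finitely generated module over `R`. -/
structure FGModuleRep (R : Type u) [CommRing R] : Type (u + 1) where
  carrier : Type u
  [isAddCommGroup : AddCommGroup carrier]
  [isModule : Module R carrier]
  [isFinite : Module.Finite R carrier]

attribute [instance] FGModuleRep.isAddCommGroup FGModuleRep.isModule FGModuleRep.isFinite

variable (R : Type u) [CommRing R]

/-- The subgroup of relations coming from short exact sequences of f.g. modules. -/
def sesRelations : AddSubgroup (FreeAbelianGroup (FGModuleRep R)) :=
  AddSubgroup.closure
    { z | ∃ (M₁ M₂ M₃ : FGModuleRep R) (f : M₁.carrier →ₗ[R] M₂.carrier)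
        (g : M₂.carrier →ₗ[R] M₃.carrier),
        Function.Injective f ∧ Function.Surjective g ∧
        LinearMap.range f = LinearMap.ker g ∧
        z = FreeAbelianGroup.of M₂ - FreeAbelianGroup.of M₁ - FreeAbelianGroup.of M₃ }

/-- The Grothendieck group of finitely generated `R`-modules. -/
def GGroup : Type (u + 1) :=
  FreeAbelianGroup (FGModuleRep R) ⧸ sesRelations R

noncomputable instance : AddCommGroup (GGroup R) :=
  QuotientAddGroup.Quotient.addCommGroup _

open MvPolynomial

namespace Swan

section GG
variable {R : Type u} [CommRing R]

noncomputable def gof (M : FGModuleRep R) : GGroup R :=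
  QuotientAddGroup.mk (s := sesRelations R) (FreeAbelianGroup.of M)

theorem gof_exact (M₁ M₂ M₃ : FGModuleRep R) (f : M₁.carrier →ₗ[R] M₂.carrier)
    (g : M₂.carrier →ₗ[R] M₃.carrier) (hf : Function.Injective f) (hg : Function.Surjective g)
    (h : LinearMap.range f = LinearMap.ker g) : gof M₂ = gof M₁ + gof M₃ := by
  have h1 : (FreeAbelianGroup.of M₂ - FreeAbelianGroup.of M₁ - FreeAbelianGroup.of M₃) ∈
      sesRelations R := AddSubgroup.subset_closure ⟨M₁, M₂, M₃, f, g, hf, hg, h, rfl⟩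
  have h2 : gof M₂ - gof M₁ - gof M₃ = 0 := (QuotientAddGroup.eq_zero_iff _).2 h1
  rw [sub_sub, sub_eq_zero] at h2
  exact h2

noncomputable def glift {A : Type*} [AddCommGroup A] (φ : FGModuleRep R → A)
    (h : ∀ (M₁ M₂ M₃ : FGModuleRep R) (f : M₁.carrier →ₗ[R] M₂.carrier)
    (g : M₂.carrier →ₗ[R] M₃.carrier), Function.Injective f → Function.Surjective g →
    LinearMap.range f = LinearMap.ker g → φ M₂ = φ M₁ + φ M₃) : GGroup R →+ A :=
  QuotientAddGroup.lift (sesRelations R) (FreeAbelianGroup.lift φ) (by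
    unfold sesRelations
    rw [AddSubgroup.closure_le]
    rintro z ⟨M₁, M₂, M₃, f, g, hf, hg, hh, rfl⟩
    simp [h M₁ M₂ M₃ f g hf hg hh])

@[simp] theorem glift_gof {A : Type*} [AddCommGroup A] (φ : FGModuleRep R → A) (h) (M) :
    glift φ h (gof M) = φ M := by
  change FreeAbelianGroup.lift φ (FreeAbelianGroup.of M) = φ M
  simp

theorem gg_mem_of_gof (H : AddSubgroup (GGroup R)) (h : ∀ M, gof M ∈ H) (x : GGroup R) : x ∈ H := by
  obtain ⟨y, rfl⟩ := QuotientAddGroup.mk_surjective x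
  induction y using FreeAbelianGroup.induction_on with
  | zero => exact H.zero_mem
  | of M => exact h M
  | neg M hM => exact H.neg_mem hM
  | add x y hx hy => exact H.add_mem hx hy

theorem gof_iso (M₁ M₂ : FGModuleRep R) (e : M₁.carrier ≃ₗ[R] M₂.carrier) : gof M₁ = gof M₂ := by
  let Z : FGModuleRep R := ⟨PUnit⟩
  have hz : gof Z = gof Z + gof Z := gof_exact Z Z Z 0 0
    (fun _ _ _ => rfl) (fun x => ⟨x, rfl⟩) (by ext x; exact ⟨fun _ => rfl, fun _ => ⟨x, rfl⟩⟩)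
  have hz' : gof Z = 0 := by simpa using hz
  have := gof_exact M₁ M₂ Z e.toLinearMap 0 e.injective (fun x => ⟨0, rfl⟩)
    (by simp)
  rw [this, hz', add_zero]

end GG

section transport
variable {R₁ R₂ : Type u} [CommRing R₁] [CommRing R₂]

def restr (e : R₁ ≃+* R₂) (M : FGModuleRep R₂) : FGModuleRep R₁ :=
  letI : Module R₁ M.carrier := Module.compHom M.carrier (e : R₁ →+* R₂)
  { carrier := M.carrier
    isFinite := by
      obtain ⟨s, hs⟩ := M.isFinite.fg_top
      refine ⟨⟨s, ?_⟩⟩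
      rw [eq_top_iff]
      intro x _
      have hx : x ∈ Submodule.span R₂ (s : Set M.carrier) := by rw [hs]; trivial
      induction hx using Submodule.span_induction with
      | mem x h => exact Submodule.subset_span h
      | zero => exact Submodule.zero_mem _
      | add x y _ _ hx hy => exact Submodule.add_mem _ (hx trivial) (hy trivial)
      | smul a x _ hx =>
        have : a • x = (e.symm a) • x := by
          change a • x = (e (e.symm a)) • x
          simp
        rw [this]
        exact Submodule.smul_mem _ _ (hx trivial) }

def restrMap (e : R₁ ≃+* R₂) {M N : FGModuleRep R₂} (f : M.carrier →ₗ[R₂] N.carrier) :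
    (restr e M).carrier →ₗ[R₁] (restr e N).carrier :=
  { toFun := f, map_add' := f.map_add, map_smul' := fun r x => f.map_smul (e r) x }

noncomputable def gmap (e : R₁ ≃+* R₂) : GGroup R₂ →+ GGroup R₁ :=
  glift (fun M => gof (restr e M)) (by
    intro M₁ M₂ M₃ f g hf hg h
    refine gof_exact _ _ _ (restrMap e f) (restrMap e g) hf hg ?_
    ext x
    exact SetLike.ext_iff.1 h x)

noncomputable def gequiv (e : R₁ ≃+* R₂) : GGroup R₂ ≃+ GGroup R₁ := by
  have key : ∀ {R₁ R₂ : Type u} [CommRing R₁] [CommRing R₂] (e : R₁ ≃+* R₂) (x : GGroup R₂),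
      gmap e.symm (gmap e x) = x := by
    intro R₁ R₂ _ _ e x
    let φ := ((gmap e.symm).comp (gmap e)) - AddMonoidHom.id _
    have : x ∈ φ.ker := by
      refine gg_mem_of_gof _ (fun M => ?_) x
      have : gmap e.symm (gmap e (gof M)) = gof M := by
        simp only [gmap, glift_gof]
        refine gof_iso _ _
          { toFun := fun x => x, invFun := fun x => x, map_add' := fun _ _ => rfl,
            map_smul' := ?_, left_inv := fun _ => rfl, right_inv := fun _ => rfl }
        intro r x
        change (e (e.symm r)) • (show M.carrier from x) = r • (show M.carrier from x)
        simp
      simp [φ, AddMonoidHom.mem_ker, this]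
    simpa [φ, AddMonoidHom.mem_ker, sub_eq_zero] using this
  exact { toFun := gmap e, invFun := gmap e.symm, left_inv := key e,
          right_inv := fun x => key e.symm x, map_add' := map_add _ }

end transport

section OpMod
variable {S : Type u} [CommRing S] (g : S)

abbrev Rg : Type u := QuadraticAlgebra S g 0

/-- an operator with square `g` -/
def IsOp {V : Type*} [AddCommGroup V] [Module S V] (η : V →ₗ[S] V) : Prop :=
  ∀ v, η (η v) = g • v

variable {g}
def OpMod {V : Type u} [AddCommGroup V] [Module S V] (η : V →ₗ[S] V) (_ : IsOp g η) : Type u := V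

section
variable {V : Type u} [AddCommGroup V] [Module S V] (η : V →ₗ[S] V) (h : IsOp g η)

instance : AddCommGroup (OpMod η h) := inferInstanceAs (AddCommGroup V)
instance : Module S (OpMod η h) := inferInstanceAs (Module S V)

noncomputable def opHom : Rg g →ₐ[S] Module.End S V :=
  QuadraticAlgebra.lift ⟨η, by ext v; simpa using h v⟩

noncomputable instance : Module (Rg g) (OpMod η h) :=
  Module.compHom V (opHom η h : Rg g →+* Module.End S V)

def opEta : OpMod η h →ₗ[S] OpMod η h := η

theorem op_smul (r : Rg g) (v : OpMod η h) :
    r • v = r.re • v + r.im • opEta η h v := by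
  have key : ∀ v : V, opHom η h r v = r.re • v + r.im • η v := by
    intro v
    simp [opHom, QuadraticAlgebra.lift]
  exact key v

instance : IsScalarTower S (Rg g) (OpMod η h) := ⟨fun s r v => by
  rw [op_smul, op_smul]
  simp [smul_add, mul_smul]⟩

instance [Module.Finite S V] : Module.Finite (Rg g) (OpMod η h) :=
  haveI : Module.Finite S (OpMod η h) := inferInstanceAs (Module.Finite S V)
  Module.Finite.of_restrictScalars_finite S _ _

noncomputable def cOp [Module.Finite S V] : GGroup (Rg g) := gof ⟨OpMod η h⟩

end

variable {V₁ V₂ V₃ : Type u} [AddCommGroup V₁] [Module S V₁] [AddCommGroup V₂] [Module S V₂]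
  [AddCommGroup V₃] [Module S V₃] [Module.Finite S V₁] [Module.Finite S V₂] [Module.Finite S V₃]

noncomputable def opMap {η₁ : V₁ →ₗ[S] V₁} {h₁ : IsOp g η₁} {η₂ : V₂ →ₗ[S] V₂} {h₂ : IsOp g η₂}
    (f : V₁ →ₗ[S] V₂) (hf : ∀ v, f (η₁ v) = η₂ (f v)) : OpMod η₁ h₁ →ₗ[Rg g] OpMod η₂ h₂ where
  toFun := f
  map_add' := f.map_add
  map_smul' r v := by
    have h1 := op_smul η₁ h₁ r v
    have h2 := op_smul η₂ h₂ r (f v)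
    rw [h1]
    refine Eq.trans ?_ h2.symm
    have key : ∀ v : V₁, f (r.re • v + r.im • η₁ v) = r.re • f v + r.im • η₂ (f v) := by
      intro v
      rw [map_add, map_smul, map_smul, hf]
    exact key v

theorem cOp_exact {η₁ : V₁ →ₗ[S] V₁} (h₁ : IsOp g η₁) {η₂ : V₂ →ₗ[S] V₂} (h₂ : IsOp g η₂)
    {η₃ : V₃ →ₗ[S] V₃} (h₃ : IsOp g η₃)
    (a : V₁ →ₗ[S] V₂) (b : V₂ →ₗ[S] V₃) (ha : ∀ v, a (η₁ v) = η₂ (a v))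
    (hb : ∀ v, b (η₂ v) = η₃ (b v)) (hinj : Function.Injective a) (hsurj : Function.Surjective b)
    (hex : ∀ v, b v = 0 ↔ ∃ w, a w = v) :
    cOp η₂ h₂ = cOp η₁ h₁ + cOp η₃ h₃ := by
  refine gof_exact ⟨OpMod η₁ h₁⟩ ⟨OpMod η₂ h₂⟩ ⟨OpMod η₃ h₃⟩
    (opMap (h₁ := h₁) (h₂ := h₂) a ha) (opMap (h₁ := h₂) (h₂ := h₃) b hb) hinj hsurj ?_
  ext v
  exact (hex v).symm

theorem cOp_iso {η₁ : V₁ →ₗ[S] V₁} (h₁ : IsOp g η₁) {η₂ : V₂ →ₗ[S] V₂} (h₂ : IsOp g η₂)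
    (e : V₁ ≃ₗ[S] V₂) (he : ∀ v, e (η₁ v) = η₂ (e v)) : cOp η₁ h₁ = cOp η₂ h₂ := by
  let E : OpMod η₁ h₁ ≃ₗ[Rg g] OpMod η₂ h₂ :=
    LinearEquiv.ofBijective (opMap (h₁ := h₁) (h₂ := h₂) e.toLinearMap he) e.bijective
  exact gof_iso ⟨OpMod η₁ h₁⟩ ⟨OpMod η₂ h₂⟩ E

theorem cOp_zero [Subsingleton V₁] {η₁ : V₁ →ₗ[S] V₁} (h₁ : IsOp g η₁) : cOp η₁ h₁ = 0 := by
  have := cOp_exact h₁ h₁ h₁ 0 0 (by intro v; exact Subsingleton.elim _ _)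
    (by intro v; exact Subsingleton.elim _ _) (fun _ _ _ => Subsingleton.elim _ _)
    (fun x => ⟨x, Subsingleton.elim _ _⟩)
    (fun v => ⟨fun _ => ⟨v, Subsingleton.elim _ _⟩, fun _ => Subsingleton.elim _ _⟩)
  simpa using this

/-- Any f.g. module is of the form `OpMod`. -/
noncomputable def omegaOp (M : Type u) [AddCommGroup M] [Module (Rg g) M] [Module S M]
    [IsScalarTower S (Rg g) M] : M →ₗ[S] M :=
  (LinearMap.lsmul (Rg g) M QuadraticAlgebra.omega).restrictScalars S

theorem omegaOp_apply (M : Type u) [AddCommGroup M] [Module (Rg g) M] [Module S M]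
    [IsScalarTower S (Rg g) M] (m : M) :
    omegaOp (g := g) M m = (QuadraticAlgebra.omega : Rg g) • m := rfl

theorem omegaOp_isOp (M : Type u) [AddCommGroup M] [Module (Rg g) M] [Module S M]
    [IsScalarTower S (Rg g) M] : IsOp g (omegaOp (g := g) M) := by
  intro v
  rw [omegaOp_apply, omegaOp_apply, smul_smul, QuadraticAlgebra.omega_mul_omega_eq_add]
  simp

theorem gof_eq_cOp (M : FGModuleRep (Rg g)) [Module S M.carrier]
    [IsScalarTower S (Rg g) M.carrier] [Module.Finite S M.carrier] :
    gof M = cOp (omegaOp (g := g) M.carrier) (omegaOp_isOp _) := by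
  refine gof_iso M ⟨OpMod (omegaOp (g := g) M.carrier) (omegaOp_isOp _)⟩
    (show M.carrier ≃ₗ[Rg g] OpMod (omegaOp (g := g) M.carrier) (omegaOp_isOp _) from
    { toFun := fun x => x, invFun := fun x => x, map_add' := fun _ _ => rfl,
      map_smul' := ?_, left_inv := fun _ => rfl, right_inv := fun _ => rfl })
  intro r v
  have h1 := op_smul (omegaOp (g := g) M.carrier) (omegaOp_isOp _) r v
  refine Eq.trans ?_ h1.symm
  change r • v = r.re • v + r.im • ((QuadraticAlgebra.omega : Rg g) • v)
  rw [← smul_assoc, ← algebraMap_smul (Rg g) r.re v, ← add_smul]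
  congr 1
  ext <;> simp [QuadraticAlgebra.algebraMap_eq]

end OpMod

end Swan

namespace Swan

section Reg
variable {k : Type u} [Field k] {m : ℕ}

abbrev PP (k : Type u) [Field k] (m : ℕ) : Type u := MvPolynomial (Fin (m+1)) k
abbrev SS (k : Type u) [Field k] (m : ℕ) : Type u := MvPolynomial (Fin m) k

noncomputable def Idl (k : Type u) [Field k] (m : ℕ) (i : ℕ) : Ideal (PP k m) :=
  Ideal.span (X '' {l : Fin (m+1) | l.val < i})

theorem Idl_zero : Idl k m 0 = ⊥ := by
  simp [Idl]

theorem Idl_succ (i : Fin (m+1)) :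
    Idl k m (i.val + 1) = Idl k m i.val ⊔ Ideal.span {X i} := by
  rw [Idl, Idl, ← Ideal.span_union]
  congr 1
  ext p
  simp only [Set.mem_image, Set.mem_ofPred_eq, Set.mem_union, Set.mem_singleton_iff]
  constructor
  · rintro ⟨l, hl, rfl⟩
    rcases Nat.lt_succ_iff_lt_or_eq.1 hl with h | h
    · exact Or.inl ⟨l, h, rfl⟩
    · right; congr 1; exact Fin.ext h
  · rintro (⟨l, hl, rfl⟩ | rfl)
    · exact ⟨l, by omega, rfl⟩
    · exact ⟨i, by omega, rfl⟩

def Reg (j : ℕ) (N : Type*) [AddCommGroup N] [Module (PP k m) N] : Prop :=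
  ∀ i : Fin (m+1), i.val < j → ∀ z : N,
    (X i : PP k m) • z ∈ Idl k m i.val • (⊤ : Submodule (PP k m) N) →
    z ∈ Idl k m i.val • (⊤ : Submodule (PP k m) N)

variable {F N : Type*} [AddCommGroup F] [Module (PP k m) F] [AddCommGroup N] [Module (PP k m) N]

theorem mem_Idl_succ (i : Fin (m+1)) (v : F)
    (hv : v ∈ Idl k m (i.val+1) • (⊤ : Submodule (PP k m) F)) :
    ∃ u ∈ Idl k m i.val • (⊤ : Submodule (PP k m) F), ∃ f : F, v = u + (X i : PP k m) • f := by
  rw [Idl_succ, Submodule.sup_smul, Submodule.mem_sup] at hv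
  obtain ⟨u, hu, y, hy, rfl⟩ := hv
  rw [Submodule.ideal_span_singleton_smul] at hy
  obtain ⟨f, -, rfl⟩ := hy
  exact ⟨u, hu, f, rfl⟩

theorem tor_lemma {j : ℕ} (φ : F →ₗ[PP k m] N) (hφ : Function.Surjective φ)
    (hN : Reg (k := k) (m := m) j N) : ∀ i : ℕ, i ≤ j → i ≤ m + 1 → ∀ v ∈ LinearMap.ker φ,
      v ∈ Idl k m i • (⊤ : Submodule (PP k m) F) → v ∈ Idl k m i • LinearMap.ker φ := by
  intro i
  induction i with
  | zero =>
    intro _ _ v _ hv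
    rw [Idl_zero] at hv ⊢
    simpa using hv
  | succ i ih =>
    intro hij him v hv hv2
    obtain ⟨u, hu, f, rfl⟩ := mem_Idl_succ (⟨i, by omega⟩ : Fin (m+1)) v hv2
    have hmap : Submodule.map φ (Idl k m i • (⊤ : Submodule (PP k m) F)) = Idl k m i • ⊤ := by
      rw [Submodule.map_smul'', Submodule.map_top, LinearMap.range_eq_top.2 hφ]
    have h1 : (X ⟨i, by omega⟩ : PP k m) • φ f ∈ Idl k m i • (⊤ : Submodule (PP k m) N) := by
      have h2 : φ u + (X ⟨i, by omega⟩ : PP k m) • φ f = 0 := by simpa using hv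
      have h3 : (X ⟨i, by omega⟩ : PP k m) • φ f = - φ u := by
        rw [eq_neg_iff_add_eq_zero, add_comm]; exact h2
      rw [h3]
      refine Submodule.neg_mem _ ?_
      rw [← hmap]
      exact Submodule.mem_map_of_mem hu
    have h4 := hN ⟨i, by omega⟩ (by simpa using hij) (φ f) h1
    rw [← hmap] at h4
    obtain ⟨f', hf', hff⟩ := h4
    have hκ : f - f' ∈ LinearMap.ker φ := by simp [LinearMap.mem_ker, hff]
    have h5 : u + (X ⟨i, by omega⟩ : PP k m) • f' ∈ Idl k m i • LinearMap.ker φ := by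
      refine ih (by omega) (by omega) _ ?_ (Submodule.add_mem _ hu (Submodule.smul_mem _ _ hf'))
      have : u + (X ⟨i, by omega⟩ : PP k m) • f' = (u + (X ⟨i, by omega⟩ : PP k m) • f)
        - (X ⟨i, by omega⟩ : PP k m) • (f - f') := by rw [smul_sub]; abel
      rw [this]
      exact Submodule.sub_mem _ hv (Submodule.smul_mem _ _ hκ)
    have h6 : u + (X ⟨i, by omega⟩ : PP k m) • f = (u + (X ⟨i, by omega⟩ : PP k m) • f') +
        (X ⟨i, by omega⟩ : PP k m) • (f - f') := by rw [smul_sub]; abel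
    rw [h6]
    have h7 := Idl_succ (k := k) (m := m) ⟨i, by omega⟩
    simp only at h7
    refine Submodule.add_mem _ (Submodule.smul_mono_left (by rw [h7]; exact le_sup_left) h5) ?_
    refine Submodule.smul_mem_smul ?_ hκ
    rw [h7]
    exact Ideal.mem_sup_right (Ideal.subset_span rfl)

theorem depth_lemma {j : ℕ} (φ : F →ₗ[PP k m] N) (hφ : Function.Surjective φ)
    (hN : Reg (k := k) (m := m) j N) (hF : Reg (k := k) (m := m) (j+1) F) :
    Reg (k := k) (m := m) (j+1) (LinearMap.ker φ) := by
  intro i hi z hz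
  rw [Submodule.mem_smul_top_iff] at hz ⊢
  refine tor_lemma φ hφ hN i (by omega) (by omega) _ z.2 (hF i hi _ ?_)
  exact Submodule.smul_mono le_rfl le_top hz

theorem mem_smul_pi {R A : Type*} [CommRing R] [Finite A] (I : Ideal R) (v : A → R) :
    v ∈ I • (⊤ : Submodule R (A → R)) ↔ ∀ a, v a ∈ I := by
  constructor
  · intro hv a
    have := Submodule.smul_top_le_comap_smul_top I (LinearMap.proj (R := R) (φ := fun _ : A => R) a) hv
    simpa using this
  · intro h
    classical
    cases nonempty_fintype A
    rw [pi_eq_sum_univ v]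
    exact Submodule.sum_mem _ fun a _ => Submodule.smul_mem_smul (h a) trivial

theorem reg_free {A : Type*} [Finite A] (j : ℕ) : Reg (k := k) (m := m) j (A → PP k m) := by
  intro i _ z hz
  rw [mem_smul_pi] at hz ⊢
  intro a
  have := hz a
  rw [Pi.smul_apply, smul_eq_mul] at this
  rw [Idl, mem_ideal_span_X_image] at this ⊢
  intro d hd
  have hd' : (Finsupp.single i 1 + d) ∈ (X i * z a).support := by
    rw [support_X_mul]; simpa using hd
  obtain ⟨l, hl, h⟩ := this _ hd'
  refine ⟨l, hl, ?_⟩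
  have hne : l ≠ i := by rintro rfl; simp at hl
  simpa [Finsupp.single_apply, hne.symm] using h

theorem mem_Idl_top (p : PP k m) : p ∈ Idl k m (m+1) ↔ coeff 0 p = 0 := by
  rw [Idl, mem_ideal_span_X_image]
  constructor
  · intro h
    by_contra h0
    obtain ⟨i, -, hi⟩ := h 0 (by simpa using h0)
    simp at hi
  · intro h d hd
    have : d ≠ 0 := by rintro rfl; simp [h] at hd
    obtain ⟨i, hi⟩ := Finsupp.ne_iff.1 this
    exact ⟨i, i.2, by simpa using hi⟩

end Reg

section Gr
variable {k : Type u} [Field k] {m : ℕ}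

structure Gr (k : Type u) [Field k] (m : ℕ) (N : Type*) [AddCommGroup N] [Module (PP k m) N] where
  pi : ℕ → N →+ N
  pi_smul : ∀ (a : PP k m) (e : ℕ), a.IsHomogeneous e → ∀ d n,
    pi d (a • n) = if e ≤ d then a • pi (d-e) n else 0
  pi_pi : ∀ d e n, pi d (pi e n) = if d = e then pi e n else 0
  pi_sum : ∀ n, ∃ D, n = ∑ d ∈ Finset.range D, pi d n

structure GOp (gP : PP k m) (N : Type*) [AddCommGroup N] [Module (PP k m) N] extends Gr k m N where
  eta : N →ₗ[PP k m] N
  eta_sq : ∀ n, eta (eta n) = gP • n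
  pi_eta : ∀ d n, pi (d+1) (eta n) = eta (pi d n)
  pi_eta0 : ∀ n, pi 0 (eta n) = 0

theorem sum_homComp_of_lt {σ : Type*} (p : MvPolynomial σ k) (D : ℕ) (h : p.totalDegree < D) :
    p = ∑ d ∈ Finset.range D, homogeneousComponent d p := by
  conv_lhs => rw [← sum_homogeneousComponent p]
  refine Finset.sum_subset (by intro x; simp; omega) ?_
  intro x _ hx
  apply homogeneousComponent_eq_zero
  simp at hx; omega

theorem homComp_mul {σ : Type*} (a b : MvPolynomial σ k) (e : ℕ) (ha : a.IsHomogeneous e) (d : ℕ) :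
    homogeneousComponent d (a * b) = if e ≤ d then a * homogeneousComponent (d-e) b else 0 := by
  conv_lhs => rw [sum_homComp_of_lt b (b.totalDegree + 1 + d) (by omega)]
  rw [Finset.mul_sum, map_sum]
  have h1 : ∀ j, homogeneousComponent d (a * homogeneousComponent j b) =
      if d = e + j then a * homogeneousComponent j b else 0 := fun j =>
    homogeneousComponent_of_mem ((mem_homogeneousSubmodule _ _).2
      (ha.mul (homogeneousComponent_isHomogeneous _ _)))
  simp_rw [h1]
  by_cases h : e ≤ d
  · rw [if_pos h, Finset.sum_eq_single (d - e)]
    · rw [if_pos (by omega)]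
    · intro j _ hj; rw [if_neg (by omega)]
    · intro h; simp at h; omega
  · rw [if_neg h]
    exact Finset.sum_eq_zero fun j _ => by rw [if_neg (by omega)]

/-- weighted free module projections -/
noncomputable def piF {A : Type*} (w : A → ℕ) (d : ℕ) : (A → PP k m) →+ (A → PP k m) where
  toFun v := fun i => if w i ≤ d then homogeneousComponent (d - w i) (v i) else 0
  map_zero' := by ext i : 1; simp
  map_add' v v' := by
    ext i : 1
    simp only [Pi.add_apply, map_add]
    split_ifs <;> simp

theorem piF_apply {A : Type*} (w : A → ℕ) (d : ℕ) (v : A → PP k m) (i : A) :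
    piF w d v i = if w i ≤ d then homogeneousComponent (d - w i) (v i) else 0 := rfl

noncomputable def grF {A : Type*} [Fintype A] (w : A → ℕ) : Gr k m (A → PP k m) where
  pi := piF w
  pi_smul a e ha d v := by
    ext i : 1
    simp only [piF_apply, Pi.smul_apply, smul_eq_mul]
    rw [homComp_mul _ _ _ ha]
    by_cases h1 : e ≤ d
    · rw [if_pos h1, Pi.smul_apply, piF_apply, smul_eq_mul]
      by_cases h2 : w i ≤ d - e
      · rw [if_pos (by omega), if_pos (by omega), if_pos h2]
        congr 3; omega
      · rw [if_neg h2]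
        split_ifs <;> first | omega | simp
    · rw [if_neg h1]
      split_ifs <;> first | omega | simp
  pi_pi d e v := by
    ext i : 1
    simp only [piF_apply]
    by_cases hw : w i ≤ e
    · rw [if_pos hw]
      by_cases hd : w i ≤ d
      · rw [if_pos hd, homogeneousComponent_of_mem (homogeneousComponent_mem _ _)]
        by_cases hde : d = e
        · subst hde; simp [piF_apply, hw]
        · rw [if_neg (by omega), if_neg hde]; rfl
      · rw [if_neg hd, if_neg (by omega)]; rfl
    · rw [if_neg hw]
      have : (if d = e then piF w e v else 0) i = 0 := by
        split_ifs <;> simp [piF_apply, hw]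
      rw [this]; simp
  pi_sum v := by
    refine ⟨∑ i, (w i + (v i).totalDegree + 1), ?_⟩
    ext i : 1
    rw [Finset.sum_apply]
    set D := ∑ i, (w i + (v i).totalDegree + 1) with hD
    have hi : w i + (v i).totalDegree + 1 ≤ D :=
      Finset.single_le_sum (f := fun i => w i + (v i).totalDegree + 1) (by simp) (Finset.mem_univ i)
    obtain ⟨D', hD'⟩ := Nat.exists_eq_add_of_le (show w i ≤ D by omega)
    rw [hD', Finset.sum_range_add]
    have h0 : ∑ d ∈ Finset.range (w i), piF w d v i = 0 := by
      refine Finset.sum_eq_zero fun d hd => ?_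
      rw [piF_apply, if_neg]; simp at hd; omega
    rw [h0, zero_add]
    conv_lhs => rw [sum_homComp_of_lt (v i) D' (by omega)]
    refine Finset.sum_congr rfl fun d _ => ?_
    rw [piF_apply, if_pos (by omega)]
    congr 2; omega

variable {N : Type*} [AddCommGroup N] [Module (PP k m) N]

theorem Gr.pi_smul_hom (G : Gr k m N) (a : PP k m) (z : N) (w : ℕ) (hz : G.pi w z = z) (d : ℕ) :
    G.pi d (a • z) = if w ≤ d then homogeneousComponent (d - w) a • z else 0 := by
  conv_lhs => rw [sum_homComp_of_lt a (a.totalDegree + 1 + d) (by omega)]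
  rw [Finset.sum_smul, map_sum]
  have h1 : ∀ e, G.pi d (homogeneousComponent e a • z) =
      if e + w = d then homogeneousComponent e a • z else 0 := by
    intro e
    rw [G.pi_smul _ _ (homogeneousComponent_isHomogeneous _ _)]
    by_cases he : e ≤ d
    · rw [if_pos he]
      have h2 : G.pi (d - e) z = if d - e = w then z else 0 := by
        conv_lhs => rw [← hz, G.pi_pi, hz]
      rw [h2]
      by_cases h3 : d - e = w
      · rw [if_pos h3, if_pos (by omega)]
      · rw [if_neg h3, if_neg (by omega), smul_zero]
    · rw [if_neg he, if_neg (by omega)]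
  simp_rw [h1]
  by_cases hw : w ≤ d
  · rw [if_pos hw, Finset.sum_eq_single (d - w)]
    · rw [if_pos (by omega)]
    · intro b _ hb; rw [if_neg (by omega)]
    · intro h; simp at h; omega
  · rw [if_neg hw]
    refine Finset.sum_eq_zero fun e _ => ?_
    rw [if_neg (by omega)]

theorem Gr.eq_zero (G : Gr k m N) (n : N) (h : ∀ d, G.pi d n = 0) : n = 0 := by
  obtain ⟨D, hD⟩ := G.pi_sum n
  rw [hD]; exact Finset.sum_eq_zero fun d _ => h d

theorem Gr.reg_t (G : Gr k m N) (n : N) (h : (X 0 - 1 : PP k m) • n = 0) : n = 0 := by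
  have h1 : (X 0 : PP k m) • n = n := by rwa [sub_smul, one_smul, sub_eq_zero] at h
  refine G.eq_zero n fun d => ?_
  induction d with
  | zero => rw [← h1, G.pi_smul _ 1 (isHomogeneous_X k _), if_neg (by omega)]
  | succ d ih =>
    rw [← h1, G.pi_smul _ 1 (isHomogeneous_X k _), if_pos (by omega)]
    simp [ih]

/-- the linear map from a free module given by a family -/
noncomputable def lc {R A M : Type*} [CommRing R] [Fintype A] [AddCommGroup M] [Module R M]
    (z : A → M) : (A → R) →ₗ[R] M := Fintype.linearCombination R z

theorem lc_apply {R A M : Type*} [CommRing R] [Fintype A] [AddCommGroup M] [Module R M]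
    (z : A → M) (v : A → R) : lc z v = ∑ a, v a • z a := by
  simp [lc, Fintype.linearCombination_apply]

theorem Gr.lc_pi {A : Type*} [Fintype A] (G : Gr k m N) (w : A → ℕ) (z : A → N)
    (hz : ∀ a, G.pi (w a) (z a) = z a) (d : ℕ) (v : A → PP k m) :
    lc z (piF w d v) = G.pi d (lc z v) := by
  rw [lc_apply, lc_apply, map_sum]
  refine Finset.sum_congr rfl fun a _ => ?_
  rw [G.pi_smul_hom _ _ _ (hz a), piF_apply]
  split_ifs <;> simp

/-- Homogeneous generators. -/
theorem Gr.exists_gens (G : Gr k m N) [Module.Finite (PP k m) N] :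
    ∃ (r : ℕ) (w : Fin r → ℕ) (z : Fin r → N), (∀ a, G.pi (w a) (z a) = z a) ∧
      Submodule.span (PP k m) (Set.range z) = ⊤ := by
  classical
  obtain ⟨s, hs⟩ := (inferInstance : Module.Finite (PP k m) N).fg_top
  choose D hD using G.pi_sum
  let T := Σ x : s, Fin (D x)
  let e : Fin (Fintype.card T) ≃ T := (Fintype.equivFin T).symm
  refine ⟨Fintype.card T, fun a => (e a).2.val, fun a => G.pi (e a).2.val (e a).1.val, ?_, ?_⟩
  · intro a
    simp [G.pi_pi]
  · rw [eq_top_iff, ← hs, Submodule.span_le]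
    intro x hx
    rw [SetLike.mem_coe, hD x]
    refine Submodule.sum_mem _ fun d hd => Submodule.subset_span ?_
    refine ⟨e.symm ⟨⟨x, hx⟩, ⟨d, by simpa using hd⟩⟩, ?_⟩
    exact congrArg (fun τ : T => G.pi τ.2.val τ.1.val)
      (e.apply_symm_apply ⟨⟨x, hx⟩, ⟨d, by simpa using hd⟩⟩)

theorem lc_surj {R A M : Type*} [CommRing R] [Fintype A] [AddCommGroup M] [Module R M]
    (z : A → M) (h : Submodule.span R (Set.range z) = ⊤) :
    Function.Surjective (lc (R := R) z) := by
  rw [← LinearMap.range_eq_top, lc, Fintype.range_linearCombination, h]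

/-- In full depth case a graded module has a homogeneous basis. -/
theorem Gr.exists_basis (G : Gr k m N) [Module.Finite (PP k m) N]
    (hN : Reg (k := k) (m := m) (m+1) N) :
    ∃ (r : ℕ) (w : Fin r → ℕ) (z : Fin r → N), (∀ a, G.pi (w a) (z a) = z a) ∧
      Function.Bijective (lc (R := PP k m) z) := by
  classical
  have hex := G.exists_gens
  let r := Nat.find hex
  obtain ⟨w, z, hz, hspan⟩ : ∃ (w : Fin r → ℕ) (z : Fin r → N),
    (∀ a, G.pi (w a) (z a) = z a) ∧ Submodule.span (PP k m) (Set.range z) = ⊤ := Nat.find_spec hex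
  have hmin : ∀ r', r' < r → ¬ ∃ (w : Fin r' → ℕ) (z : Fin r' → N),
    (∀ a, G.pi (w a) (z a) = z a) ∧ Submodule.span (PP k m) (Set.range z) = ⊤ :=
    fun r' h => Nat.find_min hex h
  refine ⟨r, w, z, hz, ?_, lc_surj z hspan⟩
  -- relations have zero constant terms
  have hrel : ∀ v : Fin r → PP k m, lc z v = 0 → ∀ a, coeff 0 (v a) = 0 := by
    intro v hv a
    by_contra hc
    have h1 : lc z (piF w (w a) v) = 0 := by rw [G.lc_pi w z hz, hv, map_zero]
    rw [lc_apply, ← Finset.add_sum_erase _ _ (Finset.mem_univ a)] at h1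
    rw [piF_apply, if_pos le_rfl, Nat.sub_self, homogeneousComponent_zero] at h1
    have h2 : z a ∈ Submodule.span (PP k m) (z '' {a}ᶜ) := by
      have h3 : (C (coeff 0 (v a)) : PP k m) • z a ∈ Submodule.span (PP k m) (z '' {a}ᶜ) := by
        rw [add_eq_zero_iff_eq_neg.1 h1]
        refine Submodule.neg_mem _ (Submodule.sum_mem _ fun b hb => Submodule.smul_mem _ _
          (Submodule.subset_span ⟨b, by simpa using (Finset.ne_of_mem_erase hb), rfl⟩))
      have h4 := Submodule.smul_mem _ (C (coeff 0 (v a))⁻¹ : PP k m) h3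
      rwa [smul_smul, ← C_mul, inv_mul_cancel₀ hc, C_1, one_smul] at h4
    obtain ⟨r', hr'⟩ : ∃ r', r = r' + 1 := ⟨r - 1, by have := a.2; omega⟩
    let e : Fin r' ≃ {b : Fin r // b ≠ a} := (Fintype.equivFinOfCardEq (by
      simp [Fintype.card_subtype_compl, hr'])).symm
    refine hmin r' (by omega) ⟨fun b => w (e b), fun b => z (e b), fun b => hz _, ?_⟩
    rw [eq_top_iff, ← hspan, Submodule.span_le]
    have h5 : z '' {a}ᶜ ⊆ Set.range fun b => z (e b) := by
      rintro _ ⟨b, hb, rfl⟩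
      exact ⟨e.symm ⟨b, hb⟩, by simp⟩
    rintro _ ⟨b, rfl⟩
    by_cases hb : b = a
    · subst hb
      exact Submodule.span_mono h5 h2
    · exact Submodule.subset_span (h5 ⟨b, hb, rfl⟩)
  have hle : LinearMap.ker (lc (R := PP k m) z) ≤ Idl k m (m+1) • LinearMap.ker (lc (R := PP k m) z) := by
    intro v hv
    refine tor_lemma _ (lc_surj z hspan) hN (m+1) le_rfl le_rfl v hv ?_
    rw [mem_smul_pi]
    intro a
    rw [mem_Idl_top]
    exact hrel v hv a
  obtain ⟨s, hs, hs0⟩ := Submodule.exists_sub_one_mem_and_smul_eq_zero_of_fg_of_le_smul _ _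
    (IsNoetherian.noetherian _) hle
  have hs' : s ≠ 0 := by
    rintro rfl
    rw [mem_Idl_top] at hs
    simp at hs
  rw [← LinearMap.ker_eq_bot, eq_bot_iff]
  intro v hv
  have := hs0 v hv
  exact (smul_eq_zero.1 this).resolve_left hs'

end Gr
end Swan

namespace Swan

section Theta
variable {k : Type u} [Field k] {m : ℕ}

noncomputable def th : PP k m →+* SS k m :=
  (aeval (Fin.cons 1 X : Fin (m+1) → SS k m) : PP k m →ₐ[k] SS k m).toRingHom

noncomputable def inc : SS k m →ₐ[k] PP k m := rename Fin.succ

theorem th_apply (p : PP k m) : th p = aeval (Fin.cons 1 X : Fin (m+1) → SS k m) p := rfl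

@[simp] theorem th_t : th (X 0 : PP k m) = 1 := by simp [th_apply]

@[simp] theorem th_inc (s : SS k m) : th (inc s) = s := by
  rw [th_apply, inc, aeval_rename]
  have : ((Fin.cons 1 X : Fin (m+1) → SS k m) ∘ Fin.succ) = X := by ext i : 1; simp
  rw [this, aeval_X_left_apply]

theorem th_ker (p : PP k m) (h : th p = 0) : ∃ q, p = (X 0 - 1) * q := by
  let I : Ideal (PP k m) := Ideal.span {X 0 - 1}
  have key : (Ideal.Quotient.mkₐ k I) = ((Ideal.Quotient.mkₐ k I).comp inc).comp
      (aeval (Fin.cons 1 X : Fin (m+1) → SS k m)) := by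
    apply MvPolynomial.algHom_ext
    intro i
    refine Fin.cases ?_ (fun i => ?_) i
    · simp only [AlgHom.comp_apply, aeval_X, Fin.cons_zero, map_one]
      rw [← map_one (Ideal.Quotient.mkₐ k I)]
      exact Ideal.Quotient.eq.2 (Ideal.subset_span rfl)
    · simp [AlgHom.comp_apply, inc]
  have h2 : Ideal.Quotient.mkₐ k I p = 0 := by
    rw [key]
    simp only [AlgHom.comp_apply]
    rw [← th_apply, h]; simp
  have h3 : p ∈ I := Ideal.Quotient.eq_zero_iff_mem.1 h2
  obtain ⟨q, hq⟩ := Ideal.mem_span_singleton'.1 h3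
  exact ⟨q, by rw [← hq, mul_comm]⟩

theorem th_degree (p : PP k m) (e : ℕ) (hp : p.IsHomogeneous e) : (th p).totalDegree ≤ e := by
  rw [th_apply, p.as_sum, map_sum]
  refine totalDegree_finsetSum_le fun d hd => ?_
  rw [aeval_monomial, algebraMap_eq]
  refine (totalDegree_mul _ _).trans ?_
  rw [totalDegree_C, zero_add, Finsupp.prod]
  refine (totalDegree_finsetProd _ _).trans ?_
  have hde : Finsupp.degree d = e := by
    by_contra hne
    exact (mem_support_iff.1 hd) (hp.coeff_eq_zero hne)
  rw [← hde, Finsupp.degree]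
  refine Finset.sum_le_sum fun i _ => (totalDegree_pow _ _).trans ?_
  have : (Fin.cons 1 X : Fin (m+1) → SS k m) i = 1 ∨ ∃ j, (Fin.cons 1 X : Fin (m+1) → SS k m) i = X j := by
    refine Fin.cases ?_ (fun i => ?_) i
    · left; simp
    · right; exact ⟨i, by simp⟩
  rcases this with h | ⟨j, h⟩ <;> rw [h] <;> simp

theorem th_lift (s : SS k m) (D : ℕ) (h : s.totalDegree ≤ D) :
    ∃ p : PP k m, p.IsHomogeneous D ∧ th p = s := by
  refine ⟨∑ d ∈ Finset.range (D+1), X 0 ^ (D-d) * inc (homogeneousComponent d s), ?_, ?_⟩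
  · refine IsHomogeneous.sum _ _ _ fun d hd => ?_
    have h1 := (isHomogeneous_X_pow (R := k) (0 : Fin (m+1)) (D-d)).mul
      ((homogeneousComponent_isHomogeneous d s).rename_isHomogeneous (f := Fin.succ))
    have h2 : D - d + d = D := by simp at hd; omega
    rw [h2] at h1
    exact h1
  · rw [map_sum]
    simp only [map_mul, map_pow, th_t, one_pow, one_mul, th_inc]
    exact (sum_homComp_of_lt s (D+1) (by omega)).symm

end Theta

section fop
/-- the operator on the free module -/
def fop {R : Type*} [CommRing R] (g : R) (J : Type*) : (J ⊕ J → R) →ₗ[R] (J ⊕ J → R) where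
  toFun v := Sum.elim (fun j => g * v (Sum.inr j)) (fun j => v (Sum.inl j))
  map_add' v v' := by ext (j | j) <;> simp [mul_add]
  map_smul' a v := by ext (j | j) <;> simp [mul_left_comm]

@[simp] theorem fop_inl {R : Type*} [CommRing R] (g : R) (J : Type*) (v : J ⊕ J → R) (j : J) :
  fop g J v (Sum.inl j) = g * v (Sum.inr j) := rfl
@[simp] theorem fop_inr {R : Type*} [CommRing R] (g : R) (J : Type*) (v : J ⊕ J → R) (j : J) :
  fop g J v (Sum.inr j) = v (Sum.inl j) := rfl

theorem fop_isOp {R : Type*} [CommRing R] (g : R) (J : Type*) : IsOp g (fop g J) := by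
  intro v
  ext (j | j) <;> simp

theorem lc_fop {R : Type*} [CommRing R] (g : R) {J : Type*} [Fintype J] {V : Type*}
    [AddCommGroup V] [Module R V]
    (ζ : V →ₗ[R] V) (hζ : ∀ v, ζ (ζ v) = g • v) (z : J → V) (v : J ⊕ J → R) :
    lc (Sum.elim z (fun j => ζ (z j))) (fop g J v) = ζ (lc (Sum.elim z (fun j => ζ (z j))) v) := by
  simp only [lc_apply, Fintype.sum_sum_type, map_add, map_sum, map_smul, Sum.elim_inl,
    Sum.elim_inr, fop_inl, fop_inr, hζ]
  rw [add_comm]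
  congr 1
  refine Finset.sum_congr rfl fun j _ => ?_
  rw [smul_smul, mul_comm]

variable {k : Type u} [Field k] {m : ℕ}

theorem piF_val {A : Type*} (w : A → ℕ) (d : ℕ) (v : A → PP k m) (i : A) (wi : ℕ) (h : w i = wi) :
    piF w d v i = if wi ≤ d then homogeneousComponent (d - wi) (v i) else 0 := by
  subst h; rfl

noncomputable def gopF (gP : PP k m) (hg : gP.IsHomogeneous 2) {J : Type*} [Fintype J] (w : J → ℕ) :
    GOp gP (J ⊕ J → PP k m) where
  toGr := grF (Sum.elim w (fun j => w j + 1))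
  eta := fop gP J
  eta_sq := fop_isOp gP J
  pi_eta d v := by
    change piF _ _ _ = fop gP J (piF _ _ _)
    ext (j | j) : 1
    · rw [fop_inl, piF_val _ _ _ (Sum.inl j) (w j) rfl, piF_val _ _ _ (Sum.inr j) (w j + 1) rfl, fop_inl,
        homComp_mul _ _ _ hg]
      by_cases h : w j + 1 ≤ d
      · rw [if_pos (by omega), if_pos (by omega), if_pos h]
        congr 3; omega
      · rw [if_neg h]
        split_ifs <;> first | omega | simp
    · rw [fop_inr, piF_val _ _ _ (Sum.inl j) (w j) rfl, piF_val _ _ _ (Sum.inr j) (w j + 1) rfl, fop_inr]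
      by_cases h : w j ≤ d
      · rw [if_pos (by omega), if_pos h]
        congr 2; omega
      · rw [if_neg (by omega), if_neg h]
  pi_eta0 v := by
    change piF _ _ _ = 0
    ext (j | j) : 1
    · rw [piF_val _ _ _ (Sum.inl j) (w j) rfl, fop_inl, homComp_mul _ _ _ hg]
      split_ifs <;> first | omega | simp
    · rw [piF_val _ _ _ (Sum.inr j) (w j + 1) rfl, if_neg (by omega)]; rfl

/-- graded sub-op-module -/
noncomputable def GOp.sub {gP : PP k m} {F : Type*} [AddCommGroup F] [Module (PP k m) F] (G : GOp gP F)
    (K : Submodule (PP k m) F) (hpi : ∀ d, ∀ v ∈ K, G.pi d v ∈ K) (heta : ∀ v ∈ K, G.eta v ∈ K) :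
    GOp gP K where
  pi d := ((G.pi d).comp K.subtype.toAddMonoidHom).codRestrict K (fun v => hpi d v.1 v.2)
  pi_smul a e ha d n := by
    apply Subtype.ext
    have := G.pi_smul a e ha d n.1
    split_ifs with h
    · rw [if_pos h] at this; exact this
    · rw [if_neg h] at this; exact this
  pi_pi d e n := by
    apply Subtype.ext
    have := G.pi_pi d e n.1
    split_ifs with h
    · rw [if_pos h] at this; exact this
    · rw [if_neg h] at this; exact this
  pi_sum n := by
    obtain ⟨D, hD⟩ := G.pi_sum n.1
    refine ⟨D, Subtype.ext ?_⟩
    rw [AddSubmonoidClass.coe_finsetSum]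
    exact hD
  eta := G.eta.restrict heta
  eta_sq n := Subtype.ext (G.eta_sq n.1)
  pi_eta d n := Subtype.ext (G.pi_eta d n.1)
  pi_eta0 n := Subtype.ext (G.pi_eta0 n.1)

/-- coordinatewise theta -/
noncomputable def thF (A : Type*) : (A → PP k m) →ₛₗ[(th : PP k m →+* SS k m)] (A → SS k m) where
  toFun v := fun a => th (v a)
  map_add' v v' := by ext a : 1; simp
  map_smul' c v := by ext a : 1; simp

@[simp] theorem thF_apply {A : Type*} (v : A → PP k m) (a : A) : thF A v a = th (v a) := rfl

theorem thF_surj {A : Type*} (v : A → SS k m) : ∃ u : A → PP k m, thF A u = v :=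
  ⟨fun a => inc (v a), by ext a : 1; simp⟩

theorem thF_ker {A : Type*} (v : A → PP k m) (h : thF A v = 0) :
    ∃ u : A → PP k m, v = (X 0 - 1 : PP k m) • u := by
  choose u hu using fun a => th_ker (v a) (congrFun h a)
  exact ⟨u, by ext a : 1; exact hu a⟩

theorem lc_th {N V A : Type*} [AddCommGroup N] [Module (PP k m) N] [AddCommGroup V]
    [Module (SS k m) V] [Fintype A] (ρ : N →ₛₗ[(th : PP k m →+* SS k m)] V) (z : A → N)
    (y : A → V) (hy : ∀ a, y a = ρ (z a))
    (u : A → PP k m) : ρ (lc z u) = lc y (thF A u) := by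
  rw [lc_apply, lc_apply, map_sum]
  refine Finset.sum_congr rfl fun a _ => ?_
  rw [hy, LinearMap.map_smulₛₗ]; rfl

end fop

section main
variable {k : Type u} [Field k] {m : ℕ}

/-- degree bound for the operator. -/
def DegB {r : ℕ} (w : Fin r → ℕ) (ζ : (Fin r → SS k m) →ₗ[SS k m] (Fin r → SS k m)) : Prop :=
  ∀ i j, ζ (Pi.single j 1) i ≠ 0 → (ζ (Pi.single j 1) i).totalDegree + w i ≤ w j + 1

theorem chi_mem (gP : PP k m) (hgP : gP.IsHomogeneous 2) (g : SS k m) (hg : th gP = g)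
    (𝒢 : AddSubgroup (GGroup (Rg g)))
    (H1 : ∀ r : ℕ, cOp (fop g (Fin r)) (fop_isOp g (Fin r)) ∈ 𝒢)
    (H2 : ∀ (r : ℕ) (w : Fin r → ℕ) (ζ : (Fin r → SS k m) →ₗ[SS k m] (Fin r → SS k m))
      (h : IsOp g ζ), DegB w ζ → cOp ζ h ∈ 𝒢) :
    ∀ (c j : ℕ), j + c = m + 1 → ∀ (N : Type u) [AddCommGroup N] [Module (PP k m) N]
      [Module.Finite (PP k m) N] (G : GOp gP N), Reg (k := k) (m := m) j N →
      ∀ (V : Type u) [AddCommGroup V] [Module (SS k m) V] [Module.Finite (SS k m) V]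
      (ζ : V →ₗ[SS k m] V) (hζ : IsOp g ζ) (ρ : N →ₛₗ[(th : PP k m →+* SS k m)] V)
      (_ : Function.Surjective ρ) (_ : ∀ n, ρ n = 0 → ∃ n', n = (X 0 - 1 : PP k m) • n')
      (_ : ∀ n, ρ (G.eta n) = ζ (ρ n)), cOp ζ hζ ∈ 𝒢 := by
  intro c
  induction c with
  | zero =>
    intro j hj N _ _ _ G hN V _ _ _ ζ hζ ρ hρ hker hcomm
    obtain rfl : j = m + 1 := by omega
    obtain ⟨r, w, z, hz, hbij⟩ := G.exists_basis hN
    let y : Fin r → V := fun a => ρ (z a)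
    have hly := lc_th ρ z y (fun _ => rfl)
    have hV : Function.Bijective (lc (R := SS k m) y) := by
      constructor
      · rw [← LinearMap.ker_eq_bot, eq_bot_iff]
        intro v hv
        obtain ⟨u, rfl⟩ := thF_surj v
        have h1 : ρ (lc z u) = 0 := by rw [hly]; exact hv
        obtain ⟨n', hn'⟩ := hker _ h1
        obtain ⟨u', rfl⟩ := hbij.2 n'
        rw [← map_smul] at hn'
        have := hbij.1 hn'
        rw [this, LinearMap.map_smulₛₗ]
        simp
      · intro v
        obtain ⟨n, rfl⟩ := hρ v
        obtain ⟨u, rfl⟩ := hbij.2 n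
        exact ⟨thF _ u, (hly u).symm⟩
    let E := LinearEquiv.ofBijective _ hV
    have hE : ∀ v, E v = lc y v := fun v => rfl
    let ζ' : (Fin r → SS k m) →ₗ[SS k m] (Fin r → SS k m) :=
      E.symm.toLinearMap ∘ₗ ζ ∘ₗ E.toLinearMap
    have hEζ : ∀ v, E (ζ' v) = ζ (E v) := fun v => by simp [ζ']
    have hop : IsOp g ζ' := by
      intro v
      apply E.injective
      rw [hEζ, hEζ, hζ, map_smul]
    rw [← cOp_iso hop hζ E hEζ]
    refine H2 r w ζ' hop ?_
    intro i j hij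
    obtain ⟨u, hu⟩ := hbij.2 (G.eta (z j))
    have h1 : ζ' (Pi.single j 1) = thF _ u := by
      apply E.injective
      rw [hEζ, hE (thF _ u), ← hly, hu, hcomm]
      congr 1
      rw [hE, lc_apply]
      simp [y, Pi.single_apply]
    have h2 : piF w (w j + 1) u = u := by
      apply hbij.1
      rw [G.lc_pi w z hz, hu, G.pi_eta, hz]
    rw [h1, thF_apply] at hij ⊢
    have h3 := congrFun h2 i
    rw [piF_apply] at h3
    by_cases hw : w i ≤ w j + 1
    · rw [if_pos hw] at h3
      have := th_degree (u i) (w j + 1 - w i) (by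
        rw [← h3]; exact homogeneousComponent_isHomogeneous _ _)
      omega
    · rw [if_neg hw] at h3
      rw [← h3] at hij
      simp at hij
  | succ c ih =>
    intro j hj N _ _ _ G hN V _ _ _ ζ hζ ρ hρ hker hcomm
    obtain ⟨r, w, z, hz, hspan⟩ := G.exists_gens
    let zz : Fin r ⊕ Fin r → N := Sum.elim z (fun j => G.eta (z j))
    have hzz : ∀ a, G.pi (Sum.elim w (fun j => w j + 1) a) (zz a) = zz a := by
      rintro (a | a)
      · exact hz a
      · simp [zz, G.pi_eta, hz]
    have hsurj : Function.Surjective (lc (R := PP k m) zz) := by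
      apply lc_surj
      rw [eq_top_iff, ← hspan]
      apply Submodule.span_mono
      rintro _ ⟨a, rfl⟩
      exact ⟨Sum.inl a, rfl⟩
    let GF := gopF gP hgP w
    let K := LinearMap.ker (lc (R := PP k m) zz)
    have hKpi : ∀ d, ∀ v ∈ K, GF.pi d v ∈ K := by
      intro d v hv
      have h1 := G.lc_pi _ zz hzz d v
      change lc zz (piF _ _ _) = 0
      rw [h1, show lc zz v = 0 from hv, map_zero]
    have hKeta : ∀ v ∈ K, GF.eta v ∈ K := by
      intro v hv
      have h1 := lc_fop gP G.eta G.eta_sq z v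
      change lc zz (fop _ _ v) = 0
      rw [h1, show lc (Sum.elim z _) v = 0 from hv, map_zero]
    let GK := GF.sub K hKpi hKeta
    have hKreg : Reg (k := k) (m := m) (j+1) K :=
      depth_lemma (lc (R := PP k m) zz) hsurj hN (reg_free _)
    let yy : Fin r ⊕ Fin r → V := Sum.elim (fun j => ρ (z j)) (fun j => ζ (ρ (z j)))
    have hly := lc_th ρ zz yy (by rintro (a | a) <;> simp [yy, zz, hcomm])
    let KV := LinearMap.ker (lc (R := SS k m) yy)
    have hKVeta : ∀ v ∈ KV, fop g (Fin r) v ∈ KV := by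
      intro v hv
      have h1 := lc_fop g ζ hζ (fun j => ρ (z j)) v
      change lc yy (fop _ _ v) = 0
      have h0 : lc yy v = 0 := hv
      exact h1.trans ((congrArg ζ h0).trans (map_zero ζ))
    let ζK : KV →ₗ[SS k m] KV := (fop g (Fin r)).restrict hKVeta
    have hζK : IsOp g ζK := fun v => Subtype.ext (fop_isOp g (Fin r) v.1)
    let ρK : K →ₛₗ[(th : PP k m →+* SS k m)] KV :=
      { toFun := fun u => ⟨thF _ u.1, by
          rw [LinearMap.mem_ker, ← hly, show lc zz u.1 = 0 from u.2, map_zero]⟩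
        map_add' := fun a b => Subtype.ext (map_add _ _ _)
        map_smul' := fun a b => Subtype.ext (LinearMap.map_smulₛₗ _ _ _) }
    have hρK : ∀ u, (ρK u).1 = thF _ u.1 := fun _ => rfl
    have hmem : cOp ζK hζK ∈ 𝒢 := by
      refine ih (j+1) (by omega) K GK hKreg KV ζK hζK ρK ?_ ?_ ?_
      · rintro ⟨v, hv⟩
        obtain ⟨u, rfl⟩ := thF_surj v
        have h1 : ρ (lc zz u) = 0 := by rw [hly]; exact hv
        obtain ⟨n', hn'⟩ := hker _ h1
        obtain ⟨u', rfl⟩ := hsurj n'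
        refine ⟨⟨u - (X 0 - 1 : PP k m) • u', ?_⟩, ?_⟩
        · change lc zz _ = 0
          rw [map_sub, map_smul, hn', sub_self]
        · apply Subtype.ext
          rw [hρK]
          simp only [map_sub, LinearMap.map_smulₛₗ]
          simp
      · rintro ⟨u, hu⟩ h
        have h1 : thF _ u = 0 := congrArg Subtype.val h
        obtain ⟨u', rfl⟩ := thF_ker u h1
        refine ⟨⟨u', ?_⟩, rfl⟩
        apply G.reg_t
        rw [← map_smul]; exact hu
      · rintro ⟨u, hu⟩
        apply Subtype.ext
        change thF _ (fop gP _ u) = fop g _ (thF _ u)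
        ext (a | a) : 1 <;> simp [hg]
    have hsV : Function.Surjective (lc (R := SS k m) yy) := by
      intro v
      obtain ⟨n, rfl⟩ := hρ v
      obtain ⟨u, rfl⟩ := hsurj n
      exact ⟨thF _ u, (hly u).symm⟩
    have hex := cOp_exact hζK (fop_isOp g (Fin r)) hζ KV.subtype (lc (R := SS k m) yy)
      (fun _ => rfl) (fun v => lc_fop g ζ hζ (fun j => ρ (z j)) v) Subtype.val_injective hsV
      (fun v => ⟨fun h => ⟨⟨v, h⟩, rfl⟩, by rintro ⟨w, rfl⟩; exact w.2⟩)
    have h1 := H1 r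
    rw [hex] at h1
    exact (AddSubgroup.add_mem_cancel_left 𝒢 hmem).1 h1

theorem gen_mem (gP : PP k m) (hgP : gP.IsHomogeneous 2) (g : SS k m) (hg : th gP = g)
    (𝒢 : AddSubgroup (GGroup (Rg g)))
    (H1 : ∀ r : ℕ, cOp (fop g (Fin r)) (fop_isOp g (Fin r)) ∈ 𝒢)
    (H2 : ∀ (r : ℕ) (w : Fin r → ℕ) (ζ : (Fin r → SS k m) →ₗ[SS k m] (Fin r → SS k m))
      (h : IsOp g ζ), DegB w ζ → cOp ζ h ∈ 𝒢)
    (V : Type u) [AddCommGroup V] [Module (SS k m) V] [Module.Finite (SS k m) V]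
    (ζ : V →ₗ[SS k m] V) (hζ : IsOp g ζ) : cOp ζ hζ ∈ 𝒢 := by
  obtain ⟨r, z, hz⟩ := Module.Finite.exists_fin (R := SS k m) (M := V)
  let yy : Fin r ⊕ Fin r → V := Sum.elim z (fun j => ζ (z j))
  have hsV : Function.Surjective (lc (R := SS k m) yy) := by
    apply lc_surj
    rw [eq_top_iff, ← hz]
    apply Submodule.span_mono
    rintro _ ⟨a, rfl⟩
    exact ⟨Sum.inl a, rfl⟩
  let KV := LinearMap.ker (lc (R := SS k m) yy)
  have hKVeta : ∀ v ∈ KV, fop g (Fin r) v ∈ KV := by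
    intro v hv
    have h1 := lc_fop g ζ hζ z v
    change lc yy (fop _ _ v) = 0
    have h0 : lc yy v = 0 := hv
    exact h1.trans ((congrArg ζ h0).trans (map_zero ζ))
  let ζK : KV →ₗ[SS k m] KV := (fop g (Fin r)).restrict hKVeta
  have hζK : IsOp g ζK := fun v => Subtype.ext (fop_isOp g (Fin r) v.1)
  have hex := cOp_exact hζK (fop_isOp g (Fin r)) hζ KV.subtype (lc (R := SS k m) yy)
    (fun _ => rfl) (fun v => lc_fop g ζ hζ z v) Subtype.val_injective hsV
    (fun v => ⟨fun h => ⟨⟨v, h⟩, rfl⟩, by rintro ⟨w, rfl⟩; exact w.2⟩)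
  have h1 := H1 r
  rw [hex] at h1
  refine (AddSubgroup.add_mem_cancel_left 𝒢 ?_).1 h1
  let w : Fin r → ℕ := fun _ => 0
  let GF := gopF gP hgP w
  let K : Submodule (PP k m) (Fin r ⊕ Fin r → PP k m) :=
    { carrier := {v | ∀ d, thF _ (GF.pi d v) ∈ KV}
      zero_mem' := fun d => by simp
      add_mem' := fun {a b} ha hb d => by
        rw [map_add, map_add]; exact KV.add_mem (ha d) (hb d)
      smul_mem' := fun c v hv d => by
        rw [sum_homComp_of_lt c _ (Nat.lt_succ_self _), Finset.sum_smul, map_sum, map_sum]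
        refine Submodule.sum_mem _ fun e _ => ?_
        rw [GF.pi_smul _ _ (homogeneousComponent_isHomogeneous _ _)]
        split_ifs
        · rw [LinearMap.map_smulₛₗ]
          exact KV.smul_mem _ (hv _)
        · simp }
  have hK : ∀ v, v ∈ K ↔ ∀ d, thF _ (GF.pi d v) ∈ KV := fun v => Iff.rfl
  have hKpi : ∀ d, ∀ v ∈ K, GF.pi d v ∈ K := by
    intro d v hv e
    rw [GF.pi_pi]
    split_ifs
    · exact hv d
    · simp
  have hthe : ∀ v, thF _ (GF.eta v) = fop g (Fin r) (thF _ v) := by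
    intro v
    change thF _ (fop gP _ v) = fop g _ (thF _ v)
    ext (a | a) : 1 <;> simp [hg]
  have hKeta : ∀ v ∈ K, GF.eta v ∈ K := by
    intro v hv d
    rcases d with _ | d
    · rw [GF.pi_eta0]; simp
    · rw [GF.pi_eta, hthe]
      exact hKVeta _ (hv d)
  let GK := GF.sub K hKpi hKeta
  have hKth : ∀ v ∈ K, thF _ v ∈ KV := by
    intro v hv
    obtain ⟨D, hD⟩ := GF.pi_sum v
    rw [hD, map_sum]
    exact Submodule.sum_mem _ fun d _ => hv d
  let ρK : K →ₛₗ[(th : PP k m →+* SS k m)] KV :=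
    { toFun := fun u => ⟨thF _ u.1, hKth _ u.2⟩
      map_add' := fun a b => Subtype.ext (map_add _ _ _)
      map_smul' := fun a b => Subtype.ext (LinearMap.map_smulₛₗ _ _ _) }
  refine chi_mem gP hgP g hg 𝒢 H1 H2 (m+1) 0 (by omega) K GK (by intro i hi; omega) KV ζK hζK ρK
    ?_ ?_ ?_
  · rintro ⟨v, hv⟩
    let D := ∑ a, (v a).totalDegree + 1
    have hD : ∀ a, (v a).totalDegree ≤ D - Sum.elim w (fun j => w j + 1) a := by
      intro a
      have h1 : (v a).totalDegree ≤ ∑ a, (v a).totalDegree :=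
        Finset.single_le_sum (f := fun a => (v a).totalDegree) (by simp) (Finset.mem_univ a)
      have h2 : Sum.elim w (fun j => w j + 1) a ≤ 1 := by rcases a with a | a <;> simp [w]
      simp only [D]; omega
    choose u hu hu2 using fun a => th_lift (v a) _ (hD a)
    have huv : thF _ u = v := by ext a : 1; exact hu2 a
    have hpi : ∀ d, GF.pi d u = if d = D then u else 0 := by
      intro d
      ext a : 1
      change piF _ _ _ a = _
      rw [piF_apply, homogeneousComponent_of_mem ((mem_homogeneousSubmodule _ _).2 (hu a))]
      have h2 : Sum.elim w (fun j => w j + 1) a ≤ 1 := by rcases a with a | a <;> simp [w]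
      have h3 : 1 ≤ D := by simp [D]
      by_cases hd : d = D
      · rw [if_pos hd, if_pos (by omega), if_pos (by omega)]
      · rw [if_neg hd]
        split_ifs <;> first | omega | rfl
    refine ⟨⟨u, ?_⟩, Subtype.ext huv⟩
    intro d
    rw [hpi]
    split_ifs
    · rw [huv]; exact hv
    · simp
  · rintro ⟨u, hu⟩ h
    have h1 : thF _ u = 0 := congrArg Subtype.val h
    obtain ⟨u', rfl⟩ := thF_ker u h1
    refine ⟨⟨u', ?_⟩, rfl⟩
    intro d
    have hstep : ∀ d, thF _ (GF.pi d ((X 0 : PP k m) • u')) - thF _ (GF.pi d u') ∈ KV := by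
      intro d
      have := hu d
      rwa [sub_smul, one_smul, map_sub, map_sub] at this
    induction d with
    | zero =>
      have := hstep 0
      rw [GF.pi_smul _ 1 (isHomogeneous_X k _), if_neg (by omega), map_zero, zero_sub] at this
      exact (Submodule.neg_mem_iff _).1 this
    | succ d ih =>
      have := hstep (d+1)
      rw [GF.pi_smul _ 1 (isHomogeneous_X k _), if_pos (by omega), LinearMap.map_smulₛₗ, th_t,
        one_smul, Nat.add_sub_cancel] at this
      have h3 := KV.sub_mem ih this
      rwa [sub_sub_cancel] at h3
  · rintro ⟨u, hu⟩
    exact Subtype.ext (hthe u)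

end main
end Swan

namespace Swan

section E
variable {k : Type u} [Field k] {m : ℕ}

def dle (p : SS k m) (x y : ℕ) : Prop := p ≠ 0 → p.totalDegree + x ≤ y

theorem dle_sub {p q : SS k m} {x y : ℕ} (hp : dle p x y) (hq : dle q x y) : dle (p - q) x y := by
  intro h
  by_cases hp0 : p = 0
  · subst hp0
    rw [zero_sub] at h ⊢
    rw [totalDegree_neg]
    exact hq (by simpa using h)
  by_cases hq0 : q = 0
  · subst hq0
    rw [sub_zero]; exact hp hp0
  have h1 := totalDegree_sub p q
  have := hp hp0
  have := hq hq0
  rcases le_max_iff.1 h1 with h | h <;> omega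

theorem dle_mul {p q : SS k m} {x y x' y' : ℕ} (hp : dle p x y) (hq : dle q x' y') :
    dle (p * q) (x + x') (y + y') := by
  intro h
  have h1 := hp (left_ne_zero_of_mul h)
  have h2 := hq (right_ne_zero_of_mul h)
  have h3 := totalDegree_mul p q
  omega

variable {J : Type} [Fintype J] [DecidableEq J]

def DegJ (w : J → ℕ) (ζ : (J → SS k m) →ₗ[SS k m] (J → SS k m)) : Prop :=
  ∀ i j, dle (ζ (Pi.single j 1) i) (w i) (w j + 1)

theorem quot_op {S : Type*} [CommRing S] {g : S} {V V' : Type*} [AddCommGroup V] [AddCommGroup V']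
    [Module S V] [Module S V'] (ζ : V →ₗ[S] V) (hζ : IsOp g ζ) (β : V →ₗ[S] V') (s : V' →ₗ[S] V)
    (hs : ∀ v, β (s v) = v) (hk : ∀ v, β v = 0 → β (ζ v) = 0) :
    (∀ v, β (ζ v) = (β ∘ₗ ζ ∘ₗ s) (β v)) ∧ IsOp g (β ∘ₗ ζ ∘ₗ s) := by
  have h1 : ∀ v, β (ζ v) = (β ∘ₗ ζ ∘ₗ s) (β v) := by
    intro v
    have := hk (v - s (β v)) (by rw [map_sub, hs, sub_self])
    rw [map_sub, map_sub, sub_eq_zero] at this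
    exact this
  refine ⟨h1, fun v => ?_⟩
  conv_lhs => rw [← hs v, ← h1, ← h1, hζ, map_smul, hs]

theorem sub_op {S : Type*} [CommRing S] {g : S} {V V' : Type*} [AddCommGroup V] [AddCommGroup V']
    [Module S V] [Module S V'] (ζ : V →ₗ[S] V) (hζ : IsOp g ζ) (α : V' →ₗ[S] V) (s : V →ₗ[S] V')
    (hs : ∀ v, s (α v) = v) (hk : ∀ v, ∃ w, ζ (α v) = α w) :
    (∀ v, α ((s ∘ₗ ζ ∘ₗ α) v) = ζ (α v)) ∧ IsOp g (s ∘ₗ ζ ∘ₗ α) := by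
  have h1 : ∀ v, α ((s ∘ₗ ζ ∘ₗ α) v) = ζ (α v) := by
    intro v
    obtain ⟨w, hw⟩ := hk v
    simp only [LinearMap.comp_apply]
    rw [hw, hs]
  refine ⟨h1, fun v => ?_⟩
  have := h1 ((s ∘ₗ ζ ∘ₗ α) v)
  rw [h1 v, hζ, ← map_smul] at this
  have h2 := congrArg s this
  rwa [hs, hs] at h2

/-- extension by zero from a subtype -/
noncomputable def xt (S : Type*) [CommRing S] {J : Type} (p : J → Prop) :
    ({j // p j} → S) →ₗ[S] (J → S) :=
  Function.ExtendByZero.linearMap S Subtype.val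

theorem xt_pos {S : Type*} [CommRing S] {J : Type} (p : J → Prop) (v : {j // p j} → S) (j : J)
    (h : p j) : xt S p v j = v ⟨j, h⟩ :=
  Subtype.val_injective.extend_apply v 0 ⟨j, h⟩

theorem xt_neg {S : Type*} [CommRing S] {J : Type} (p : J → Prop) (v : {j // p j} → S) (j : J)
    (h : ¬ p j) : xt S p v j = 0 :=
  Function.extend_apply' (f := (Subtype.val : {j // p j} → J)) v (0 : J → S) j
    (by rintro ⟨a, rfl⟩; exact h a.2)

theorem xt_single {S : Type*} [CommRing S] {J : Type} [DecidableEq J] (p : J → Prop) (b : {j // p j}) :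
    xt S p (Pi.single b 1) = Pi.single b.1 1 := by
  ext j
  by_cases h : p j
  · rw [xt_pos p _ j h, Pi.single_apply, Pi.single_apply]
    simp [Subtype.ext_iff]
  · rw [xt_neg p _ j h, Pi.single_apply, if_neg]
    rintro rfl; exact h b.2

theorem E_lemma (g : SS k m) (𝒢 : AddSubgroup (GGroup (Rg g)))
    (HR : cOp (fop g Unit) (fop_isOp g Unit) ∈ 𝒢)
    (HL : ∀ (J : Type) [Fintype J] [DecidableEq J] (ζ : (J → SS k m) →ₗ[SS k m] (J → SS k m))
      (h : IsOp g ζ), (∀ i j, (ζ (Pi.single j 1) i).totalDegree ≤ 1) → cOp ζ h ∈ 𝒢) :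
    ∀ (n : ℕ) (J : Type) [Fintype J] [DecidableEq J], Fintype.card J = n → ∀ (w : J → ℕ)
      (ζ : (J → SS k m) →ₗ[SS k m] (J → SS k m)) (h : IsOp g ζ), DegJ w ζ → cOp ζ h ∈ 𝒢 := by
  intro n
  induction n using Nat.strong_induction_on with
  | _ n ih =>
  intro J _ _ hcard w ζ hζ hdeg
  rcases isEmpty_or_nonempty J with hJ | hJ
  · rw [cOp_zero]; exact 𝒢.zero_mem
  obtain ⟨j0, hj0⟩ := Finite.exists_min w
  by_cases hcase : ∃ j i, w j = w j0 ∧ w i = w j0 + 1 ∧ ζ (Pi.single j 1) i ≠ 0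
  · obtain ⟨j, i, hj, hi, hne⟩ := hcase
    have hd0 : (ζ (Pi.single j 1) i).totalDegree = 0 := by
      have := hdeg i j hne; omega
    obtain ⟨c, hc⟩ : ∃ c : k, ζ (Pi.single j 1) i = C c :=
      ⟨_, (totalDegree_eq_zero_iff_eq_C).1 hd0⟩
    have hc0 : c ≠ 0 := by rintro rfl; simp [hc] at hne
    have hij : i ≠ j := by rintro rfl; omega
    let p : J → Prop := fun a => a ≠ i ∧ a ≠ j
    let q : J → SS k m := ζ (Pi.single j 1)
    have hqi : q i = C c := hc
    let β : (J → SS k m) →ₗ[SS k m] ({a // p a} → SS k m) :=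
      LinearMap.funLeft _ _ Subtype.val -
        (LinearMap.toSpanSingleton (SS k m) _ (fun a : {a // p a} => q a.1 * C c⁻¹)) ∘ₗ LinearMap.proj i
    have hβ : ∀ v a, β v a = v a.1 - v i * (q a.1 * C c⁻¹) := by
      intro v a; simp [β, LinearMap.funLeft_apply]
    have hs : ∀ v, β (xt _ p v) = v := by
      intro v; ext a : 1
      rw [hβ, xt_pos p v a.1 a.2, xt_neg p v i (by simp [p])]; simp
    let α := lc (R := SS k m) (Sum.elim (fun _ : Unit => (Pi.single j 1 : J → SS k m))
      (fun _ : Unit => ζ (Pi.single j 1)))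
    have hα : ∀ v, α v = v (Sum.inl ()) • (Pi.single j 1 : J → SS k m) + v (Sum.inr ()) • q := by
      intro v; simp [α, lc_apply, q]
    have hCc : (C c⁻¹ * C c : SS k m) = 1 := by rw [← C_mul, inv_mul_cancel₀ hc0, C_1]
    have hCc' : (C c * C c⁻¹ : SS k m) = 1 := by rw [← C_mul, mul_inv_cancel₀ hc0, C_1]
    have hker : ∀ v, β v = 0 ↔ ∃ u, α u = v := by
      intro v
      constructor
      · intro hv
        refine ⟨Sum.elim (fun _ => v j - v i * C c⁻¹ * q j) (fun _ => v i * C c⁻¹), ?_⟩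
        rw [hα]
        ext a : 1
        simp only [Sum.elim_inl, Sum.elim_inr, Pi.add_apply, Pi.smul_apply, smul_eq_mul]
        by_cases haj : a = j
        · subst haj; simp
        · rw [Pi.single_apply, if_neg haj]
          by_cases hai : a = i
          · subst hai; rw [hqi, mul_assoc (v a) (C c⁻¹) (C c), hCc]; simp
          · have := congrFun hv ⟨a, hai, haj⟩
            rw [hβ] at this
            have h3 : v a = v i * (q a * C c⁻¹) := by simpa [sub_eq_zero] using this
            rw [h3]; ring
      · rintro ⟨u, rfl⟩
        ext a : 1
        rw [hβ, hα]
        have h1 : (a : J) ≠ j := a.2.2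
        simp only [Pi.add_apply, Pi.smul_apply, smul_eq_mul, Pi.single_apply, if_neg h1, if_neg hij,
          hqi, mul_zero, zero_add]
        have : u (Sum.inr ()) * C c * (q a * C c⁻¹) = u (Sum.inr ()) * q a * (C c * C c⁻¹) := by ring
        rw [this, hCc']; simp
    have hint : ∀ v, α (fop g Unit v) = ζ (α v) := fun v =>
      lc_fop g ζ hζ (fun _ => (Pi.single j 1 : J → SS k m)) v
    obtain ⟨h1, h2⟩ := quot_op ζ hζ β (xt _ p) hs (by
      intro v hv
      obtain ⟨u, rfl⟩ := (hker v).1 hv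
      rw [← hint]
      exact (hker _).2 ⟨_, rfl⟩)
    have hinj : Function.Injective α := by
      rw [← LinearMap.ker_eq_bot, eq_bot_iff]
      intro v hv
      have hv : α v = 0 := hv
      rw [hα] at hv
      have e1 := congrFun hv i
      simp only [Pi.add_apply, Pi.smul_apply, smul_eq_mul, Pi.single_apply, if_neg hij,
          hqi, mul_zero, zero_add, Pi.zero_apply] at e1
      have e2 : v (Sum.inr ()) = 0 := by
        rcases mul_eq_zero.1 e1 with h | h
        · exact h
        · exact absurd (C_eq_zero.1 h) hc0
      have e3 := congrFun hv j
      simp [e2] at e3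
      show v = 0
      ext (⟨⟩ | ⟨⟩) : 1
      · exact e3
      · exact e2
    rw [cOp_exact (fop_isOp g Unit) hζ h2 α β hint h1 hinj (fun v => ⟨_, hs v⟩) hker]
    refine 𝒢.add_mem HR ?_
    refine ih (Fintype.card {a // p a}) ?_ {a // p a} rfl (fun a => w a.1) _ h2 ?_
    · rw [← hcard]
      exact Fintype.card_subtype_lt (x := i) (by simp [p])
    · intro a b
      simp only [LinearMap.comp_apply]
      rw [hβ, xt_single]
      refine dle_sub (hdeg a b) ?_
      have hCd : dle (C c⁻¹ : SS k m) 0 0 := by intro _; simp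
      have h5 := dle_mul (hdeg i b) (dle_mul (hdeg a j) hCd)
      intro hne
      have : totalDegree (ζ (Pi.single b.1 1) i * (q a.1 * C c⁻¹)) + (w i + (w a.1 + 0)) ≤
        w b.1 + 1 + (w j + 1 + 0) := h5 hne
      omega
  · push Not at hcase
    have hz : ∀ j i, w j = w j0 → w i ≠ w j0 → ζ (Pi.single j 1) i = 0 := by
      intro j i hj hi
      by_contra hne
      have h1 := hdeg i j hne
      have h2 := hj0 i
      exact hne (hcase j i hj (by omega))
    let p : J → Prop := fun a => w a = w j0
    let np : J → Prop := fun a => w a ≠ w j0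
    let α := xt (SS k m) p
    let β : (J → SS k m) →ₗ[SS k m] ({a // np a} → SS k m) := LinearMap.funLeft _ _ Subtype.val
    let s0 : (J → SS k m) →ₗ[SS k m] ({a // p a} → SS k m) := LinearMap.funLeft _ _ Subtype.val
    have hβ : ∀ v a, β v a = v a.1 := fun v a => rfl
    have hs0 : ∀ v a, s0 v a = v a.1 := fun v a => rfl
    have hker : ∀ v, β v = 0 ↔ ∃ u, α u = v := by
      intro v
      constructor
      · intro hv
        refine ⟨s0 v, ?_⟩
        ext a : 1
        by_cases ha : p a
        · rw [xt_pos p _ a ha]; rfl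
        · rw [xt_neg p _ a ha]; exact (congrFun hv ⟨a, ha⟩).symm
      · rintro ⟨u, rfl⟩
        ext a : 1
        rw [hβ, xt_neg p _ _ a.2]; rfl
    have hst : ∀ v, β (ζ (α v)) = 0 := by
      have : β ∘ₗ ζ ∘ₗ α = 0 := by
        apply LinearMap.pi_ext'
        intro b
        ext a : 2
        simp only [LinearMap.comp_apply, LinearMap.zero_apply, LinearMap.single_apply, Pi.zero_apply]
        rw [hβ, xt_single]
        exact hz _ _ b.2 a.2
      intro v
      exact LinearMap.congr_fun this v
    have hsα : ∀ v, s0 (α v) = v := by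
      intro v; ext a : 1
      rw [hs0, xt_pos p v a.1 a.2]
    have hsβ : ∀ v, β (xt _ np v) = v := by
      intro v; ext a : 1
      rw [hβ, xt_pos np v a.1 a.2]
    obtain ⟨h1, h2⟩ := sub_op ζ hζ α s0 hsα (by
      intro v
      obtain ⟨u, hu⟩ := (hker _).1 (hst v)
      exact ⟨u, hu.symm⟩)
    obtain ⟨h3, h4⟩ := quot_op ζ hζ β (xt _ np) hsβ (by
      intro v hv
      obtain ⟨u, rfl⟩ := (hker v).1 hv
      exact hst u)
    rw [cOp_exact h2 hζ h4 α β h1 h3 (Function.LeftInverse.injective hsα) (fun v => ⟨_, hsβ v⟩) hker]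
    refine 𝒢.add_mem ?_ ?_
    · refine HL {a // p a} _ h2 ?_
      intro a b
      simp only [LinearMap.comp_apply]
      rw [hs0, xt_single]
      by_cases h0 : ζ (Pi.single b.1 1) a.1 = 0
      · rw [h0]; simp
      · have h5 := hdeg a.1 b.1 h0
        have h6 : w a.1 = w j0 := a.2
        have h7 : w b.1 = w j0 := b.2
        omega
    · refine ih (Fintype.card {a // np a}) ?_ {a // np a} rfl (fun a => w a.1) _ h4 ?_
      · rw [← hcard]
        exact Fintype.card_subtype_lt (x := j0) (by simp [np])
      · intro a b
        simp only [LinearMap.comp_apply]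
        rw [hβ, xt_single]
        exact hdeg _ _

end E
end Swan

namespace Swan
open TensorProduct

section Rep
variable {k : Type u} [Field k] {m : ℕ}

noncomputable def gS (c : Fin m → k) : SS k m := ∑ i, C (c i) * X i ^ 2

structure IsRep (c : Fin m → k) {W : Type u} [AddCommGroup W] [Module k W]
    (A : Fin m → Module.End k W) : Prop where
  sq : ∀ i, A i * A i = c i • 1
  anti : ∀ i j, i ≠ j → A i * A j + A j * A i = 0

variable {W W₁ W₂ W₃ : Type u} [AddCommGroup W] [Module k W] [AddCommGroup W₁] [Module k W₁]
  [AddCommGroup W₂] [Module k W₂] [AddCommGroup W₃] [Module k W₃]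

noncomputable def mop (A : Fin m → Module.End k W) : (SS k m ⊗[k] W) →ₗ[SS k m] (SS k m ⊗[k] W) :=
  ∑ i, (X i : SS k m) • (A i).baseChange (SS k m)

theorem mop_tmul (A : Fin m → Module.End k W) (s : SS k m) (w : W) :
    mop A (s ⊗ₜ w) = ∑ i, (X i * s) ⊗ₜ A i w := by
  simp [mop, LinearMap.sum_apply, TensorProduct.smul_tmul']

theorem anti_sum {B : Type*} [Ring B] {ι : Type*} [Fintype ι] (f : ι → B) (h : ι → B)
    (hsq : ∀ i, f i * f i = h i) (hanti : ∀ i j, i ≠ j → f i * f j + f j * f i = 0) :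
    (∑ i, f i) * (∑ i, f i) = ∑ i, h i := by
  classical
  have key : ∀ s : Finset ι, (∑ i ∈ s, f i) * (∑ i ∈ s, f i) = ∑ i ∈ s, h i := by
    intro s
    induction s using Finset.induction_on with
    | empty => simp
    | insert a s ha ih =>
      rw [Finset.sum_insert ha, Finset.sum_insert ha, mul_add, add_mul, add_mul, ih, hsq]
      have : f a * (∑ i ∈ s, f i) + (∑ i ∈ s, f i) * f a = 0 := by
        rw [Finset.mul_sum, Finset.sum_mul, ← Finset.sum_add_distrib]
        exact Finset.sum_eq_zero fun i hi => hanti _ _ (by rintro rfl; exact ha hi)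
      have h2 : h a + (∑ i ∈ s, f i) * f a + (f a * (∑ i ∈ s, f i) + ∑ i ∈ s, h i) =
        h a + ∑ i ∈ s, h i + (f a * (∑ i ∈ s, f i) + (∑ i ∈ s, f i) * f a) := by abel
      rw [h2, this, add_zero]
  exact key _

theorem mop_isOp {c : Fin m → k} {A : Fin m → Module.End k W} (h : IsRep c A) :
    IsOp (gS c) (mop A) := by
  have key : (mop A : Module.End (SS k m) (SS k m ⊗[k] W)) * mop A =
      ∑ i, (C (c i) * X i ^ 2 : SS k m) • (1 : Module.End (SS k m) (SS k m ⊗[k] W)) := by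
    refine anti_sum (ι := Fin m) (fun i => (X i : SS k m) • ((A i).baseChange (SS k m) : Module.End (SS k m) (SS k m ⊗[k] W))) (fun i => (C (c i) * X i ^ 2 : SS k m) • (1 : Module.End (SS k m) (SS k m ⊗[k] W))) ?_ ?_
    · intro i
      rw [smul_mul_smul_comm]
      have h1 : ((A i).baseChange (SS k m) : Module.End (SS k m) (SS k m ⊗[k] W)) *
        (A i).baseChange (SS k m) = (C (c i) : SS k m) • 1 := by
        apply TensorProduct.AlgebraTensorModule.ext
        intro s w
        have h2 := LinearMap.congr_fun (h.sq i) w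
        simp only [Module.End.mul_apply, LinearMap.smul_apply, Module.End.one_apply] at h2
        simp [h2, TensorProduct.tmul_smul, TensorProduct.smul_tmul', MvPolynomial.smul_eq_C_mul]
      rw [h1, smul_smul]; congr 1; ring
    · intro i j hij
      rw [smul_mul_smul_comm, smul_mul_smul_comm, mul_comm (X j), ← smul_add]
      have h1 : ((A i).baseChange (SS k m) : Module.End (SS k m) (SS k m ⊗[k] W)) *
        (A j).baseChange (SS k m) + ((A j).baseChange (SS k m) : Module.End (SS k m) (SS k m ⊗[k] W)) *
        (A i).baseChange (SS k m) = 0 := by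
        apply TensorProduct.AlgebraTensorModule.ext
        intro s w
        have h2 := LinearMap.congr_fun (h.anti i j hij) w
        simp only [Module.End.mul_apply, LinearMap.add_apply, LinearMap.zero_apply] at h2
        simp [← TensorProduct.tmul_add, h2]
      rw [h1, smul_zero]
  intro v
  have := LinearMap.congr_fun key v
  rw [Module.End.mul_apply, ← Finset.sum_smul] at this
  exact this

noncomputable def cRep [Module.Finite k W] {c : Fin m → k} (A : Fin m → Module.End k W) (h : IsRep c A) :
    GGroup (Rg (gS c)) := cOp (mop A) (mop_isOp h)

theorem mop_map {A₁ : Fin m → Module.End k W₁} {A₂ : Fin m → Module.End k W₂} (f : W₁ →ₗ[k] W₂)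
    (hf : ∀ i w, f (A₁ i w) = A₂ i (f w)) (v : SS k m ⊗[k] W₁) :
    f.baseChange (SS k m) (mop A₁ v) = mop A₂ (f.baseChange (SS k m) v) := by
  induction v with
  | zero => simp
  | add x y hx hy => simp only [map_add, hx, hy]
  | tmul s w => simp [mop_tmul, hf]

theorem bc_inj (f : W₁ →ₗ[k] W₂) (hf : Function.Injective f) :
    Function.Injective (f.baseChange (SS k m)) :=
  Module.Flat.lTensor_preserves_injective_linearMap (M := SS k m) f hf

theorem bc_surj (f : W₁ →ₗ[k] W₂) (hf : Function.Surjective f) :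
    Function.Surjective (f.baseChange (SS k m)) :=
  LinearMap.lTensor_surjective (SS k m) hf

theorem bc_exact (a : W₁ →ₗ[k] W₂) (b : W₂ →ₗ[k] W₃) (hb : Function.Surjective b)
    (hex : Function.Exact a b) (v : SS k m ⊗[k] W₂) :
    b.baseChange (SS k m) v = 0 ↔ ∃ w, a.baseChange (SS k m) w = v :=
  lTensor_exact (SS k m) hex hb v

theorem cRep_exact [Module.Finite k W₁] [Module.Finite k W₂] [Module.Finite k W₃] {c : Fin m → k}
    {A₁ : Fin m → Module.End k W₁} {A₂ : Fin m → Module.End k W₂} {A₃ : Fin m → Module.End k W₃}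
    (h₁ : IsRep c A₁) (h₂ : IsRep c A₂) (h₃ : IsRep c A₃) (a : W₁ →ₗ[k] W₂) (b : W₂ →ₗ[k] W₃)
    (ha : ∀ i w, a (A₁ i w) = A₂ i (a w)) (hb : ∀ i w, b (A₂ i w) = A₃ i (b w))
    (hinj : Function.Injective a) (hsurj : Function.Surjective b) (hex : Function.Exact a b) :
    cRep A₂ h₂ = cRep A₁ h₁ + cRep A₃ h₃ :=
  cOp_exact _ _ _ (a.baseChange (SS k m)) (b.baseChange (SS k m)) (mop_map a ha) (mop_map b hb)
    (bc_inj a hinj) (bc_surj b hsurj) (bc_exact a b hsurj hex)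

theorem cRep_iso [Module.Finite k W₁] [Module.Finite k W₂] {c : Fin m → k}
    {A₁ : Fin m → Module.End k W₁} {A₂ : Fin m → Module.End k W₂}
    (h₁ : IsRep c A₁) (h₂ : IsRep c A₂) (e : W₁ ≃ₗ[k] W₂)
    (ha : ∀ i w, e (A₁ i w) = A₂ i (e w)) : cRep A₁ h₁ = cRep A₂ h₂ :=
  cOp_iso _ _ (e.baseChange k (SS k m) W₁ W₂) (mop_map e.toLinearMap ha)

/-- linear relations -/
theorem linear_rel (h2 : (2 : k) ≠ 0) {c : Fin m → k} (A0 : Module.End k W)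
    (A : Fin m → Module.End k W)
    (h : ∀ x : Fin m → k, (A0 + ∑ i, x i • A i) * (A0 + ∑ i, x i • A i) =
      (∑ i, c i * x i ^ 2) • (1 : Module.End k W)) :
    A0 * A0 = 0 ∧ (∀ i, A0 * A i + A i * A0 = 0) ∧ IsRep c A := by
  have h0 : A0 * A0 = 0 := by simpa using h 0
  have hs : ∀ (i : Fin m) (y : k), ∑ l, (Pi.single i y : Fin m → k) l • A l = y • A i := by
    intro i y
    rw [Finset.sum_eq_single i] <;> simp +contextual [Pi.single_apply]
  have hs' : ∀ (i : Fin m) (y : k), ∑ l, c l * (Pi.single i y : Fin m → k) l ^ 2 = c i * y ^ 2 := by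
    intro i y
    rw [Finset.sum_eq_single i] <;> simp +contextual [Pi.single_apply]
  have hp : ∀ i, (A0 + A i) * (A0 + A i) = c i • 1 := by
    intro i; have := h (Pi.single i 1); rw [hs, hs'] at this; simpa using this
  have hm : ∀ i, (A0 - A i) * (A0 - A i) = c i • 1 := by
    intro i; have := h (Pi.single i (-1)); rw [hs, hs'] at this; simpa [sub_eq_add_neg] using this
  have hsq : ∀ i, A i * A i = c i • 1 := by
    intro i
    have h3 : (2 : k) • (A i * A i) = (2 : k) • (c i • (1 : Module.End k W)) := by
      have : (A0 + A i) * (A0 + A i) + (A0 - A i) * (A0 - A i) = (2 : k) • (A0 * A0) + (2 : k) • (A i * A i) := by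
        rw [two_smul, two_smul]; noncomm_ring
      rw [hp, hm, h0, smul_zero, zero_add] at this
      rw [← this, two_smul]
    have h4 := congrArg (fun z => (2 : k)⁻¹ • z) h3
    simpa [smul_smul, h2] using h4
  have h1 : ∀ i, A0 * A i + A i * A0 = 0 := by
    intro i
    have h3 := hp i
    have h4 : (A0 + A i) * (A0 + A i) = A0 * A0 + A i * A i + (A0 * A i + A i * A0) := by noncomm_ring
    rw [h4, h0, hsq, zero_add] at h3
    simpa using h3
  refine ⟨h0, h1, hsq, ?_⟩
  intro i j hij
  have h3 := h (Pi.single i 1 + Pi.single j 1)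
  have e1 : ∑ l, (Pi.single i 1 + Pi.single j 1 : Fin m → k) l • A l = A i + A j := by
    simp only [Pi.add_apply, add_smul, Finset.sum_add_distrib]
    rw [hs, hs]; simp
  have e2 : ∑ l, c l * (Pi.single i 1 + Pi.single j 1 : Fin m → k) l ^ 2 = c i + c j := by
    have : ∀ l, c l * (Pi.single i 1 + Pi.single j 1 : Fin m → k) l ^ 2 =
      c l * (Pi.single i 1 : Fin m → k) l ^ 2 + c l * (Pi.single j 1 : Fin m → k) l ^ 2 := by
      intro l
      by_cases hl : l = i
      · subst hl; simp [Pi.single_apply, hij]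
      · simp [Pi.single_apply, hl]
    simp_rw [this, Finset.sum_add_distrib]
    rw [hs', hs']; simp
  rw [e1, e2] at h3
  have h4 : (A0 + (A i + A j)) * (A0 + (A i + A j)) = A0 * A0 + A i * A i + A j * A j +
    (A0 * A i + A i * A0) + (A0 * A j + A j * A0) + (A i * A j + A j * A i) := by noncomm_ring
  rw [h4, h0, hsq, hsq, h1, h1, zero_add, add_zero, add_zero, add_smul] at h3
  simpa using h3

theorem deg_one (p : SS k m) (h : p.totalDegree ≤ 1) :
    p = C (coeff 0 p) + ∑ i, C (coeff (Finsupp.single i 1) p) * X i := by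
  ext d
  rw [coeff_add, coeff_C, coeff_sum]
  simp only [coeff_C_mul, coeff_X]
  by_cases hd : d = 0
  · subst hd
    simp
  · rw [if_neg (Ne.symm hd), zero_add]
    by_cases hd1 : Finsupp.degree d = 1
    · obtain ⟨i, rfl⟩ : ∃ i, d = Finsupp.single i 1 := by
        obtain ⟨i, hi⟩ := Finsupp.ne_iff.1 hd
        refine ⟨i, ?_⟩
        have h1 : Finsupp.single i 1 ≤ d := by
          rw [Finsupp.single_le_iff]; simp at hi; omega
        obtain ⟨e, rfl⟩ := exists_add_of_le h1
        rw [map_add, Finsupp.degree_single] at hd1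
        have : Finsupp.degree e = 0 := by omega
        rw [Finsupp.degree_eq_zero_iff] at this
        rw [this, add_zero]
      rw [Finset.sum_eq_single i]
      · simp
      · intro j _ hj
        rw [if_neg]
        · simp
        · intro h; exact hj (Finsupp.single_left_injective one_ne_zero h)
      · simp
    · rw [Finset.sum_eq_zero]
      · apply coeff_eq_zero_of_totalDegree_lt
        have : Finsupp.degree d ≠ 0 := by rwa [Ne, Finsupp.degree_eq_zero_iff]
        rw [Finsupp.degree_apply] at this hd1
        change _ < ∑ i ∈ d.support, d i
        omega
      · intro i _
        rw [if_neg]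
        · simp
        · rintro rfl; simp at hd1

end Rep
end Swan

namespace Swan
open TensorProduct

section HL
variable {k : Type u} [Field k] {m : ℕ} {W : Type u} [AddCommGroup W] [Module k W]

noncomputable def evT (x : Fin m → k) : SS k m ⊗[k] W →ₗ[k] W :=
  TensorProduct.lift ((LinearMap.lsmul k W).comp (MvPolynomial.aeval x : SS k m →ₐ[k] k).toLinearMap)

@[simp] theorem evT_tmul (x : Fin m → k) (s : SS k m) (w : W) : evT x (s ⊗ₜ w) = eval x s • w := by
  simp [evT, aeval_eq_eval]

noncomputable def lop (A0 : Module.End k W) (A : Fin m → Module.End k W) :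
    (SS k m ⊗[k] W) →ₗ[SS k m] (SS k m ⊗[k] W) := A0.baseChange (SS k m) + mop A

theorem lop_tmul (A0 : Module.End k W) (A : Fin m → Module.End k W) (s : SS k m) (w : W) :
    lop A0 A (s ⊗ₜ w) = s ⊗ₜ A0 w + ∑ i, (X i * s) ⊗ₜ A i w := by
  simp [lop, mop_tmul]

theorem evT_lop (x : Fin m → k) (A0 : Module.End k W) (A : Fin m → Module.End k W)
    (v : SS k m ⊗[k] W) : evT x (lop A0 A v) = (A0 + ∑ i, x i • A i) (evT x v) := by
  induction v with
  | zero => simp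
  | add a b ha hb => simp only [map_add, ha, hb]
  | tmul s w =>
    rw [lop_tmul, map_add, map_sum]
    simp [LinearMap.sum_apply, Finset.smul_sum, smul_smul, mul_comm]

theorem lop_rel (h2 : (2 : k) ≠ 0) {c : Fin m → k} (A0 : Module.End k W)
    (A : Fin m → Module.End k W) (h : IsOp (gS c) (lop A0 A)) :
    A0 * A0 = 0 ∧ (∀ i, A0 * A i + A i * A0 = 0) ∧ IsRep c A := by
  refine linear_rel h2 A0 A fun x => ?_
  ext w
  have := congrArg (evT x) (h (1 ⊗ₜ w))
  rw [evT_lop, evT_lop, TensorProduct.smul_tmul'] at this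
  simpa [gS] using this

theorem lop_mem [Module.Finite k W] (h2 : (2 : k) ≠ 0) {c : Fin m → k}
    (𝒢 : AddSubgroup (GGroup (Rg (gS c))))
    (H : ∀ (W : Type u) [AddCommGroup W] [Module k W] [Module.Finite k W]
      (A : Fin m → Module.End k W) (h : IsRep c A), cRep A h ∈ 𝒢)
    (A0 : Module.End k W) (A : Fin m → Module.End k W) (h : IsOp (gS c) (lop A0 A)) :
    cOp (lop A0 A) h ∈ 𝒢 := by
  obtain ⟨h0, h1, hA⟩ := lop_rel h2 A0 A h
  have h0' : ∀ w, A0 (A0 w) = 0 := fun w => LinearMap.congr_fun h0 w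
  have h1' : ∀ i w, A0 (A i w) = - A i (A0 w) := fun i w =>
    eq_neg_of_add_eq_zero_left (LinearMap.congr_fun (h1 i) w)
  have hst : ∀ i, ∀ w ∈ LinearMap.ker A0, A i w ∈ LinearMap.ker A0 := by
    intro i w hw
    rw [LinearMap.mem_ker] at hw ⊢
    rw [h1', hw, map_zero, neg_zero]
  let K := LinearMap.ker A0
  let A₁ : Fin m → Module.End k K := fun i => (A i).restrict (hst i)
  let A₃ : Fin m → Module.End k (W ⧸ K) := fun i => K.mapQ K (A i) (hst i)
  have hA₁ : IsRep c A₁ := by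
    constructor
    · intro i; ext w
      exact LinearMap.congr_fun (hA.sq i) w
    · intro i j hij; ext w
      exact LinearMap.congr_fun (hA.anti i j hij) w
  have hA₃ : IsRep c A₃ := by
    constructor
    · intro i; ext w
      exact congrArg K.mkQ (LinearMap.congr_fun (hA.sq i) w)
    · intro i j hij; ext w
      exact congrArg K.mkQ (LinearMap.congr_fun (hA.anti i j hij) w)
  have := cOp_exact (mop_isOp hA₁) h (mop_isOp hA₃) (K.subtype.baseChange (SS k m))
    (K.mkQ.baseChange (SS k m)) ?_ ?_ (bc_inj _ K.injective_subtype)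
    (bc_surj _ K.mkQ_surjective) (bc_exact _ _ K.mkQ_surjective (LinearMap.exact_subtype_mkQ K))
  · rw [this]
    exact 𝒢.add_mem (H K A₁ hA₁) (H _ A₃ hA₃)
  · intro v
    rw [mop_map (A₂ := A) K.subtype (fun i w => rfl)]
    have : A0.baseChange (SS k m) (K.subtype.baseChange (SS k m) v) = 0 := by
      induction v with
      | zero => simp
      | add a b ha hb => simp only [map_add, ha, hb, add_zero]
      | tmul s w =>
        have : A0 (w : W) = 0 := w.2
        simp [this]
    simp [lop, this]
  · intro v
    rw [← mop_map (A₁ := A) K.mkQ (fun i w => rfl)]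
    have : K.mkQ.baseChange (SS k m) (A0.baseChange (SS k m) v) = 0 := by
      induction v with
      | zero => simp
      | add a b ha hb => simp only [map_add, ha, hb, add_zero]
      | tmul s w =>
        have : K.mkQ (A0 w) = 0 := by
          rw [← LinearMap.mem_ker, Submodule.ker_mkQ]; exact h0' w
        rw [LinearMap.baseChange_tmul, LinearMap.baseChange_tmul, this, tmul_zero]
    simp [lop, this]

theorem HL (h2 : (2 : k) ≠ 0) {c : Fin m → k}
    (𝒢 : AddSubgroup (GGroup (Rg (gS c))))
    (H : ∀ (W : Type u) [AddCommGroup W] [Module k W] [Module.Finite k W]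
      (A : Fin m → Module.End k W) (h : IsRep c A), cRep A h ∈ 𝒢)
    (J : Type) [Fintype J] [DecidableEq J] (ζ : (J → SS k m) →ₗ[SS k m] (J → SS k m))
    (h : IsOp (gS c) ζ) (hd : ∀ i j, (ζ (Pi.single j 1) i).totalDegree ≤ 1) :
    cOp ζ h ∈ 𝒢 := by
  let A0 : Module.End k (J → k) := Matrix.toLin' (Matrix.of fun i j => coeff 0 (ζ (Pi.single j 1) i))
  let A : Fin m → Module.End k (J → k) := fun l =>
    Matrix.toLin' (Matrix.of fun i j => coeff (Finsupp.single l 1) (ζ (Pi.single j 1) i))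
  let e : SS k m ⊗[k] (J → k) ≃ₗ[SS k m] (J → SS k m) := TensorProduct.piScalarRight k (SS k m) (SS k m) J
  have he : e.toLinearMap ∘ₗ lop A0 A = ζ ∘ₗ e.toLinearMap := by
    apply TensorProduct.AlgebraTensorModule.curry_injective
    apply LinearMap.ext_ring
    apply LinearMap.pi_ext'
    intro j
    apply LinearMap.ext_ring
    have e1 : e ((1 : SS k m) ⊗ₜ[k] (Pi.single j (1 : k) : J → k)) = Pi.single j 1 := by
      ext1 i
      simp [e, Pi.single_apply, apply_ite]
    have : e (lop A0 A (1 ⊗ₜ Pi.single j 1)) = ζ (e (1 ⊗ₜ Pi.single j 1)) := by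
      rw [e1, lop_tmul, map_add, map_sum]
      ext1 i
      rw [deg_one _ (hd i j)]
      simp [e, A0, A, smul_eq_C_mul]
    simpa using this
  have he' : ∀ v, e (lop A0 A v) = ζ (e v) := fun v => LinearMap.congr_fun he v
  have hop : IsOp (gS c) (lop A0 A) := by
    intro v
    apply e.injective
    rw [he', he', h, map_smul]
  rw [← cOp_iso hop h e he']
  exact lop_mem h2 𝒢 H A0 A hop

theorem gS_degree (c : Fin m → k) : (gS c).totalDegree ≤ 2 := by
  have : (gS c).IsHomogeneous 2 := by
    refine IsHomogeneous.sum _ _ _ fun i _ => ?_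
    simpa using (isHomogeneous_C (Fin m) (c i)).mul ((isHomogeneous_X k i).pow 2)
  exact this.totalDegree_le

/-- main generation statement -/
theorem all_mem (h2 : (2 : k) ≠ 0) {c : Fin m → k}
    (𝒢 : AddSubgroup (GGroup (Rg (gS c))))
    (HR : cOp (fop (gS c) Unit) (fop_isOp (gS c) Unit) ∈ 𝒢)
    (H : ∀ (W : Type u) [AddCommGroup W] [Module k W] [Module.Finite k W]
      (A : Fin m → Module.End k W) (h : IsRep c A), cRep A h ∈ 𝒢) (x : GGroup (Rg (gS c))) :
    x ∈ 𝒢 := by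
  have HE := E_lemma (gS c) 𝒢 HR (fun J _ _ ζ h hd => HL h2 𝒢 H J ζ h hd)
  refine gg_mem_of_gof 𝒢 (fun M => ?_) x
  let _ : Module (SS k m) M.carrier := Module.compHom M.carrier (algebraMap (SS k m) (Rg (gS c)))
  have : IsScalarTower (SS k m) (Rg (gS c)) M.carrier := IsScalarTower.of_algebraMap_smul fun _ _ => rfl
  have : Module.Finite (SS k m) M.carrier := Module.Finite.trans (Rg (gS c)) M.carrier
  rw [gof_eq_cOp M]
  refine gen_mem (inc (gS c)) ?_ (gS c) (th_inc _) 𝒢 ?_ ?_ _ _ _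
  · simp only [gS, inc, map_sum, map_mul, map_pow, rename_X, rename_C]
    refine IsHomogeneous.sum _ _ _ fun i _ => ?_
    simpa using (isHomogeneous_C (Fin (m+1)) (c i)).mul ((isHomogeneous_X k _).pow 2)
  · intro r
    refine HE _ (Fin r ⊕ Fin r) rfl (Sum.elim (fun _ => 0) (fun _ => 1)) _ _ ?_
    intro i j hne
    rcases i with i | i <;> rcases j with j | j
    · simp at hne
    · by_cases hij : i = j
      · subst hij
        simpa using gS_degree c
      · simp [Pi.single_apply, hij] at hne
    · by_cases hij : i = j
      · subst hij
        simp
      · simp [Pi.single_apply, hij] at hne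
    · simp at hne
  · intro r w ζ h hd
    exact HE _ (Fin r) rfl w ζ h hd

end HL
end Swan

namespace Swan
open TensorProduct

section Cl
variable {k : Type u} [Field k] {m : ℕ} (c : Fin m → k)

abbrev Cq : Type u := CliffordAlgebra (QuadraticMap.weightedSumSquares k c)

noncomputable def ee (i : Fin m) : Cq c :=
  CliffordAlgebra.ι (QuadraticMap.weightedSumSquares k c) (Pi.single i 1)

theorem ee_sq (i : Fin m) : ee c i * ee c i = algebraMap k _ (c i) := by
  rw [ee, CliffordAlgebra.ι_sq_scalar, QuadraticMap.weightedSumSquares_apply]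
  congr 1
  rw [Finset.sum_eq_single i] <;> simp +contextual

theorem ee_anti (i j : Fin m) (h : i ≠ j) : ee c i * ee c j + ee c j * ee c i = 0 := by
  rw [ee, ee, CliffordAlgebra.ι_mul_ι_add_swap]
  have : QuadraticMap.polar (QuadraticMap.weightedSumSquares k c) (Pi.single i 1) (Pi.single j 1) = 0 := by
    rw [QuadraticMap.polar, QuadraticMap.weightedSumSquares_apply, QuadraticMap.weightedSumSquares_apply,
      QuadraticMap.weightedSumSquares_apply, ← Finset.sum_sub_distrib, ← Finset.sum_sub_distrib]
    refine Finset.sum_eq_zero fun l _ => ?_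
    by_cases hl : l = i
    · subst hl; simp [h]
    · simp [hl]
  rw [this, map_zero]

theorem ee_iota (v : Fin m → k) :
    CliffordAlgebra.ι (QuadraticMap.weightedSumSquares k c) v = ∑ i, v i • ee c i := by
  conv_lhs => rw [pi_eq_sum_univ' v]
  rw [map_sum]
  refine Finset.sum_congr rfl fun i _ => ?_
  rw [map_smul, ee]

/-- spanning -/
noncomputable def Usp : ℕ → Submodule k (Cq c)
  | 0 => k ∙ 1
  | j + 1 => if h : j < m then Usp j ⊔ (Usp j).map (LinearMap.mulLeft k (ee c ⟨j, h⟩)) else Usp j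

theorem Usp_rank (j : ℕ) : Module.Finite k (Usp c j) ∧ Module.finrank k (Usp c j) ≤ 2 ^ j := by
  induction j with
  | zero =>
    refine ⟨by rw [Usp]; infer_instance, ?_⟩
    rw [Usp]; exact (finrank_span_le_card _).trans (by simp)
  | succ j ih =>
    obtain ⟨h1, h2⟩ := ih
    by_cases h : j < m
    · have hU : Usp c (j+1) = Usp c j ⊔ (Usp c j).map (LinearMap.mulLeft k (ee c ⟨j, h⟩)) := by
        rw [Usp, dif_pos h]
      rw [hU]
      refine ⟨inferInstance, ?_⟩
      refine (Submodule.finrank_add_le_finrank_add_finrank _ _).trans ?_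
      have := Submodule.finrank_map_le (LinearMap.mulLeft k (ee c ⟨j, h⟩)) (Usp c j)
      rw [pow_succ]; omega
    · have hU : Usp c (j+1) = Usp c j := by rw [Usp, dif_neg h]
      rw [hU]
      exact ⟨h1, h2.trans (Nat.pow_le_pow_right (by norm_num) (by omega))⟩

theorem Usp_one (j : ℕ) : (1 : Cq c) ∈ Usp c j := by
  induction j with
  | zero => rw [Usp]; exact Submodule.mem_span_singleton_self _
  | succ j ih =>
    rw [Usp]
    split_ifs with h
    · exact Submodule.mem_sup_left ih
    · exact ih

theorem Usp_mul (j : ℕ) (i : Fin m) (hi : i.1 < j) (a : Cq c) (ha : a ∈ Usp c j) :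
    ee c i * a ∈ Usp c j := by
  induction j generalizing a with
  | zero => omega
  | succ j ih =>
    rw [Usp] at ha ⊢
    split_ifs at ha ⊢ with h
    · obtain ⟨b, hb, _, ⟨b', hb', rfl⟩, rfl⟩ := Submodule.mem_sup.1 ha
      rw [LinearMap.mulLeft_apply, mul_add]
      by_cases hij : i.1 = j
      · have : i = ⟨j, h⟩ := Fin.ext hij
        subst hij
        refine Submodule.add_mem _ (Submodule.mem_sup_right ⟨b, hb, rfl⟩) (Submodule.mem_sup_left ?_)
        rw [← mul_assoc, ee_sq, ← Algebra.smul_def]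
        exact Submodule.smul_mem _ _ hb'
      · have hlt : i.1 < j := by omega
        refine Submodule.add_mem _ (Submodule.mem_sup_left (ih hlt _ hb)) (Submodule.mem_sup_right ?_)
        refine ⟨- (ee c i * b'), Submodule.neg_mem _ (ih hlt _ hb'), ?_⟩
        have := ee_anti c i ⟨j, h⟩ (by rintro rfl; simp at hij)
        rw [LinearMap.mulLeft_apply, ← mul_assoc, eq_neg_of_add_eq_zero_left this]
        noncomm_ring
    · exact ih (by have := i.2; omega) _ ha

theorem Usp_top : Usp c m = ⊤ := by
  rw [eq_top_iff]
  intro a _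
  induction a using CliffordAlgebra.left_induction with
  | algebraMap r => rw [Algebra.algebraMap_eq_smul_one]; exact Submodule.smul_mem _ _ (Usp_one c m)
  | add x y hx hy => exact Submodule.add_mem _ (hx trivial) (hy trivial)
  | ι_mul x v hx =>
    rw [ee_iota, Finset.sum_mul]
    refine Submodule.sum_mem _ fun i _ => ?_
    rw [smul_mul_assoc]
    exact Submodule.smul_mem _ _ (Usp_mul c m i i.2 _ (hx trivial))

instance : Module.Finite k (Cq c) := by
  have := (Usp_rank c m).1
  rw [Usp_top] at this
  exact Module.finite_def.2 ((Module.finite_def.1 this).map (⊤ : Submodule k (Cq c)).subtype |> fun h => by simpa using h)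

theorem Cq_rank : Module.finrank k (Cq c) ≤ 2 ^ m := by
  have := (Usp_rank c m).2
  rwa [Usp_top, finrank_top] at this

variable {c}
theorem IsRep.sum_sq {W : Type u} [AddCommGroup W] [Module k W] {A : Fin m → Module.End k W}
    (h : IsRep c A) (v : Fin m → k) :
    (∑ i, v i • A i) * (∑ i, v i • A i) = algebraMap k _ (QuadraticMap.weightedSumSquares k c v) := by
  rw [anti_sum (fun i => v i • A i) (fun i => (c i * (v i * v i)) • 1)]
  · rw [← Finset.sum_smul, QuadraticMap.weightedSumSquares_apply, Algebra.algebraMap_eq_smul_one]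
    rfl
  · intro i
    rw [smul_mul_smul_comm, h.sq, smul_smul, mul_comm]
  · intro i j hij
    rw [smul_mul_smul_comm, smul_mul_smul_comm, mul_comm (v j), ← smul_add, h.anti i j hij, smul_zero]

/-- algebra hom of a rep -/
noncomputable def IsRep.hom {W : Type u} [AddCommGroup W] [Module k W] {A : Fin m → Module.End k W}
    (h : IsRep c A) : Cq c →ₐ[k] Module.End k W :=
  CliffordAlgebra.lift _ ⟨∑ i, (LinearMap.proj i : (Fin m → k) →ₗ[k] k).smulRight (A i), fun v => by
    have := h.sum_sq v
    simpa [LinearMap.sum_apply] using this⟩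

theorem IsRep.hom_ee {W : Type u} [AddCommGroup W] [Module k W] {A : Fin m → Module.End k W}
    (h : IsRep c A) (i : Fin m) : h.hom (ee c i) = A i := by
  rw [IsRep.hom, ee, CliffordAlgebra.lift_ι_apply, LinearMap.sum_apply, Finset.sum_eq_single i] <;>
    simp +contextual

variable (c)
theorem exists_T (hs : IsSimpleRing (Cq c)) :
    ∃ (T : Type u) (_ : AddCommGroup T) (_ : Module k T) (_ : Module.Finite k T)
      (A : Fin m → Module.End k T), Nontrivial T ∧ IsRep c A ∧
      ∀ (W : Type u) [AddCommGroup W] [Module k W] [Module.Finite k W]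
        (B : Fin m → Module.End k W), IsRep c B →
        ∃ (a : ℕ) (e : W ≃ₗ[k] (Fin a → T)), ∀ i w j, e (B i w) j = A i (e w j) := by
  have : IsArtinianRing (Cq c) := IsArtinianRing.of_finite k _
  obtain ⟨I, hI⟩ := IsAtomic.exists_atom (Submodule (Cq c) (Cq c))
  have hI' := isSimpleModule_iff_isAtom.2 hI
  refine ⟨I, inferInstance, inferInstance, inferInstance, fun i => Algebra.lsmul k k I (ee c i),
    IsSimpleModule.nontrivial (Cq c) I, ⟨?_, ?_⟩, ?_⟩
  · intro i
    rw [← map_mul, ee_sq, AlgHom.commutes, Algebra.algebraMap_eq_smul_one]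
  · intro i j hij
    rw [← map_mul, ← map_mul, ← map_add, ee_anti _ _ _ hij, map_zero]
  · intro W _ _ _ B hB
    let _ : Module (Cq c) W := Module.compHom W (hB.hom : Cq c →+* Module.End k W)
    have hsm : ∀ (a : Cq c) (w : W), a • w = hB.hom a w := fun _ _ => rfl
    have : IsScalarTower k (Cq c) W := ⟨fun r a w => by rw [hsm, hsm, map_smul]; rfl⟩
    have : Module.Finite (Cq c) W := Module.Finite.of_restrictScalars_finite k _ _
    have hiso : IsIsotypicOfType (Cq c) W I := by
      intro N hN
      have h1 := IsSimpleRing.isIsotypic (Cq c) (W × I)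
      let eN := Submodule.equivMapOfInjective (LinearMap.inl (Cq c) W I) LinearMap.inl_injective N
      let eI := Submodule.equivMapOfInjective (LinearMap.inr (Cq c) W I) LinearMap.inr_injective ⊤
      have hN' := IsSimpleModule.congr eN.symm
      have hI'' : IsSimpleModule (Cq c) (⊤ : Submodule (Cq c) I) := IsSimpleModule.congr Submodule.topEquiv
      have hI3 := IsSimpleModule.congr eI.symm
      obtain ⟨e⟩ := h1 ((⊤ : Submodule (Cq c) I).map (LinearMap.inr (Cq c) W I)) (N.map (LinearMap.inl (Cq c) W I))
      exact ⟨(eN.trans e).trans (eI.symm.trans Submodule.topEquiv)⟩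
    obtain ⟨a, ⟨e⟩⟩ := hiso.linearEquiv_fun
    refine ⟨a, e.restrictScalars k, fun i w j => ?_⟩
    have : B i w = ee c i • w := by rw [hsm, hB.hom_ee]
    rw [this, LinearEquiv.restrictScalars_apply, map_smul]
    rfl

end Cl
end Swan

namespace Swan
open TensorProduct

section dop
variable {S : Type u} [CommRing S] (g : S)

def dop (U : Type*) [AddCommGroup U] [Module S U] : (U × U) →ₗ[S] (U × U) where
  toFun v := (g • v.2, v.1)
  map_add' v w := by ext <;> simp
  map_smul' r v := by
    ext
    · simp [smul_comm g r]
    · simp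

theorem dop_isOp (U : Type*) [AddCommGroup U] [Module S U] : IsOp g (dop g U) := fun _ => rfl

variable {U U₁ U₂ U₃ : Type u} [AddCommGroup U] [Module S U] [Module.Finite S U]
  [AddCommGroup U₁] [Module S U₁] [Module.Finite S U₁]
  [AddCommGroup U₂] [Module S U₂] [Module.Finite S U₂]
  [AddCommGroup U₃] [Module S U₃] [Module.Finite S U₃]

variable {g} in
theorem dop_eq {ξ : U →ₗ[S] U} (h : IsOp g ξ) (h' : IsOp g (-ξ)) :
    cOp (dop g U) (dop_isOp g U) = cOp (-ξ) h' + cOp ξ h := by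
  refine cOp_exact _ _ _ ((-ξ).prod LinearMap.id) (LinearMap.id.coprod ξ) ?_ ?_ ?_ ?_ ?_
  · intro v
    ext
    · simp [dop, h v]
    · simp [dop]
  · intro v
    simp [dop, h v.2, add_comm]
  · intro v w hvw
    simpa using (congrArg Prod.snd hvw)
  · intro v
    exact ⟨(v, 0), by simp⟩
  · intro v
    constructor
    · intro hv
      refine ⟨v.2, ?_⟩
      simp at hv
      ext
      · simp [eq_neg_of_add_eq_zero_left hv]
      · simp
    · rintro ⟨w, rfl⟩
      simp

theorem dop_exact (a : U₁ →ₗ[S] U₂) (b : U₂ →ₗ[S] U₃) (ha : Function.Injective a)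
    (hb : Function.Surjective b) (hex : Function.Exact a b) :
    cOp (dop g U₂) (dop_isOp g U₂) = cOp (dop g U₁) (dop_isOp g U₁) + cOp (dop g U₃) (dop_isOp g U₃) := by
  refine cOp_exact _ _ _ (a.prodMap a) (b.prodMap b) ?_ ?_ ?_ ?_ ?_
  · intro v; simp [dop]
  · intro v; simp [dop]
  · exact ha.prodMap ha
  · exact hb.prodMap hb
  · intro v
    constructor
    · intro hv
      obtain ⟨x, hx⟩ := (hex v.1).1 (congrArg Prod.fst hv)
      obtain ⟨y, hy⟩ := (hex v.2).1 (congrArg Prod.snd hv)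
      exact ⟨(x, y), Prod.ext hx hy⟩
    · rintro ⟨w, rfl⟩
      exact Prod.ext ((hex _).2 ⟨_, rfl⟩) ((hex _).2 ⟨_, rfl⟩)

theorem dop_iso (e : U₁ ≃ₗ[S] U₂) :
    cOp (dop g U₁) (dop_isOp g U₁) = cOp (dop g U₂) (dop_isOp g U₂) := by
  refine cOp_iso _ _ (e.prodCongr e) ?_
  intro v; simp [dop]

theorem single_succ_exact (M : Type*) [AddCommGroup M] [Module S M] (a : ℕ) :
    Function.Exact (LinearMap.single S (fun _ : Fin (a+1) => M) 0) (LinearMap.funLeft S M (Fin.succ : Fin a → Fin (a+1))) := by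
  intro v
  constructor
  · intro hv
    refine ⟨v 0, ?_⟩
    ext i
    refine Fin.cases ?_ (fun j => ?_) i
    · simp
    · have := congrFun hv j
      simp [LinearMap.funLeft_apply] at this
      simp [this]
  · rintro ⟨w, rfl⟩
    ext i
    simp [LinearMap.funLeft_apply]

theorem single_inj (M : Type*) [AddCommGroup M] [Module S M] (a : ℕ) :
    Function.Injective (LinearMap.single S (fun _ : Fin (a+1) => M) 0) := by
  exact Pi.single_injective (M := fun _ : Fin (a+1) => M) 0

theorem funLeft_succ_surj (M : Type*) [AddCommGroup M] [Module S M] (a : ℕ) :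
    Function.Surjective (LinearMap.funLeft S M (Fin.succ : Fin a → Fin (a+1))) :=
  LinearMap.funLeft_surjective_of_injective _ _ _ (Fin.succ_injective _)

theorem dop_fin (d : ℕ) : cOp (dop g (Fin d → S)) (dop_isOp g (Fin d → S)) =
    d • cOp (fop g Unit) (fop_isOp g Unit) := by
  have h1 : cOp (dop g S) (dop_isOp g S) = cOp (fop g Unit) (fop_isOp g Unit) := by
    let e : (S × S) ≃ₗ[S] (Unit ⊕ Unit → S) :=
      (LinearEquiv.prodCongr (LinearEquiv.funUnique Unit S S).symm (LinearEquiv.funUnique Unit S S).symm).trans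
        (LinearEquiv.sumArrowLequivProdArrow Unit Unit S S).symm
    refine cOp_iso _ _ e ?_
    intro v
    ext i
    rcases i with i | i <;> simp [e, dop]
  induction d with
  | zero => rw [zero_smul]; exact cOp_zero _
  | succ d ih =>
    rw [dop_exact g _ _ (single_inj S d) (funLeft_succ_surj S d) (single_succ_exact S d), h1, ih, succ_nsmul']

end dop

section rep
variable {k : Type u} [Field k] {m : ℕ} {c : Fin m → k}

theorem IsRep.pi {T : Type u} [AddCommGroup T] [Module k T] {A : Fin m → Module.End k T}
    (h : IsRep c A) (a : ℕ) : IsRep c (fun i => ((A i).compLeft (Fin a) : Module.End k (Fin a → T))) := by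
  constructor
  · intro i
    refine LinearMap.ext fun w => funext fun j => ?_
    exact LinearMap.congr_fun (h.sq i) (w j)
  · intro i l hil
    refine LinearMap.ext fun w => funext fun j => ?_
    exact LinearMap.congr_fun (h.anti i l hil) (w j)

theorem IsRep.neg {T : Type u} [AddCommGroup T] [Module k T] {A : Fin m → Module.End k T}
    (h : IsRep c A) : IsRep c (fun i => - A i) := by
  constructor
  · intro i; simpa using h.sq i
  · intro i j hij; simpa using h.anti i j hij

theorem cRep_pi {T : Type u} [AddCommGroup T] [Module k T] [Module.Finite k T] {A : Fin m → Module.End k T}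
    (h : IsRep c A) (a : ℕ) : cRep _ (h.pi a) = a • cRep A h := by
  induction a with
  | zero =>
    rw [zero_smul]
    have : Subsingleton (SS k m ⊗[k] (Fin 0 → T)) := by
      refine ⟨fun x y => ?_⟩
      have : ∀ x : SS k m ⊗[k] (Fin 0 → T), x = 0 := by
        intro x
        induction x with
        | zero => rfl
        | add x y hx hy => rw [hx, hy, add_zero]
        | tmul s w => rw [Subsingleton.elim w 0, tmul_zero]
      rw [this x, this y]
    exact cOp_zero _
  | succ a ih =>
    rw [cRep_exact h (h.pi (a+1)) (h.pi a) _ _ ?_ ?_ (single_inj T a) (funLeft_succ_surj T a) (single_succ_exact T a),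
      ih, succ_nsmul']
    · intro i w
      ext j
      refine Fin.cases ?_ (fun j => ?_) j <;> simp
    · intro i w
      rfl

variable {T : Type u} [AddCommGroup T] [Module k T] [Module.Finite k T] {A : Fin m → Module.End k T}

/-- universal property of the simple rep -/
def IsUniv (c : Fin m → k) (A : Fin m → Module.End k T) : Prop :=
  ∀ (W : Type u) [AddCommGroup W] [Module k W] [Module.Finite k W]
        (B : Fin m → Module.End k W), IsRep c B →
        ∃ (a : ℕ) (e : W ≃ₗ[k] (Fin a → T)), ∀ i w j, e (B i w) j = A i (e w j)

theorem IsUniv.cls (hu : IsUniv c A) (h : IsRep c A) (W : Type u) [AddCommGroup W] [Module k W]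
    [Module.Finite k W] (B : Fin m → Module.End k W) (hB : IsRep c B) :
    ∃ a : ℕ, cRep B hB = a • cRep A h := by
  obtain ⟨a, e, he⟩ := hu W B hB
  refine ⟨a, ?_⟩
  rw [← cRep_pi]
  exact cRep_iso _ _ e (fun i w => funext fun j => he i w j)

theorem IsUniv.dvd (hu : IsUniv c A) (W : Type u) [AddCommGroup W] [Module k W]
    [Module.Finite k W] (B : Fin m → Module.End k W) (hB : IsRep c B) :
    Module.finrank k T ∣ Module.finrank k W := by
  obtain ⟨a, e, he⟩ := hu W B hB
  rw [e.finrank_eq, Module.finrank_pi_fintype]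
  simp

theorem IsUniv.twist [Nontrivial T] (hu : IsUniv c A) (h : IsRep c A) :
    ∃ φ : T ≃ₗ[k] T, ∀ i w, φ (- A i w) = A i (φ w) := by
  obtain ⟨a, e, he⟩ := hu T _ h.neg
  have h1 := e.finrank_eq
  rw [Module.finrank_pi_fintype] at h1
  have h2 : 0 < Module.finrank k T := Module.finrank_pos
  have ha : a = 1 := by
    simp only [Finset.sum_const, Finset.card_univ, Fintype.card_fin, smul_eq_mul] at h1
    exact (Nat.eq_of_mul_eq_mul_right h2 (by rw [one_mul]; exact h1)).symm
  subst ha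
  refine ⟨e.trans (LinearEquiv.funUnique (Fin 1) k T), fun i w => ?_⟩
  exact he i w 0

theorem IsUniv.even [Nontrivial T] (hu : IsUniv c A) (h : IsRep c A) (h2 : (2 : k) ≠ 0)
    (i : Fin m) (hi : c i ≠ 0) : Even (Module.finrank k T) := by
  obtain ⟨φ, hφ⟩ := hu.twist h
  have h1 : LinearMap.det (A i) * LinearMap.det (A i) ≠ 0 := by
    rw [← map_mul, h.sq, LinearMap.det_smul]
    simp [hi]
  have h3 : (φ : T →ₗ[k] T) ∘ₗ (- A i) ∘ₗ (φ.symm : T →ₗ[k] T) = A i := by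
    ext w
    have := hφ i (φ.symm w)
    simpa using this
  have h4 := congrArg LinearMap.det h3
  rw [LinearMap.det_conj] at h4
  have h5 : (- A i) = (-1 : k) • A i := by simp
  rw [h5, LinearMap.det_smul] at h4
  by_contra hodd
  rw [Nat.not_even_iff_odd] at hodd
  rw [hodd.neg_one_pow] at h4
  have : (2 : k) * LinearMap.det (A i) = 0 := by linear_combination -h4
  rcases mul_eq_zero.1 this with h | h
  · exact h2 h
  · simp [h] at h1

theorem IsUniv.two [Nontrivial T] (hu : IsUniv c A) (h : IsRep c A) :
    (2 : ℕ) • cRep A h = Module.finrank k T • cOp (fop (gS c) Unit) (fop_isOp _ Unit) := by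
  obtain ⟨φ, hφ⟩ := hu.twist h
  have hm : mop (fun i => - A i) = - mop A := by
    refine TensorProduct.AlgebraTensorModule.ext fun s w => ?_
    rw [LinearMap.neg_apply, mop_tmul, mop_tmul]
    simp [TensorProduct.tmul_neg, Finset.sum_neg_distrib]
  have hneg : IsOp (gS c) (- mop A) := hm ▸ mop_isOp h.neg
  have h1 : cOp (-mop A) hneg = cRep A h := by
    have : cOp (-mop A) hneg = cRep _ h.neg := by
      unfold cRep
      congr 1
      exact hm.symm
    rw [this]
    exact cRep_iso _ _ φ hφ
  rw [two_smul]
  conv_lhs => rw [← h1]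
  have h2 := dop_eq (mop_isOp h) hneg
  have e : SS k m ⊗[k] T ≃ₗ[SS k m] (Fin (Module.finrank k T) → SS k m) :=
    ((Module.finBasis k T).baseChange (SS k m)).equivFun
  rw [h1] at h2 ⊢
  rw [← dop_fin, ← dop_iso _ e, h2]
  rfl

end rep
end Swan

namespace Swan
open TensorProduct

section hex
variable {k : Type u} [Field k]
variable {E E₁ E₂ E₃ : Type u} [AddCommGroup E] [Module k E] [AddCommGroup E₁] [Module k E₁]
  [AddCommGroup E₂] [Module k E₂] [AddCommGroup E₃] [Module k E₃]

abbrev HH (D : E →ₗ[k] E) : Type u :=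
  LinearMap.ker D ⧸ (LinearMap.range D).comap (LinearMap.ker D).subtype

def hcl (D : E →ₗ[k] E) (x : E) (hx : D x = 0) : HH D := Submodule.Quotient.mk ⟨x, hx⟩

theorem hcl_surj (D : E →ₗ[k] E) (z : HH D) : ∃ x hx, hcl D x hx = z := by
  obtain ⟨⟨x, hx⟩, rfl⟩ := Submodule.Quotient.mk_surjective _ z
  exact ⟨x, hx, rfl⟩

theorem hcl_zero (D : E →ₗ[k] E) (x : E) (hx : D x = 0) : hcl D x hx = 0 ↔ ∃ y, D y = x := by
  unfold hcl
  rw [Submodule.Quotient.mk_eq_zero]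
  rfl

theorem hcl_sub (D : E →ₗ[k] E) (x y : E) (hx : D x = 0) (hy : D y = 0) :
    hcl D x hx - hcl D y hy = hcl D (x - y) (by rw [map_sub, hx, hy, sub_zero]) := rfl

theorem hcl_eq (D : E →ₗ[k] E) (x y : E) (hx : D x = 0) (hy : D y = 0) :
    hcl D x hx = hcl D y hy ↔ ∃ z, D z = x - y := by
  rw [← sub_eq_zero, hcl_sub, hcl_zero]

/-- compatible maps -/
structure Comp (D₁ : E₁ →ₗ[k] E₁) (D₂ : E₂ →ₗ[k] E₂) (f : E₁ →ₗ[k] E₂) : Prop where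
  hk : ∀ x, D₁ x = 0 → D₂ (f x) = 0
  hr : ∀ x, ∃ y, D₂ y = f (D₁ x)

theorem Comp.of_comm {D₁ : E₁ →ₗ[k] E₁} {D₂ : E₂ →ₗ[k] E₂} {f : E₁ →ₗ[k] E₂}
    (h : ∀ x, f (D₁ x) = D₂ (f x)) : Comp D₁ D₂ f :=
  ⟨fun x hx => by rw [← h, hx, map_zero], fun x => ⟨f x, (h x).symm⟩⟩

theorem Comp.of_anti {D₁ : E₁ →ₗ[k] E₁} {D₂ : E₂ →ₗ[k] E₂} {f : E₁ →ₗ[k] E₂}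
    (h : ∀ x, f (D₁ x) = - D₂ (f x)) : Comp D₁ D₂ f :=
  ⟨fun x hx => by rw [← neg_eq_zero, ← h, hx, map_zero], fun x => ⟨- f x, by rw [h, map_neg]⟩⟩

def hmap {D₁ : E₁ →ₗ[k] E₁} {D₂ : E₂ →ₗ[k] E₂} {f : E₁ →ₗ[k] E₂} (h : Comp D₁ D₂ f) :
    HH D₁ →ₗ[k] HH D₂ :=
  Submodule.mapQ _ _ (f.restrict (p := LinearMap.ker D₁) (q := LinearMap.ker D₂) h.hk) (by
    rintro ⟨x, hx⟩ ⟨y, hy⟩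
    obtain ⟨z, hz⟩ := h.hr y
    exact ⟨z, by rw [hz, hy]; rfl⟩)

theorem hmap_hcl {D₁ : E₁ →ₗ[k] E₁} {D₂ : E₂ →ₗ[k] E₂} {f : E₁ →ₗ[k] E₂} (h : Comp D₁ D₂ f)
    (x : E₁) (hx : D₁ x = 0) : hmap h (hcl D₁ x hx) = hcl D₂ (f x) (h.hk x hx) := rfl

theorem hex_lemma (D₁ : E₁ →ₗ[k] E₁) (D₂ : E₂ →ₗ[k] E₂) (D₃ : E₃ →ₗ[k] E₃)
    (hD₂ : ∀ x, D₂ (D₂ x) = 0)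
    (i : E₁ →ₗ[k] E₂) (p : E₂ →ₗ[k] E₃) (hi : ∀ x, i (D₁ x) = D₂ (i x))
    (hp : ∀ x, p (D₂ x) = D₃ (p x)) (hinj : Function.Injective i) (hsurj : Function.Surjective p)
    (hex : Function.Exact i p) [Module.Finite k (HH D₁)] [Module.Finite k (HH D₂)]
    [Module.Finite k (HH D₃)] :
    Module.finrank k (HH D₁) + Module.finrank k (HH D₃) =
      Module.finrank k (HH D₂) + 2 * Module.finrank k (LinearMap.ker (hmap (Comp.of_comm hi))) := by
  set α := hmap (Comp.of_comm hi) with hα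
  set β := hmap (Comp.of_comm hp) with hβ
  have hpi : ∀ x, p (i x) = 0 := fun x => (hex _).2 ⟨x, rfl⟩
  have hmid : LinearMap.ker β = LinearMap.range α := by
    ext z
    obtain ⟨x, hx, rfl⟩ := hcl_surj D₂ z
    rw [LinearMap.mem_ker, hβ, hmap_hcl, hcl_zero, LinearMap.mem_range]
    constructor
    · rintro ⟨y, hy⟩
      obtain ⟨y', rfl⟩ := hsurj y
      rw [← hp] at hy
      obtain ⟨a, ha⟩ := (hex (x - D₂ y')).1 (by rw [map_sub, hy, sub_self])
      have ha0 : D₁ a = 0 := by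
        apply hinj
        rw [hi, ha, map_sub, hx, hD₂, sub_zero, map_zero]
      refine ⟨hcl D₁ a ha0, ?_⟩
      rw [hα, hmap_hcl, hcl_eq]
      exact ⟨-y', by rw [ha, map_neg]; abel⟩
    · rintro ⟨w, hw⟩
      obtain ⟨a, ha0, rfl⟩ := hcl_surj D₁ w
      rw [hα, hmap_hcl, hcl_eq] at hw
      obtain ⟨y, hy⟩ := hw
      refine ⟨- p y, ?_⟩
      rw [map_neg, ← hp, hy, map_sub, hpi]; abel
  -- the connecting piece
  let U : Submodule k E₂ := (LinearMap.range i).comap D₂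
  let ι := LinearEquiv.ofInjective i hinj
  let v : U →ₗ[k] E₁ := ι.symm.toLinearMap ∘ₗ (D₂.restrict (p := U) (q := LinearMap.range i) (fun _ h => h))
  have hv : ∀ b : U, i (v b) = D₂ b := by
    intro b
    have : ((ι (v b) : LinearMap.range i) : E₂) = D₂ b := by simp [v]
    exact this
  have hv0 : ∀ b, D₁ (v b) = 0 := by
    intro b
    apply hinj
    rw [hi, hv, hD₂, map_zero]
  have hu0 : ∀ b : U, D₃ (p b) = 0 := by
    intro b
    rw [← hp, ← hv, hpi]
  let u₂ : U →ₗ[k] HH D₁ := (Submodule.mkQ _) ∘ₗ (v.codRestrict (LinearMap.ker D₁) hv0)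
  let u₁' : U →ₗ[k] HH D₃ := (Submodule.mkQ _) ∘ₗ ((p ∘ₗ U.subtype).codRestrict (LinearMap.ker D₃) hu0)
  let u₁ : U →ₗ[k] (HH D₃ ⧸ LinearMap.range β) := (LinearMap.range β).mkQ ∘ₗ u₁'
  have hu₂ : ∀ b, u₂ b = hcl D₁ (v b) (hv0 b) := fun _ => rfl
  have hu₁' : ∀ b, u₁' b = hcl D₃ (p b) (hu0 b) := fun _ => rfl
  have hu₁ : ∀ b, u₁ b = 0 ↔ ∃ z : HH D₂, β z = hcl D₃ (p b) (hu0 b) := by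
    intro b
    change (LinearMap.range β).mkQ (u₁' b) = 0 ↔ _
    rw [← LinearMap.mem_ker, Submodule.ker_mkQ, hu₁']
    rfl
  have hker : LinearMap.ker u₁ = LinearMap.ker u₂ := by
    ext b
    rw [LinearMap.mem_ker, LinearMap.mem_ker, hu₁, hu₂, hcl_zero]
    constructor
    · rintro ⟨z, hz⟩
      obtain ⟨x, hx, rfl⟩ := hcl_surj D₂ z
      rw [hβ, hmap_hcl, hcl_eq] at hz
      obtain ⟨y, hy⟩ := hz
      obtain ⟨y', rfl⟩ := hsurj y
      rw [← hp, ← map_sub] at hy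
      obtain ⟨a, ha⟩ := (hex (b - x + D₂ y')).1 (by rw [map_add, hy, ← map_add]; simp)
      refine ⟨a, hinj ?_⟩
      rw [hi, ha, hv, map_add, hD₂, map_sub, hx, sub_zero, add_zero]
    · rintro ⟨y, hy⟩
      have h0 : D₂ (b - i y) = 0 := by rw [map_sub, ← hv, ← hi, hy, sub_self]
      refine ⟨hcl D₂ (b - i y) h0, ?_⟩
      rw [hβ, hmap_hcl, hcl_eq]
      exact ⟨0, by rw [map_zero, map_sub, hpi]; abel⟩
  have hr1 : LinearMap.range u₁ = ⊤ := by
    rw [LinearMap.range_eq_top]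
    refine (Submodule.mkQ_surjective _).comp ?_
    intro z
    obtain ⟨x, hx, rfl⟩ := hcl_surj D₃ z
    obtain ⟨b, rfl⟩ := hsurj x
    rw [← hp] at hx
    exact ⟨⟨b, (hex _).1 hx⟩, rfl⟩
  have hr2 : LinearMap.range u₂ = LinearMap.ker α := by
    ext z
    obtain ⟨x, hx, rfl⟩ := hcl_surj D₁ z
    rw [LinearMap.mem_ker, hα, hmap_hcl, hcl_zero, LinearMap.mem_range]
    constructor
    · rintro ⟨b, hb⟩
      rw [hu₂, hcl_eq] at hb
      obtain ⟨y, hy⟩ := hb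
      refine ⟨b - i y, ?_⟩
      rw [map_sub, ← hi, ← hv, hy, map_sub]; abel
    · rintro ⟨y, hy⟩
      have hyU : y ∈ U := ⟨x, hy.symm⟩
      refine ⟨⟨y, hyU⟩, ?_⟩
      rw [hu₂, hcl_eq]
      refine ⟨0, ?_⟩
      have : v ⟨y, hyU⟩ = x := hinj (by rw [hv, ← hy])
      rw [map_zero, this, sub_self]
  have e1 := u₁.quotKerEquivRange.finrank_eq
  have e2 := u₂.quotKerEquivRange.finrank_eq
  rw [hr1, finrank_top, hker] at e1
  rw [hr2] at e2
  have f1 := α.finrank_range_add_finrank_ker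
  have f2 := β.finrank_range_add_finrank_ker
  have f3 := (LinearMap.range β).finrank_quotient_add_finrank
  rw [hmid] at f2
  omega

/-- reps on homology -/
theorem hmap_isRep {m : ℕ} {c : Fin m → k} {D : E →ₗ[k] E} {P : Fin m → Module.End k E}
    (hP : IsRep c P) (h : ∀ i, Comp D D (P i)) : IsRep c (fun i => (hmap (h i) : Module.End k (HH D))) := by
  constructor
  · intro i
    refine LinearMap.ext fun z => ?_
    obtain ⟨x, hx, rfl⟩ := hcl_surj D z
    have h1 := LinearMap.congr_fun (hP.sq i) x
    change hcl D (P i (P i x)) _ = hcl D (c i • x) (by rw [map_smul, hx, smul_zero])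
    refine (hcl_eq D _ _ ((h i).hk _ ((h i).hk _ hx)) (by rw [map_smul, hx, smul_zero])).2 ?_
    exact ⟨0, by rw [map_zero, eq_comm, sub_eq_zero]; exact h1⟩
  · intro i j hij
    refine LinearMap.ext fun z => ?_
    obtain ⟨x, hx, rfl⟩ := hcl_surj D z
    have h1 := LinearMap.congr_fun (hP.anti i j hij) x
    change hcl D (P i (P j x) + P j (P i x)) (by
      rw [map_add, (h i).hk _ ((h j).hk _ hx), (h j).hk _ ((h i).hk _ hx), add_zero]) = 0
    rw [hcl_zero]
    exact ⟨0, by rw [map_zero]; exact h1.symm⟩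

theorem IsRep.restr {m : ℕ} {c : Fin m → k} {P : Fin m → Module.End k E}
    (hP : IsRep c P) (K : Submodule k E) (h : ∀ i, ∀ x ∈ K, P i x ∈ K) :
    IsRep c (fun i => ((P i).restrict (h i) : Module.End k K)) := by
  constructor
  · intro i; ext w
    exact LinearMap.congr_fun (hP.sq i) w
  · intro i j hij; ext w
    exact LinearMap.congr_fun (hP.anti i j hij) w

end hex
end Swan

namespace Swan
open TensorProduct

section cf
variable {k : Type u} [Field k] {m : ℕ} {c : Fin m → k}
variable {N : Type u} [AddCommGroup N] [Module k N]

structure Cf (c : Fin m → k) (L P : Fin m → Module.End k N) (σ : Module.End k N) : Prop where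
  hL : IsRep c L
  hP : IsRep c P
  hs : σ * σ = 1
  hsL : ∀ i, σ * L i = - (L i * σ)
  hsP : ∀ i, σ * P i = - (P i * σ)
  hLP : ∀ i j, L i * P j = P j * L i

section
variable {V V₁ V₂ V₃ : Type u}
  [AddCommGroup V] [Module (SS k m) V] [Module k V] [IsScalarTower k (SS k m) V]
  [AddCommGroup V₁] [Module (SS k m) V₁] [Module k V₁] [IsScalarTower k (SS k m) V₁]
  [AddCommGroup V₂] [Module (SS k m) V₂] [Module k V₂] [IsScalarTower k (SS k m) V₂]
  [AddCommGroup V₃] [Module (SS k m) V₃] [Module k V₃] [IsScalarTower k (SS k m) V₃]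

noncomputable def tm (f : V₁ →ₗ[SS k m] V₂) (a : N →ₗ[k] N) : (V₁ ⊗[k] N) →ₗ[SS k m] (V₂ ⊗[k] N) :=
  TensorProduct.AlgebraTensorModule.map f a

@[simp] theorem tm_tmul (f : V₁ →ₗ[SS k m] V₂) (a : N →ₗ[k] N) (v : V₁) (n : N) :
    tm f a (v ⊗ₜ n) = f v ⊗ₜ a n := rfl

theorem tm_mul (f f' : Module.End (SS k m) V) (a a' : Module.End k N) :
    (tm f a : Module.End (SS k m) (V ⊗[k] N)) * tm f' a' = tm (f * f') (a * a') := by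
  refine TensorProduct.AlgebraTensorModule.ext fun v n => rfl

theorem tm_add (f : V₁ →ₗ[SS k m] V₂) (a a' : N →ₗ[k] N) : tm f (a + a') = tm f a + tm f a' := by
  refine TensorProduct.AlgebraTensorModule.ext fun v n => ?_
  simp [TensorProduct.tmul_add]

theorem tm_neg (f : V₁ →ₗ[SS k m] V₂) (a : N →ₗ[k] N) : tm f (-a) = - tm f a := by
  refine TensorProduct.AlgebraTensorModule.ext fun v n => ?_
  simp [TensorProduct.tmul_neg]

theorem tm_zero (f : V₁ →ₗ[SS k m] V₂) : tm f (0 : N →ₗ[k] N) = 0 := by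
  refine TensorProduct.AlgebraTensorModule.ext fun v n => ?_
  simp

theorem tm_smul (f : V₁ →ₗ[SS k m] V₂) (r : k) (a : N →ₗ[k] N) :
    tm f (r • a) = (C r : SS k m) • tm f a := by
  refine TensorProduct.AlgebraTensorModule.ext fun v n => ?_
  rw [LinearMap.smul_apply, tm_tmul, tm_tmul, LinearMap.smul_apply, TensorProduct.tmul_smul,
    ← algebraMap_smul (SS k m) r]
  rfl

theorem tm_one : (tm (1 : Module.End (SS k m) V) (1 : Module.End k N)) = 1 :=
  TensorProduct.AlgebraTensorModule.ext fun v n => rfl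

variable (L P : Fin m → Module.End k N) (σ : Module.End k N)

noncomputable def dd (η : V →ₗ[SS k m] V) : Module.End (SS k m) (V ⊗[k] N) :=
  ∑ i, (X i : SS k m) • (tm 1 (σ * L i) : Module.End (SS k m) (V ⊗[k] N)) + tm η (-σ)

variable {L P σ}

theorem Cf.ssL (h : Cf c L P σ) (i j) : σ * L i * (σ * L j) = - (L i * L j) := by
  rw [h.hsL, neg_mul, mul_assoc, ← mul_assoc σ, h.hs, one_mul]

theorem Cf.sLs (h : Cf c L P σ) (i) : σ * L i * σ = - L i := by
  rw [h.hsL, neg_mul, mul_assoc, h.hs, mul_one]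

theorem dd_sq (h : Cf c L P σ) {η : V →ₗ[SS k m] V} (hη : IsOp (gS c) η) :
    dd L σ η * dd L σ η = 0 := by
  have h1 := anti_sum (ι := Option (Fin m))
    (fun o => o.elim (tm η (-σ)) (fun i => (X i : SS k m) • (tm 1 (σ * L i) : Module.End (SS k m) (V ⊗[k] N))))
    (fun o => o.elim (gS c • 1) (fun i => -((C (c i) * X i ^ 2 : SS k m) • 1))) ?_ ?_
  · rw [Fintype.sum_option, Fintype.sum_option] at h1
    simp only [Option.elim] at h1
    rw [dd, add_comm, h1, Finset.sum_neg_distrib, ← Finset.sum_smul, gS, add_neg_cancel]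
  · rintro (_ | i)
    · simp only [Option.elim]
      rw [tm_mul, neg_mul_neg, h.hs]
      refine TensorProduct.AlgebraTensorModule.ext fun v n => ?_
      simp [hη v, TensorProduct.smul_tmul']
    · simp only [Option.elim]
      rw [smul_mul_smul_comm, tm_mul, h.ssL, h.hL.sq, tm_neg, tm_smul, one_mul, tm_one, smul_neg, smul_smul]
      congr 2; ring
  · have key : ∀ i, (tm η (-σ) : Module.End (SS k m) (V ⊗[k] N)) * ((X i : SS k m) • tm 1 (σ * L i)) +
        ((X i : SS k m) • (tm 1 (σ * L i) : Module.End (SS k m) (V ⊗[k] N))) * (tm η (-σ)) = 0 := by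
      intro i
      rw [mul_smul_comm, smul_mul_assoc, tm_mul, tm_mul, mul_neg, h.sLs, neg_mul, ← mul_assoc, h.hs,
        one_mul, one_mul, mul_one, neg_neg, ← smul_add, ← tm_add, neg_add_cancel, tm_zero, smul_zero]
    rintro (_ | i) (_ | j) hij
    · exact absurd rfl hij
    · exact key j
    · rw [add_comm]; exact key i
    · have hij' : i ≠ j := fun h => hij (by rw [h])
      simp only [Option.elim]
      rw [smul_mul_smul_comm, smul_mul_smul_comm, tm_mul, tm_mul, h.ssL, h.ssL, mul_comm (X j),
        ← smul_add, ← tm_add, ← neg_add, h.hL.anti i j hij', neg_zero, tm_zero, smul_zero]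

theorem dd_P (h : Cf c L P σ) (η : V →ₗ[SS k m] V) (j : Fin m) :
    tm 1 (P j) * dd L σ η = - (dd L σ η * tm 1 (P j)) := by
  have h1 : ∀ i, P j * (σ * L i) = - ((σ * L i) * P j) := by
    intro i
    rw [mul_assoc, h.hLP, ← mul_assoc, ← mul_assoc, h.hsP, neg_mul, neg_neg]
  have h2 : P j * σ = - (σ * P j) := by rw [h.hsP, neg_neg]
  rw [dd, mul_add, add_mul, Finset.mul_sum, Finset.sum_mul, neg_add, ← Finset.sum_neg_distrib]
  congr 1
  · refine Finset.sum_congr rfl fun i _ => ?_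
    rw [mul_smul_comm, smul_mul_assoc, tm_mul, tm_mul, h1, tm_neg, smul_neg]
  · rw [tm_mul, tm_mul, mul_neg, h2, neg_mul, ← tm_neg, one_mul, mul_one]

theorem dd_homotopy (h : Cf c L P σ) (η : V →ₗ[SS k m] V) (j : Fin m) :
    dd L σ η * tm 1 (L j * σ) + tm 1 (L j * σ) * dd L σ η = (C (2 * c j) * X j : SS k m) • 1 := by
  have h1 : ∀ i, σ * L i * (L j * σ) + L j * σ * (σ * L i) = L i * L j + L j * L i := by
    intro i
    have e1 : L j * σ * (σ * L i) = L j * L i := by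
      rw [mul_assoc, ← mul_assoc σ, h.hs, one_mul]
    have e2 : σ * L i * (L j * σ) = L i * L j := by
      rw [h.hsL, neg_mul, mul_assoc, ← mul_assoc σ, h.hsL, neg_mul, mul_assoc, h.hs, mul_one, mul_neg, neg_neg]
    rw [e1, e2]
  have h2 : σ * (L j * σ) + L j * σ * σ = 0 := by
    rw [← mul_assoc, h.hsL, neg_mul, neg_add_cancel]
  rw [dd, add_mul, mul_add, Finset.mul_sum, Finset.sum_mul]
  rw [add_add_add_comm, ← Finset.sum_add_distrib]
  have e2 : (tm η (-σ) : Module.End (SS k m) (V ⊗[k] N)) * tm 1 (L j * σ) + tm 1 (L j * σ) * tm η (-σ) = 0 := by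
    rw [tm_mul, tm_mul, one_mul, mul_one, ← tm_add, neg_mul, mul_neg, ← neg_add, h2, neg_zero, tm_zero]
  rw [e2, add_zero, Finset.sum_eq_single j]
  · rw [mul_smul_comm, smul_mul_assoc, tm_mul, tm_mul, ← smul_add, ← tm_add, h1, h.hL.sq, ← add_smul,
      one_mul, tm_smul, tm_one, smul_smul]
    congr 1
    rw [two_mul, mul_comm]
  · intro i _ hij
    rw [mul_smul_comm, smul_mul_assoc, tm_mul, tm_mul, ← smul_add, ← tm_add, h1, h.hL.anti i j hij,
      tm_zero, smul_zero]
  · simp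

/-- k-linear version -/
noncomputable def dk (L : Fin m → Module.End k N) (σ : Module.End k N) (η : V →ₗ[SS k m] V) :
    (V ⊗[k] N) →ₗ[k] (V ⊗[k] N) := (dd L σ η).restrictScalars k

theorem dk_sq (h : Cf c L P σ) {η : V →ₗ[SS k m] V} (hη : IsOp (gS c) η) (x) :
    dk L σ η (dk L σ η x) = 0 := LinearMap.congr_fun (dd_sq h hη) x

theorem dk_smul (η : V →ₗ[SS k m] V) (s : SS k m) (x : V ⊗[k] N) :
    dk L σ η (s • x) = s • dk L σ η x := map_smul (dd L σ η) s x

theorem X_exact (h : Cf c L P σ) (h2 : (2 : k) ≠ 0) (hcn : ∀ i, c i ≠ 0) {η : V →ₗ[SS k m] V}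
    (j : Fin m) (x : V ⊗[k] N) (hx : dk L σ η x = 0) : ∃ y, dk L σ η y = (X j : SS k m) • x := by
  have h1 := LinearMap.congr_fun (dd_homotopy h η j) x
  have hx' : dd L σ η x = 0 := hx
  rw [LinearMap.add_apply, Module.End.mul_apply, Module.End.mul_apply, hx', map_zero, add_zero] at h1
  refine ⟨(C ((2 * c j)⁻¹) : SS k m) • (tm 1 (L j * σ) : Module.End (SS k m) (V ⊗[k] N)) x, ?_⟩
  rw [dk_smul]
  change (C ((2 * c j)⁻¹) : SS k m) • dd L σ η ((tm 1 (L j * σ) : Module.End (SS k m) (V ⊗[k] N)) x) = _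
  rw [h1, LinearMap.smul_apply, smul_smul, ← mul_assoc, ← C_mul, inv_mul_cancel₀ (mul_ne_zero h2 (hcn j)),
    C_1, one_mul]
  rfl

theorem tm_dd (f : V₁ →ₗ[SS k m] V₂) {η₁ : V₁ →ₗ[SS k m] V₁} {η₂ : V₂ →ₗ[SS k m] V₂}
    (hf : ∀ v, f (η₁ v) = η₂ (f v)) (x : V₁ ⊗[k] N) :
    tm f 1 (dk L σ η₁ x) = dk L σ η₂ (tm f 1 x) := by
  have : tm f 1 ∘ₗ dd L σ η₁ = dd L σ η₂ ∘ₗ tm f 1 := by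
    refine TensorProduct.AlgebraTensorModule.ext fun v n => ?_
    simp [dd, LinearMap.sum_apply, TensorProduct.smul_tmul', hf]
  exact LinearMap.congr_fun this x

theorem tm_inj (f : V₁ →ₗ[SS k m] V₂) (hf : Function.Injective f) :
    Function.Injective (tm f (1 : Module.End k N)) :=
  Module.Flat.rTensor_preserves_injective_linearMap (M := N) (f.restrictScalars k) hf

theorem tm_surj (f : V₁ →ₗ[SS k m] V₂) (hf : Function.Surjective f) :
    Function.Surjective (tm f (1 : Module.End k N)) :=
  LinearMap.rTensor_surjective N (g := f.restrictScalars k) hf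

theorem tm_exact (a : V₁ →ₗ[SS k m] V₂) (b : V₂ →ₗ[SS k m] V₃) (hb : Function.Surjective b)
    (hex : Function.Exact a b) : Function.Exact (tm a (1 : Module.End k N)) (tm b (1 : Module.End k N)) :=
  rTensor_exact N (f := a.restrictScalars k) (g := b.restrictScalars k) hex hb

theorem finE [Module.Finite k N] [Module.Finite (SS k m) V] : Module.Finite (SS k m) (V ⊗[k] N) :=
  Module.Finite.equiv (TensorProduct.AlgebraTensorModule.cancelBaseChange k (SS k m) (SS k m) V N)

theorem finH [Module.Finite k N] [Module.Finite (SS k m) V] (h : Cf c L P σ) (h2 : (2 : k) ≠ 0)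
    (hcn : ∀ i, c i ≠ 0) (η : V →ₗ[SS k m] V) : Module.Finite k (HH (dk L σ η)) := by
  have := finE (k := k) (m := m) (N := N) (V := V)
  let K := LinearMap.ker (dd L σ η)
  have hK : K.FG := IsNoetherian.noetherian K
  obtain ⟨s, hs⟩ := hK
  have hsm : ∀ z ∈ K, ∀ p : SS k m, p • z ∈ K := fun z hz p => K.smul_mem p hz
  have h1 : ∀ (p : SS k m) (z) (hz : z ∈ K), hcl (dk L σ η) (p • z) (hsm z hz p) =
      coeff 0 p • hcl (dk L σ η) z hz := by
    intro p z hz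
    have key : ∃ y, dk L σ η y = p • z - coeff 0 p • z := by
      induction p using MvPolynomial.induction_on with
      | C a =>
        refine ⟨0, ?_⟩
        rw [map_zero, coeff_zero_C, ← algebraMap_smul (SS k m) a z]
        exact (sub_self _).symm
      | add p q hp hq =>
        obtain ⟨y, hy⟩ := hp
        obtain ⟨y', hy'⟩ := hq
        refine ⟨y + y', ?_⟩
        rw [map_add, hy, hy', add_smul, coeff_add, add_smul]; abel
      | mul_X p i hp =>
        obtain ⟨y, hy⟩ := X_exact h h2 hcn i (p • z) (hsm z hz p)
        refine ⟨y, ?_⟩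
        have h0 : coeff 0 (p * X i) = 0 := by
          rw [coeff_mul_X', if_neg (by simp)]
        rw [hy, h0, zero_smul, sub_zero, mul_comm, mul_smul]
    exact (hcl_eq (dk L σ η) _ _ (hsm z hz p) (by
      rw [map_smul]; have : dk L σ η z = 0 := hz
      rw [this, smul_zero])).2 key
  have hmem : ∀ z ∈ s, z ∈ K := fun z hz => hs ▸ Submodule.subset_span hz
  let t : Set (HH (dk L σ η)) := Set.range fun z : s => hcl (dk L σ η) z.1 (hmem z.1 z.2)
  have ht : t.Finite := Set.finite_range _
  refine ⟨(Submodule.fg_def.2 ⟨t, ht, ?_⟩)⟩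
  rw [eq_top_iff]
  rintro w -
  obtain ⟨x, hx, rfl⟩ := hcl_surj _ w
  have hxs : x ∈ Submodule.span (SS k m) (s : Set (V ⊗[k] N)) := by rw [hs]; exact hx
  induction hxs using Submodule.span_induction with
  | mem z hz => exact Submodule.subset_span ⟨⟨z, hz⟩, rfl⟩
  | zero =>
    have : hcl (dk L σ η) 0 hx = 0 := rfl
    rw [this]; exact Submodule.zero_mem _
  | add y z hy hz ihy ihz =>
    rw [hs] at hy hz
    exact Submodule.add_mem _ (ihy hy) (ihz hz)
  | smul p z hz ih =>
    rw [hs] at hz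
    rw [h1 p z hz]
    exact Submodule.smul_mem _ _ (ih hz)

noncomputable def lam (L : Fin m → Module.End k N) (σ : Module.End k N) (η : V →ₗ[SS k m] V) : ℕ :=
  Module.finrank k (HH (dk L σ η))

theorem comp_P (h : Cf c L P σ) (η : V →ₗ[SS k m] V) (j : Fin m) :
    Comp (dk L σ η) (dk L σ η) ((tm 1 (P j) : Module.End (SS k m) (V ⊗[k] N)).restrictScalars k) :=
  Comp.of_anti fun x => LinearMap.congr_fun (dd_P h η j) x

theorem tmP_isRep (h : Cf c L P σ) :
    IsRep c (fun j => ((tm 1 (P j) : Module.End (SS k m) (V ⊗[k] N)).restrictScalars k : Module.End k (V ⊗[k] N))) := by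
  constructor
  · intro i
    have : (tm 1 (P i) : Module.End (SS k m) (V ⊗[k] N)) * tm 1 (P i) = (C (c i) : SS k m) • 1 := by
      rw [tm_mul, h.hP.sq, tm_smul, one_mul, tm_one]
    refine LinearMap.ext fun x => (LinearMap.congr_fun this x).trans ?_
    exact algebraMap_smul (SS k m) (c i) x
  · intro i j hij
    have : (tm 1 (P i) : Module.End (SS k m) (V ⊗[k] N)) * tm 1 (P j) + tm 1 (P j) * tm 1 (P i) = 0 := by
      rw [tm_mul, tm_mul, one_mul, ← tm_add, h.hP.anti i j hij, tm_zero]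
    exact LinearMap.ext fun x => (LinearMap.congr_fun this x)

variable {T : Type u} [AddCommGroup T] [Module k T] [Module.Finite k T] {A : Fin m → Module.End k T}

theorem lam_dvd [Module.Finite k N] [Module.Finite (SS k m) V] (h : Cf c L P σ) (h2 : (2 : k) ≠ 0)
    (hcn : ∀ i, c i ≠ 0) (hu : IsUniv c A) (η : V →ₗ[SS k m] V) :
    Module.finrank k T ∣ lam L σ η := by
  have := finH h h2 hcn η
  exact hu.dvd _ _ (hmap_isRep (tmP_isRep h) (comp_P h η))

theorem lam_exact [Module.Finite k N] [Module.Finite (SS k m) V₁] [Module.Finite (SS k m) V₂]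
    [Module.Finite (SS k m) V₃] (h : Cf c L P σ) (h2 : (2 : k) ≠ 0)
    (hcn : ∀ i, c i ≠ 0) (hu : IsUniv c A)
    {η₁ : V₁ →ₗ[SS k m] V₁} {η₂ : V₂ →ₗ[SS k m] V₂} {η₃ : V₃ →ₗ[SS k m] V₃}
    (hη₂ : IsOp (gS c) η₂) (a : V₁ →ₗ[SS k m] V₂) (b : V₂ →ₗ[SS k m] V₃)
    (ha : ∀ v, a (η₁ v) = η₂ (a v)) (hb : ∀ v, b (η₂ v) = η₃ (b v)) (hinj : Function.Injective a)
    (hsurj : Function.Surjective b) (hex : Function.Exact a b) :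
    ∃ s, lam L σ η₁ + lam L σ η₃ = lam L σ η₂ + 2 * (Module.finrank k T * s) := by
  have f1 := finH h h2 hcn η₁
  have f2 := finH h h2 hcn η₂
  have f3 := finH h h2 hcn η₃
  have e := hex_lemma (dk L σ η₁) (dk L σ η₂) (dk L σ η₃) (dk_sq h hη₂)
    ((tm a (1 : Module.End k N)).restrictScalars k) ((tm b (1 : Module.End k N)).restrictScalars k)
    (tm_dd a ha) (tm_dd b hb) (tm_inj a hinj) (tm_surj b hsurj) (tm_exact a b hsurj hex)
  have hd : Module.finrank k T ∣ Module.finrank k (LinearMap.ker (hmap (Comp.of_comm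
      (f := ((tm a (1 : Module.End k N)).restrictScalars k)) (tm_dd (L := L) (σ := σ) a ha)))) := by
    refine hu.dvd _ _ ((hmap_isRep (tmP_isRep h) (comp_P h η₁)).restr _ ?_)
    intro i z hz
    obtain ⟨x, hx, rfl⟩ := hcl_surj _ z
    rw [LinearMap.mem_ker, hmap_hcl, hcl_zero] at hz
    rw [LinearMap.mem_ker]
    refine (hcl_zero (dk L σ η₂) _ ((Comp.of_comm
      (f := ((tm a (1 : Module.End k N)).restrictScalars k)) (tm_dd (L := L) (σ := σ) a ha)).hk _
        ((comp_P h η₁ i).hk x hx))).2 ?_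
    obtain ⟨y, hy⟩ := hz
    obtain ⟨y', hy'⟩ := (comp_P h η₂ i).hr y
    refine ⟨y', hy'.trans ?_⟩
    rw [hy]
    have : (tm 1 (P i) : Module.End (SS k m) (V₂ ⊗[k] N)) ∘ₗ tm a 1 = tm a 1 ∘ₗ tm 1 (P i) :=
      TensorProduct.AlgebraTensorModule.ext fun v n => rfl
    exact LinearMap.congr_fun this x
  obtain ⟨s, hs⟩ := hd
  exact ⟨s, by rw [← hs]; exact e⟩

theorem lam_reg [Module.Finite k N] [Module.Finite (SS k m) V] 
    [Module.Finite (SS k m) V₃] (h : Cf c L P σ) (h2 : (2 : k) ≠ 0)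
    (hcn : ∀ i, c i ≠ 0) {η : V →ₗ[SS k m] V} {η₃ : V₃ →ₗ[SS k m] V₃}
    (hη : IsOp (gS c) η) (i : Fin m) (b : V →ₗ[SS k m] V₃)
    (hb : ∀ v, b (η v) = η₃ (b v)) (hinj : ∀ v : V, (X i : SS k m) • v = 0 → v = 0)
    (hsurj : Function.Surjective b) (hex : ∀ v, b v = 0 ↔ ∃ w, (X i : SS k m) • w = v) :
    lam L σ η₃ = 2 * lam L σ η := by
  have f2 := finH h h2 hcn η
  have f3 := finH h h2 hcn η₃
  let a : V →ₗ[SS k m] V := LinearMap.lsmul (SS k m) V (X i)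
  have ha : ∀ v, a (η v) = η (a v) := fun v => (map_smul η _ _).symm
  have hinj' : Function.Injective a := (injective_iff_map_eq_zero a).2 hinj
  have e := hex_lemma (dk L σ η) (dk L σ η) (dk L σ η₃) (dk_sq h hη)
    ((tm a (1 : Module.End k N)).restrictScalars k) ((tm b (1 : Module.End k N)).restrictScalars k)
    (tm_dd a ha) (tm_dd b hb) (tm_inj a hinj') (tm_surj b hsurj) (tm_exact a b hsurj hex)
  have hz : LinearMap.ker (hmap (Comp.of_comm
      (f := ((tm a (1 : Module.End k N)).restrictScalars k)) (tm_dd (L := L) (σ := σ) a ha))) = ⊤ := by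
    rw [eq_top_iff]
    rintro z -
    obtain ⟨x, hx, rfl⟩ := hcl_surj _ z
    rw [LinearMap.mem_ker, hmap_hcl, hcl_zero]
    obtain ⟨y, hy⟩ := X_exact h h2 hcn i x hx
    refine ⟨y, hy.trans ?_⟩
    have : (X i : SS k m) • (1 : Module.End (SS k m) (V ⊗[k] N)) = tm a 1 :=
      TensorProduct.AlgebraTensorModule.ext fun v n => rfl
    exact LinearMap.congr_fun this x
  rw [hz, finrank_top] at e
  unfold lam
  omega

end
end cf
end Swan

namespace Swan
open TensorProduct

section cliff
variable {k : Type u} [Field k] {m : ℕ} (c : Fin m → k)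

noncomputable def cL (i : Fin m) : Module.End k (Cq c) := LinearMap.mulLeft k (ee c i)
noncomputable def cP (i : Fin m) : Module.End k (Cq c) := LinearMap.mulRight k (ee c i)
noncomputable def cs : Module.End k (Cq c) :=
  (CliffordAlgebra.involute (Q := QuadraticMap.weightedSumSquares k c)).toLinearMap

theorem cs_ee (i : Fin m) : CliffordAlgebra.involute (ee c i) = - ee c i :=
  CliffordAlgebra.involute_ι _

theorem cf_cliff : Cf c (cL c) (cP c) (cs c) := by
  constructor
  · constructor
    · intro i
      ext x
      change ee c i * (ee c i * x) = c i • x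
      rw [← mul_assoc, ee_sq, ← Algebra.smul_def]
    · intro i j hij
      ext x
      change ee c i * (ee c j * x) + ee c j * (ee c i * x) = 0
      rw [← mul_assoc, ← mul_assoc, ← add_mul, ee_anti c i j hij, zero_mul]
  · constructor
    · intro i
      ext x
      change (x * ee c i) * ee c i = c i • x
      rw [mul_assoc, ee_sq, Algebra.smul_def, Algebra.commutes]
    · intro i j hij
      ext x
      change (x * ee c j) * ee c i + (x * ee c i) * ee c j = 0
      rw [mul_assoc, mul_assoc, ← mul_add, ee_anti c j i hij.symm, mul_zero]
  · ext x
    exact CliffordAlgebra.involute_involute x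
  · intro i
    ext x
    change CliffordAlgebra.involute (ee c i * x) = - (ee c i * CliffordAlgebra.involute x)
    rw [map_mul, cs_ee, neg_mul]
  · intro i
    ext x
    change CliffordAlgebra.involute (x * ee c i) = - (CliffordAlgebra.involute x * ee c i)
    rw [map_mul, cs_ee, mul_neg]
  · intro i j
    ext x
    change ee c i * (x * ee c j) = (ee c i * x) * ee c j
    rw [mul_assoc]

end cliff

section top
variable {k : Type u} [Field k] {m : ℕ} {c : Fin m → k}
variable {N : Type u} [AddCommGroup N] [Module k N] [Module.Finite k N]
variable {L P : Fin m → Module.End k N} {σ : Module.End k N}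
variable {V V₁ V₂ V₃ : Type u}
  [AddCommGroup V] [Module (SS k m) V] [Module k V] [IsScalarTower k (SS k m) V]
  [AddCommGroup V₁] [Module (SS k m) V₁] [Module k V₁] [IsScalarTower k (SS k m) V₁]
  [AddCommGroup V₂] [Module (SS k m) V₂] [Module k V₂] [IsScalarTower k (SS k m) V₂]

theorem lam_sub [Subsingleton V] (η : V →ₗ[SS k m] V) : lam L σ η = 0 := by
  have : Subsingleton (V ⊗[k] N) := by
    refine ⟨fun x y => ?_⟩
    have : ∀ x : V ⊗[k] N, x = 0 := by
      intro x
      induction x with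
      | zero => rfl
      | add x y hx hy => rw [hx, hy, add_zero]
      | tmul s w => rw [Subsingleton.elim s 0, zero_tmul]
    rw [this x, this y]
  have : Subsingleton (HH (dk L σ η)) := by
    refine ⟨fun x y => ?_⟩
    obtain ⟨x, hx, rfl⟩ := hcl_surj _ x
    obtain ⟨y, hy, rfl⟩ := hcl_surj _ y
    exact (hcl_eq _ _ _ _ _).2 ⟨0, Subsingleton.elim _ _⟩
  exact Module.finrank_zero_of_subsingleton

variable {T : Type u} [AddCommGroup T] [Module k T] [Module.Finite k T] {A : Fin m → Module.End k T}

theorem exact_equiv (e : V₁ ≃ₗ[SS k m] V₂) :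
    Function.Exact (0 : PUnit.{u+1} →ₗ[SS k m] V₁) (e : V₁ →ₗ[SS k m] V₂) := by
  intro v
  constructor
  · intro hv
    exact ⟨0, by rw [map_zero]; exact (e.map_eq_zero_iff.1 hv).symm⟩
  · rintro ⟨y, rfl⟩
    simp

theorem lam_iso [Module.Finite (SS k m) V₁] [Module.Finite (SS k m) V₂]
    (h : Cf c L P σ) (h2 : (2 : k) ≠ 0) (hcn : ∀ i, c i ≠ 0) (hu : IsUniv c A)
    {η₁ : V₁ →ₗ[SS k m] V₁} {η₂ : V₂ →ₗ[SS k m] V₂}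
    (hη₁ : IsOp (gS c) η₁) (hη₂ : IsOp (gS c) η₂) (e : V₁ ≃ₗ[SS k m] V₂)
    (he : ∀ v, e (η₁ v) = η₂ (e v)) : lam L σ η₁ = lam L σ η₂ := by
  have z : lam L σ (0 : PUnit.{u+1} →ₗ[SS k m] PUnit.{u+1}) = 0 := lam_sub _
  obtain ⟨s, hs⟩ := lam_exact h h2 hcn hu (η₁ := (0 : PUnit.{u+1} →ₗ[SS k m] PUnit.{u+1})) (η₃ := η₂) hη₁ 0 e.toLinearMap
    (by simp) he (fun _ _ _ => rfl) e.surjective (exact_equiv e)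
  obtain ⟨s', hs'⟩ := lam_exact h h2 hcn hu (η₁ := (0 : PUnit.{u+1} →ₗ[SS k m] PUnit.{u+1})) (η₃ := η₁) hη₂ 0 e.symm.toLinearMap
    (by simp) (fun v => e.injective (by simp [he])) (fun _ _ _ => rfl) e.symm.surjective (exact_equiv e.symm)
  omega

theorem lam_zero_dd {η : V →ₗ[SS k m] V} (h : ∀ x, dk L σ η x = 0) :
    lam L σ η = Module.finrank k (V ⊗[k] N) := by
  unfold lam
  have e : (V ⊗[k] N) ≃ₗ[k] HH (dk L σ η) := by
    refine LinearEquiv.ofBijective ((Submodule.mkQ _) ∘ₗ (LinearMap.codRestrict (LinearMap.ker (dk L σ η)) LinearMap.id h)) ⟨?_, ?_⟩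
    · refine (injective_iff_map_eq_zero _).2 fun x hx => ?_
      obtain ⟨y, hy⟩ := (hcl_zero (dk L σ η) x (h x)).1 hx
      rw [← hy, h]
    · intro z
      obtain ⟨x, hx, rfl⟩ := hcl_surj _ z
      exact ⟨x, rfl⟩
  exact e.finrank_eq.symm

end top

section tow
variable {k : Type u} [Field k] {m : ℕ} {c : Fin (m+1) → k}
variable {N : Type u} [AddCommGroup N] [Module k N] [Module.Finite k N]
variable {L P : Fin (m+1) → Module.End k N} {σ : Module.End k N}
variable {M : Type u} [AddCommGroup M] [Module (PP k m) M] [Module k M] [IsScalarTower k (PP k m) M]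
  [Module.Finite (PP k m) M]

noncomputable def qop (η : M →ₗ[PP k m] M) (j : ℕ) :
    (M ⧸ (Idl k m j • (⊤ : Submodule (PP k m) M))) →ₗ[PP k m] (M ⧸ (Idl k m j • (⊤ : Submodule (PP k m) M))) :=
  Submodule.mapQ _ _ η (by
    rw [← Submodule.map_le_iff_le_comap, Submodule.map_smul'']
    exact Submodule.smul_mono le_rfl le_top)

theorem qop_mk (η : M →ₗ[PP k m] M) (j : ℕ) (v : M) :
    qop η j (Submodule.Quotient.mk v) = Submodule.Quotient.mk (η v) := rfl

theorem qop_isOp {η : M →ₗ[PP k m] M} (h : IsOp (gS c) η) (j : ℕ) : IsOp (gS c) (qop η j) := by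
  intro v
  obtain ⟨v, rfl⟩ := Submodule.Quotient.mk_surjective _ v
  change Submodule.Quotient.mk (η (η v)) = _
  rw [h]; rfl

theorem lam_step (h : Cf c L P σ) (h2 : (2 : k) ≠ 0)
    (hcn : ∀ i, c i ≠ 0) {η : M →ₗ[PP k m] M} (hη : IsOp (gS c) η) (hr : Reg (k := k) (m := m) (m+1) M)
    (i : Fin (m+1)) : lam L σ (qop η (i.val+1)) = 2 * lam L σ (qop η i.val) := by
  have hle : (Idl k m i.val • (⊤ : Submodule (PP k m) M)) ≤ Idl k m (i.val+1) • ⊤ := by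
    rw [Idl_succ]; exact Submodule.smul_mono le_sup_left le_rfl
  refine lam_reg h h2 hcn (qop_isOp hη _) i (Submodule.factor hle) ?_ ?_ ?_ ?_
  · intro v
    obtain ⟨v, rfl⟩ := Submodule.Quotient.mk_surjective _ v
    have hf : ∀ v, Submodule.factor hle (Submodule.Quotient.mk v) = Submodule.Quotient.mk v :=
      fun v => Submodule.factor_mk hle v
    rw [qop_mk, hf, hf, qop_mk]
  · intro v hv
    obtain ⟨v, rfl⟩ := Submodule.Quotient.mk_surjective _ v
    rw [← Submodule.Quotient.mk_smul, Submodule.Quotient.mk_eq_zero] at hv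
    rw [Submodule.Quotient.mk_eq_zero]
    exact hr i i.2 v hv
  · exact Submodule.factor_surjective hle
  · intro v
    obtain ⟨v, rfl⟩ := Submodule.Quotient.mk_surjective _ v
    change (Submodule.Quotient.mk v : M ⧸ _) = 0 ↔ _
    rw [Submodule.Quotient.mk_eq_zero]
    constructor
    · intro hv
      obtain ⟨z, hz, w, hw⟩ := mem_Idl_succ i v hv
      refine ⟨Submodule.Quotient.mk w, ?_⟩
      rw [← Submodule.Quotient.mk_smul]
      refine (Submodule.Quotient.eq _).2 ?_
      rw [← neg_mem_iff, neg_sub, hw, add_sub_cancel_right]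
      exact hz
    · rintro ⟨w, hw⟩
      obtain ⟨w, rfl⟩ := Submodule.Quotient.mk_surjective _ w
      rw [← Submodule.Quotient.mk_smul] at hw
      have h3 := hle ((Submodule.Quotient.eq _).1 hw)
      have h4 : (X i : PP k m) • w ∈ Idl k m (i.val+1) • (⊤ : Submodule (PP k m) M) :=
        Submodule.smul_mem_smul (Ideal.subset_span ⟨i, by simp, rfl⟩) trivial
      have := Submodule.sub_mem _ h4 h3
      simpa using this

theorem lam_pow (h : Cf c L P σ) (h2 : (2 : k) ≠ 0)
    (hcn : ∀ i, c i ≠ 0) {η : M →ₗ[PP k m] M} (hη : IsOp (gS c) η) (hr : Reg (k := k) (m := m) (m+1) M)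
    (j : ℕ) (hj : j ≤ m + 1) : lam L σ (qop η j) = 2 ^ j * lam L σ (qop η 0) := by
  induction j with
  | zero => simp
  | succ j ih =>
    rw [lam_step h h2 hcn hη hr ⟨j, hj⟩, ih (by omega)]
    ring

theorem lam_end {η : M →ₗ[PP k m] M} (hm : ∀ z, η z ∈ Idl k m (m+1) • (⊤ : Submodule (PP k m) M)) :
    lam L σ (qop η (m+1)) =
      Module.finrank k (M ⧸ (Idl k m (m+1) • (⊤ : Submodule (PP k m) M))) * Module.finrank k N := by
  rw [lam_zero_dd, Module.finrank_tensorProduct]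
  have hX : ∀ (i : Fin (m+1)) (v : M ⧸ (Idl k m (m+1) • (⊤ : Submodule (PP k m) M))), (X i : PP k m) • v = 0 := by
    intro i v
    obtain ⟨v, rfl⟩ := Submodule.Quotient.mk_surjective _ v
    rw [← Submodule.Quotient.mk_smul, Submodule.Quotient.mk_eq_zero]
    exact Submodule.smul_mem_smul (Ideal.subset_span ⟨i, i.2, rfl⟩) trivial
  have hq : ∀ v, qop η (m+1) v = 0 := by
    intro v
    obtain ⟨v, rfl⟩ := Submodule.Quotient.mk_surjective _ v
    exact (Submodule.Quotient.mk_eq_zero _).2 (hm v)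
  have : dd L σ (qop η (m+1)) = 0 := by
    refine TensorProduct.AlgebraTensorModule.ext fun v n => ?_
    simp [dd, LinearMap.sum_apply, TensorProduct.smul_tmul', hX, hq]
  intro x
  exact LinearMap.congr_fun this x

end tow
end Swan

namespace Swan
open TensorProduct

section
variable {k : Type u} [Field k] {m : ℕ} {c : Fin m → k}
variable {N : Type u} [AddCommGroup N] [Module k N]
variable {L P : Fin m → Module.End k N} {σ : Module.End k N}
variable {U : Type u} [AddCommGroup U] [Module (SS k m) U] [Module k U] [IsScalarTower k (SS k m) U]

theorem lam_dop (h : Cf c L P σ) : lam L σ (dop (gS c) U) = 0 := by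
  have hs : ∀ n, σ (σ n) = n := fun n => LinearMap.congr_fun h.hs n
  have hsL : ∀ i n, σ (L i n) = - L i (σ n) := fun i n => LinearMap.congr_fun (h.hsL i) n
  let s : Module.End (SS k m) ((U × U) ⊗[k] N) :=
    tm (LinearMap.inl (SS k m) U U ∘ₗ LinearMap.snd (SS k m) U U) (-σ)
  have key : dd L σ (dop (gS c) U) * s + s * dd L σ (dop (gS c) U) = 1 := by
    refine TensorProduct.AlgebraTensorModule.ext fun v n => ?_
    obtain ⟨x, y⟩ := v
    have e1 : s ((x, y) ⊗ₜ n) = (y, (0 : U)) ⊗ₜ[k] (-σ n) := rfl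
    have e2 : ∀ (v : U × U) (n : N), dd L σ (dop (gS c) U) (v ⊗ₜ n) =
      ∑ i, ((X i : SS k m) • v) ⊗ₜ[k] (σ (L i n)) + (gS c • v.2, v.1) ⊗ₜ (- σ n) := by
      intro v n
      simp [dd, LinearMap.sum_apply, TensorProduct.smul_tmul', dop]
    have e3 : ∀ (v : U × U) (n : N), s (v ⊗ₜ n) = (v.2, (0 : U)) ⊗ₜ[k] (-σ n) := fun _ _ => rfl
    rw [LinearMap.add_apply, Module.End.mul_apply, Module.End.mul_apply, e3, e2, e2, map_add, map_sum]
    simp only [e3, hs, map_neg, neg_neg, hsL, Prod.smul_snd, Prod.smul_mk, smul_zero, Module.End.one_apply]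
    rw [add_add_add_comm, ← Finset.sum_add_distrib]
    rw [Finset.sum_eq_zero, zero_add, ← add_tmul]
    · simp
    · intro i _
      simp [tmul_neg]
  have : Subsingleton (HH (dk L σ (dop (gS c) U))) := by
    refine subsingleton_of_forall_eq 0 fun z => ?_
    obtain ⟨z, hz, rfl⟩ := hcl_surj _ z
    refine (hcl_zero _ _ _).2 ⟨s z, ?_⟩
    have h1 := LinearMap.congr_fun key z
    have hz' : dd L σ (dop (gS c) U) z = 0 := hz
    rw [LinearMap.add_apply, Module.End.mul_apply, Module.End.mul_apply, hz', map_zero, add_zero] at h1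
    exact h1
  exact Module.finrank_zero_of_subsingleton

end

section
variable {k : Type u} [Field k] {m : ℕ} {c : Fin (m+1) → k}
variable {T : Type u} [AddCommGroup T] [Module k T] [Module.Finite k T]

theorem reg_equiv {F F' : Type*} [AddCommGroup F] [Module (PP k m) F] [AddCommGroup F'] [Module (PP k m) F']
    (e : F ≃ₗ[PP k m] F') (j : ℕ) (h : Reg (k := k) (m := m) j F') : Reg (k := k) (m := m) j F := by
  have h1 : ∀ (I : Ideal (PP k m)) (z : F), z ∈ I • (⊤ : Submodule (PP k m) F) ↔
      e z ∈ I • (⊤ : Submodule (PP k m) F') := by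
    intro I z
    have : (I • (⊤ : Submodule (PP k m) F)).map (e : F →ₗ[PP k m] F') = I • ⊤ := by
      rw [Submodule.map_smul'', Submodule.map_top, LinearEquiv.range]
    rw [← this]
    constructor
    · intro hz; exact ⟨z, hz, rfl⟩
    · rintro ⟨w, hw, hwz⟩
      rwa [← e.injective hwz]
  intro i hi z hz
  rw [h1] at hz ⊢
  rw [map_smul] at hz
  exact h i hi _ hz

theorem fib_rank : Module.finrank k ((PP k m ⊗[k] T) ⧸ (Idl k m (m+1) • (⊤ : Submodule (PP k m) (PP k m ⊗[k] T))))
    = Module.finrank k T := by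
  let cc : PP k m →ₗ[k] k := MvPolynomial.lcoeff k 0
  let φ : (PP k m ⊗[k] T) →ₗ[k] T := (TensorProduct.lid k T).toLinearMap ∘ₗ LinearMap.rTensor T cc
  have hφ : ∀ s t, φ (s ⊗ₜ t) = coeff 0 s • t := fun s t => by simp [φ, cc]
  have hφs : ∀ (p : PP k m) z, φ (p • z) = coeff 0 p • φ z := by
    intro p z
    induction z with
    | zero => simp
    | add x y hx hy => rw [smul_add, map_add, hx, hy, map_add, smul_add]
    | tmul s t =>
      rw [TensorProduct.smul_tmul', hφ, hφ, smul_smul]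
      congr 1
      rw [smul_eq_mul]
      exact map_mul (constantCoeff) p s
  let ψ : T →ₗ[k] ((PP k m ⊗[k] T) ⧸ (Idl k m (m+1) • (⊤ : Submodule (PP k m) (PP k m ⊗[k] T)))) :=
    ((Submodule.mkQ _).restrictScalars k) ∘ₗ (TensorProduct.mk k (PP k m) T 1)
  have hψ : ∀ t, ψ t = Submodule.Quotient.mk (1 ⊗ₜ t) := fun _ => rfl
  refine (LinearEquiv.ofBijective ψ ⟨?_, ?_⟩).finrank_eq.symm
  · refine (injective_iff_map_eq_zero _).2 fun t ht => ?_
    rw [hψ, Submodule.Quotient.mk_eq_zero] at ht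
    have : ∀ z ∈ Idl k m (m+1) • (⊤ : Submodule (PP k m) (PP k m ⊗[k] T)), φ z = 0 := by
      intro z hz
      induction hz using Submodule.smul_induction_on' with
      | smul p hp z _ => rw [hφs, (mem_Idl_top p).1 hp, zero_smul]
      | add x _ y _ hx hy => rw [map_add, hx, hy, add_zero]
    have := this _ ht
    rwa [hφ, coeff_zero_one, one_smul] at this
  · intro v
    obtain ⟨z, rfl⟩ := Submodule.Quotient.mk_surjective _ v
    induction z with
    | zero => exact ⟨0, map_zero _⟩
    | add x y hx hy =>
      obtain ⟨a, ha⟩ := hx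
      obtain ⟨b, hb⟩ := hy
      exact ⟨a + b, by rw [map_add, ha, hb]; rfl⟩
    | tmul s t =>
      refine ⟨coeff 0 s • t, ?_⟩
      rw [hψ]
      refine (Submodule.Quotient.eq _).2 ?_
      have : (1 : PP k m) ⊗ₜ[k] (coeff 0 s • t) - s ⊗ₜ t = (C (coeff 0 s) - s) • ((1 : PP k m) ⊗ₜ[k] t) := by
        rw [TensorProduct.smul_tmul', sub_smul, sub_tmul, smul_eq_mul, mul_one, smul_eq_mul, mul_one,
          ← TensorProduct.smul_tmul, smul_eq_C_mul, mul_one]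
      rw [this]
      refine Submodule.smul_mem_smul ((mem_Idl_top _).2 ?_) trivial
      simp

theorem lam_mop [Nontrivial T] {A : Fin (m+1) → Module.End k T} (hA : IsRep c A) (hu : IsUniv c A)
    (h2 : (2 : k) ≠ 0) (hcn : ∀ i, c i ≠ 0) [Nontrivial (Cq c)] :
    lam (cL c) (cs c) (mop A) = Module.finrank k T := by
  let e : PP k m ⊗[k] T ≃ₗ[PP k m] (Fin (Module.finrank k T) → PP k m) :=
    ((Module.finBasis k T).baseChange (PP k m)).equivFun
  have hr : Reg (k := k) (m := m) (m+1) (PP k m ⊗[k] T) := reg_equiv e _ (reg_free _)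
  have h1 := lam_pow (cf_cliff c) h2 hcn (mop_isOp hA) hr (m+1) le_rfl
  rw [lam_end, fib_rank] at h1
  · have h3 : lam (cL c) (cs c) (qop (mop A) 0) = lam (cL c) (cs c) (mop A) := by
      have hb : (Idl k m 0 • (⊤ : Submodule (PP k m) (PP k m ⊗[k] T))) = ⊥ := by
        rw [Idl_zero, Submodule.bot_smul]
      refine lam_iso (cf_cliff c) h2 hcn hu (qop_isOp (mop_isOp hA) 0) (mop_isOp hA)
        (Submodule.quotEquivOfEqBot _ hb) ?_
      intro v
      obtain ⟨v, rfl⟩ := Submodule.Quotient.mk_surjective _ v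
      rw [qop_mk, Submodule.quotEquivOfEqBot_apply_mk, Submodule.quotEquivOfEqBot_apply_mk]
    rw [h3] at h1
    have h4 := Cq_rank c
    have h5 : 0 < Module.finrank k (Cq c) := Module.finrank_pos
    have h6 : 0 < Module.finrank k T := Module.finrank_pos
    obtain ⟨s, hs⟩ := lam_dvd (cf_cliff c) h2 hcn hu (mop A)
    rw [hs] at h1 ⊢
    have h7 : Module.finrank k (Cq c) = 2 ^ (m+1) * s := by
      refine Nat.eq_of_mul_eq_mul_left h6 ?_
      rw [h1]; ring
    rcases s with _ | _ | s
    · omega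
    · rw [zero_add, mul_one]
    · exfalso
      have : 0 < 2 ^ (m+1) := by positivity
      nlinarith
  · intro z
    rw [mop, LinearMap.sum_apply]
    refine Submodule.sum_mem _ fun i _ => ?_
    rw [LinearMap.smul_apply]
    exact Submodule.smul_mem_smul (Ideal.subset_span ⟨i, i.2, rfl⟩) trivial

end
end Swan

namespace Swan
open TensorProduct

section
variable {k : Type u} [Field k] {m : ℕ} {c : Fin m → k}

def RM (M : FGModuleRep (Rg (gS c))) : Type u := M.carrier

instance (M : FGModuleRep (Rg (gS c))) : AddCommGroup (RM M) := inferInstanceAs (AddCommGroup M.carrier)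
instance (M : FGModuleRep (Rg (gS c))) : Module (Rg (gS c)) (RM M) :=
  inferInstanceAs (Module (Rg (gS c)) M.carrier)
instance (M : FGModuleRep (Rg (gS c))) : Module.Finite (Rg (gS c)) (RM M) :=
  inferInstanceAs (Module.Finite (Rg (gS c)) M.carrier)
noncomputable instance (M : FGModuleRep (Rg (gS c))) : Module (SS k m) (RM M) :=
  Module.compHom (RM M) (algebraMap (SS k m) (Rg (gS c)))
noncomputable instance (M : FGModuleRep (Rg (gS c))) : Module k (RM M) :=
  Module.compHom (RM M) (algebraMap k (SS k m))
instance (M : FGModuleRep (Rg (gS c))) : IsScalarTower (SS k m) (Rg (gS c)) (RM M) :=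
  IsScalarTower.of_algebraMap_smul fun _ _ => rfl
instance (M : FGModuleRep (Rg (gS c))) : IsScalarTower k (SS k m) (RM M) :=
  IsScalarTower.of_algebraMap_smul fun _ _ => rfl
instance (M : FGModuleRep (Rg (gS c))) : Module.Finite (SS k m) (RM M) :=
  Module.Finite.trans (Rg (gS c)) (RM M)

noncomputable def rmap {M₁ M₂ : FGModuleRep (Rg (gS c))} (f : M₁.carrier →ₗ[Rg (gS c)] M₂.carrier) :
    RM M₁ →ₗ[SS k m] RM M₂ :=
  LinearMap.restrictScalars (SS k m) (show RM M₁ →ₗ[Rg (gS c)] RM M₂ from f)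

theorem rmap_omega {M₁ M₂ : FGModuleRep (Rg (gS c))} (f : M₁.carrier →ₗ[Rg (gS c)] M₂.carrier) (v : RM M₁) :
    rmap f (omegaOp (g := gS c) (RM M₁) v) = omegaOp (g := gS c) (RM M₂) (rmap f v) :=
  f.map_smul _ _

/-- rank -/
noncomputable def rk : GGroup (Rg (gS c)) →+ ℤ :=
  glift (fun M => (Module.finrank (SS k m) (RM M) : ℤ)) (by
    intro M₁ M₂ M₃ f g hf hg hfg
    have h1 := (LinearMap.ker (rmap g)).finrank_quotient_add_finrank
    have h2 : Module.finrank (SS k m) (RM M₂ ⧸ LinearMap.ker (rmap g)) = Module.finrank (SS k m) (RM M₃) :=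
      ((rmap g).quotKerEquivOfSurjective hg).finrank_eq
    have h3 : LinearMap.range (rmap f) = LinearMap.ker (rmap g) := by
      ext x; exact SetLike.ext_iff.1 hfg x
    have h4 : Module.finrank (SS k m) (RM M₁) = Module.finrank (SS k m) (LinearMap.ker (rmap g)) := by
      rw [← h3]
      exact (LinearEquiv.ofInjective (rmap f) hf).finrank_eq
    omega)

variable {V : Type u} [AddCommGroup V] [Module (SS k m) V] [Module.Finite (SS k m) V]

noncomputable def idE (η : V →ₗ[SS k m] V) (h : IsOp (gS c) η) : V ≃ₗ[SS k m] RM (c := c) ⟨OpMod η h⟩ where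
  toFun v := v
  invFun v := v
  map_add' _ _ := rfl
  left_inv _ := rfl
  right_inv _ := rfl
  map_smul' s v := by
    refine Eq.symm ((op_smul η h (algebraMap (SS k m) (Rg (gS c)) s) v).trans ?_)
    have : ∀ w : V, (algebraMap (SS k m) (Rg (gS c)) s).re • v + (algebraMap (SS k m) (Rg (gS c)) s).im • w = s • v := by
      intro w
      simp [QuadraticAlgebra.algebraMap_eq]
    exact this _

theorem idE_eta (η : V →ₗ[SS k m] V) (h : IsOp (gS c) η) (v : V) :
    idE η h (η v) = omegaOp (g := gS c) (RM (c := c) ⟨OpMod η h⟩) (idE η h v) := by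
  refine Eq.symm ((op_smul η h QuadraticAlgebra.omega v).trans ?_)
  have : ∀ w : V, (QuadraticAlgebra.omega : Rg (gS c)).re • v + (QuadraticAlgebra.omega : Rg (gS c)).im • w = w := by
    intro w
    simp
  exact this _

theorem rk_cOp (η : V →ₗ[SS k m] V) (h : IsOp (gS c) η) :
    rk (cOp η h) = Module.finrank (SS k m) V := by
  rw [cOp, rk, glift_gof, (idE η h).finrank_eq]

variable {T : Type u} [AddCommGroup T] [Module k T] [Module.Finite k T] [Nontrivial T]
  {A : Fin m → Module.End k T}

noncomputable def hh (hu : IsUniv c A) (h2 : (2 : k) ≠ 0) (hcn : ∀ i, c i ≠ 0) :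
    GGroup (Rg (gS c)) →+ ZMod 2 :=
  glift (fun M => ((lam (cL c) (cs c) (omegaOp (g := gS c) (RM M)) / Module.finrank k T : ℕ) : ZMod 2)) (by
    intro M₁ M₂ M₃ f g hf hg hfg
    obtain ⟨s, hs⟩ := lam_exact (cf_cliff c) h2 hcn hu (omegaOp_isOp (g := gS c) (RM M₂)) (rmap f) (rmap g)
      (rmap_omega f) (rmap_omega g) hf hg (fun x => (SetLike.ext_iff.1 hfg x).symm)
    obtain ⟨a, ha⟩ := lam_dvd (cf_cliff c) h2 hcn hu (omegaOp (g := gS c) (RM M₁))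
    obtain ⟨b, hb⟩ := lam_dvd (cf_cliff c) h2 hcn hu (omegaOp (g := gS c) (RM M₂))
    obtain ⟨d, hd⟩ := lam_dvd (cf_cliff c) h2 hcn hu (omegaOp (g := gS c) (RM M₃))
    have hp : 0 < Module.finrank k T := Module.finrank_pos
    rw [ha, hb, hd] at hs ⊢
    rw [Nat.mul_div_cancel_left _ hp, Nat.mul_div_cancel_left _ hp, Nat.mul_div_cancel_left _ hp]
    have : a + d = b + 2 * s := Nat.eq_of_mul_eq_mul_left hp (by linarith)
    have h3 := congrArg (Nat.cast : ℕ → ZMod 2) this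
    push_cast at h3
    have h4 : (2 : ZMod 2) = 0 := rfl
    rw [h4, zero_mul, add_zero] at h3
    exact h3.symm)

theorem hh_cOp (hu : IsUniv c A) (h2 : (2 : k) ≠ 0) (hcn : ∀ i, c i ≠ 0) [Module k V]
    [IsScalarTower k (SS k m) V] (η : V →ₗ[SS k m] V) (h : IsOp (gS c) η) :
    hh hu h2 hcn (cOp η h) = ((lam (cL c) (cs c) η / Module.finrank k T : ℕ) : ZMod 2) := by
  rw [cOp, hh, glift_gof, lam_iso (cf_cliff c) h2 hcn hu h (omegaOp_isOp _) (idE η h) (idE_eta η h)]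

end

section
variable {k : Type u} [Field k] {m : ℕ} {c : Fin (m+1) → k}

theorem main_diag (h2 : (2 : k) ≠ 0) (hcn : ∀ i, c i ≠ 0) (hs : IsSimpleRing (Cq c)) :
    Nonempty (GGroup (Rg (gS c)) ≃+ ℤ × ZMod 2) := by
  obtain ⟨T, _, _, _, A, hT, hA, hu'⟩ := exists_T c hs
  have hu : IsUniv c A := hu'
  have hN : Nontrivial (Cq c) := inferInstance
  set r : GGroup (Rg (gS c)) := cOp (fop (gS c) Unit) (fop_isOp (gS c) Unit) with hr
  set t : GGroup (Rg (gS c)) := cRep A hA with ht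
  have hrd : r = cOp (dop (gS c) (Fin 1 → SS k (m+1))) (dop_isOp (gS c) _) := by
    rw [dop_fin, one_smul]
  have hρr : rk r = 2 := by
    rw [hrd, rk_cOp, Module.finrank_prod]
    simp
  have hhr : hh hu h2 hcn r = 0 := by
    rw [hrd, hh_cOp, lam_dop (cf_cliff c)]
    simp
  have hht : hh hu h2 hcn t = 1 := by
    rw [ht, cRep, hh_cOp, lam_mop hA hu h2 hcn, Nat.div_self Module.finrank_pos]
    simp
  have h2t : (2 : ℕ) • t = Module.finrank k T • r := hu.two hA
  obtain ⟨e, he⟩ := hu.even hA h2 0 (hcn 0)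
  let t' := t - e • r
  have ht'2 : (2 : ℕ) • t' = 0 := by
    rw [nsmul_sub, h2t, he, ← mul_nsmul, sub_eq_zero]
    congr 1; omega
  have hht' : hh hu h2 hcn t' = 1 := by
    rw [map_sub, hht, map_nsmul, hhr, smul_zero, sub_zero]
  have hρt' : rk t' = 0 := by
    have := congrArg rk ht'2
    rw [map_nsmul, map_zero] at this
    simpa using this
  have ht'z : (zmultiplesHom (GGroup (Rg (gS c))) t') ((2 : ℕ) : ℤ) = 0 := by
    rw [zmultiplesHom_apply, natCast_zsmul, ht'2]
  let β : ZMod 2 →+ GGroup (Rg (gS c)) := ZMod.lift 2 ⟨zmultiplesHom _ t', ht'z⟩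
  have hβ1 : β 1 = t' := by
    have := ZMod.lift_coe 2 ⟨zmultiplesHom _ t', ht'z⟩ 1
    simpa using this
  let Ψ : ℤ × ZMod 2 →+ GGroup (Rg (gS c)) := (zmultiplesHom _ r).coprod β
  have hΨ : ∀ a b, Ψ (a, b) = a • r + β b := fun a b => rfl
  have hρβ : ∀ b, rk (β b) = 0 := by
    intro b
    obtain ⟨n, rfl⟩ := ZMod.intCast_surjective b
    have : β (n : ZMod 2) = n • t' := ZMod.lift_coe 2 ⟨zmultiplesHom _ t', ht'z⟩ n
    rw [this, map_zsmul, hρt', smul_zero]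
  have hhβ : ∀ b, hh hu h2 hcn (β b) = b := by
    intro b
    obtain ⟨n, rfl⟩ := ZMod.intCast_surjective b
    have : β (n : ZMod 2) = n • t' := ZMod.lift_coe 2 ⟨zmultiplesHom _ t', ht'z⟩ n
    rw [this, map_zsmul, hht']
    simp
  refine ⟨(AddEquiv.ofBijective Ψ ⟨?_, ?_⟩).symm⟩
  · refine (injective_iff_map_eq_zero Ψ).2 ?_
    rintro ⟨a, b⟩ hab
    rw [hΨ] at hab
    have h3 := congrArg rk hab
    have h4 := congrArg (hh hu h2 hcn) hab
    rw [map_add, map_zsmul, hρr, hρβ, map_zero, add_zero, smul_eq_mul] at h3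
    rw [map_add, map_zsmul, hhr, hhβ, map_zero, smul_zero, zero_add] at h4
    have : a = 0 := by omega
    rw [this, h4]; rfl
  · intro x
    have hr' : r ∈ Ψ.range := ⟨(1, 0), by rw [hΨ]; simp⟩
    have ht' : t ∈ Ψ.range := ⟨(e, 1), by rw [hΨ, hβ1]; simp [t']⟩
    refine all_mem h2 Ψ.range hr' ?_ x
    intro W _ _ _ B hB
    obtain ⟨a, ha⟩ := hu.cls hA W B hB
    rw [ha]
    exact AddSubgroup.nsmul_mem _ ht' a

end
end Swan

namespace Swan
open TensorProduct

theorem simple_equiv {A B : Type*} [Ring A] [Ring B] (e : A ≃+* B) (h : IsSimpleRing A) :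
    IsSimpleRing B := by
  have := h.simple
  exact ⟨(RingEquiv.mapTwoSidedIdeal e).symm.isSimpleOrder⟩

section cliff
open CliffordAlgebra
variable {k V V' : Type*} [Field k] [AddCommGroup V] [Module k V] [AddCommGroup V'] [Module k V']

noncomputable def evHom (Q : QuadraticForm k V) (Q' : QuadraticForm k V') (φ : V →ₗ[k] V') (a : k)
    (h : ∀ v, Q v = a * Q' (φ v)) : EvenHom Q (even Q') where
  bilin := a • (((even.ι Q').bilin.comp φ).compl₂ φ)
  contract v := by
    simp only [LinearMap.smul_apply, LinearMap.compl₂_apply, LinearMap.comp_apply]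
    rw [(even.ι Q').contract, h, map_mul, Algebra.smul_def]
  contract_mid v₁ v₂ v₃ := by
    simp only [LinearMap.smul_apply, LinearMap.compl₂_apply, LinearMap.comp_apply]
    rw [smul_mul_smul_comm, (even.ι Q').contract_mid, h, smul_smul, smul_smul]
    congr 1; ring

theorem even_equiv (Q : QuadraticForm k V) (Q' : QuadraticForm k V') (φ : V ≃ₗ[k] V') (a : k)
    (ha : a ≠ 0) (h : ∀ v, Q v = a * Q' (φ v)) : Nonempty (even Q ≃ₐ[k] even Q') := by
  have h' : ∀ v, Q' v = a⁻¹ * Q (φ.symm v) := by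
    intro v; rw [h, φ.apply_symm_apply, inv_mul_cancel_left₀ ha]
  refine ⟨AlgEquiv.ofAlgHom (even.lift Q (evHom Q Q' φ.toLinearMap a h))
    (even.lift Q' (evHom Q' Q φ.symm.toLinearMap a⁻¹ h')) ?_ ?_⟩
  · apply even.algHom_ext
    apply EvenHom.ext
    apply LinearMap.ext₂
    intro x y
    simp [evHom, smul_smul, ha]
  · apply even.algHom_ext
    apply EvenHom.ext
    apply LinearMap.ext₂
    intro x y
    simp [evHom, smul_smul, ha]
end cliff

section rg
variable {k : Type u} [Field k] {m : ℕ} (w : Fin (m+2) → k)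

noncomputable def Fw {n : ℕ} (w : Fin n → k) : MvPolynomial (Fin n) k := ∑ i, C (w i) * X i ^ 2

def cw : Fin (m+1) → k := fun i => - w i.succ / w 0

theorem Fw_eq (h0 : w 0 ≠ 0) :
    Fw w = C (w 0) * (X 0 ^ 2 - rename Fin.succ (gS (cw w))) := by
  rw [Fw, Fin.sum_univ_succ, mul_sub, sub_eq_add_neg]
  congr 1
  rw [gS, map_sum, Finset.mul_sum, ← Finset.sum_neg_distrib]
  refine Finset.sum_congr rfl fun i _ => ?_
  rw [map_mul, map_pow, rename_C, rename_X, ← mul_assoc, ← C_mul, ← neg_mul, ← C_neg, cw]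
  congr 2
  field_simp

noncomputable def thf : MvPolynomial (Fin (m+2)) k →+* Rg (gS (cw w)) :=
  eval₂Hom ((algebraMap (SS k (m+1)) (Rg (gS (cw w)))).comp C)
    (Fin.cons QuadraticAlgebra.omega (fun i => algebraMap (SS k (m+1)) (Rg (gS (cw w))) (X i)))

theorem thf_rename (p : SS k (m+1)) : thf w (rename Fin.succ p) = algebraMap (SS k (m+1)) _ p := by
  have : (thf w).comp (rename Fin.succ : SS k (m+1) →ₐ[k] _).toRingHom
      = algebraMap (SS k (m+1)) (Rg (gS (cw w))) := by
    apply MvPolynomial.ringHom_ext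
    · intro r; simp [thf]
    · intro i; simp [thf]
  exact congrArg (fun f => f p) this

theorem thf_zero : thf w (X 0) = QuadraticAlgebra.omega := by simp [thf]

theorem omega_sq' {S : Type*} [CommRing S] (g : S) :
    (QuadraticAlgebra.omega : QuadraticAlgebra S g 0) ^ 2 = algebraMap S _ g := by
  ext <;> simp [pow_two, QuadraticAlgebra.algebraMap_eq]

theorem thf_F (h0 : w 0 ≠ 0) : thf w (Fw w) = 0 := by
  rw [Fw_eq w h0, map_mul, map_sub, map_pow, thf_zero, thf_rename, omega_sq', sub_self, mul_zero]

theorem bck_exists {S A : Type*} [CommRing S] [CommRing A] (ρ : S →+* A) (g : S) (x : A)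
    (hx : x * x = ρ g) : ∃ bck : QuadraticAlgebra S g 0 →+* A,
      (∀ p, bck (algebraMap S _ p) = ρ p) ∧ bck QuadraticAlgebra.omega = x := by
  let _ : Algebra S A := ρ.toAlgebra
  refine ⟨(QuadraticAlgebra.lift (a := g) (b := 0) ⟨x, ?_⟩).toRingHom, ?_, ?_⟩
  · rw [zero_smul, add_zero, Algebra.smul_def, mul_one]; exact hx
  · intro p
    exact AlgHom.commutes _ p
  · simp

theorem rg_equiv (h0 : w 0 ≠ 0) :
    Nonempty ((MvPolynomial (Fin (m+2)) k ⧸ Ideal.span {Fw w}) ≃+* Rg (gS (cw w))) := by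
  let A := MvPolynomial (Fin (m+2)) k ⧸ Ideal.span {Fw w}
  let mk : MvPolynomial (Fin (m+2)) k →+* A := Ideal.Quotient.mk _
  let ρ : SS k (m+1) →+* A := mk.comp (rename Fin.succ : SS k (m+1) →ₐ[k] _).toRingHom
  have hρ : ∀ p, ρ p = mk (rename Fin.succ p) := fun p => rfl
  have hF : mk (Fw w) = 0 := Ideal.Quotient.eq_zero_iff_mem.2 (Ideal.mem_span_singleton_self _)
  have hu0 : mk (X 0) * mk (X 0) = ρ (gS (cw w)) := by
    have h1 : mk (C (w 0)⁻¹) * mk (Fw w) = 0 := by rw [hF, mul_zero]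
    have h3 : C (w 0)⁻¹ * Fw w = X 0 ^ 2 - rename Fin.succ (gS (cw w)) := by
      rw [Fw_eq w h0, ← mul_assoc, ← C_mul, inv_mul_cancel₀ h0, C_1, one_mul]
    rw [← map_mul, h3, map_sub, sub_eq_zero, map_pow, pow_two] at h1
    exact h1
  let fwd : A →+* Rg (gS (cw w)) := Ideal.Quotient.lift _ (thf w) (by
    intro a ha
    obtain ⟨b, rfl⟩ := Ideal.mem_span_singleton'.1 ha
    rw [map_mul, thf_F w h0, mul_zero])
  have hfwd : ∀ p, fwd (mk p) = thf w p := fun p => Ideal.Quotient.lift_mk _ _ _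
  obtain ⟨bck, hb1, hb2⟩ := bck_exists ρ (gS (cw w)) (mk (X 0)) hu0
  refine ⟨RingEquiv.ofRingHom fwd bck ?_ ?_⟩
  · apply RingHom.ext
    intro z
    have hz : z = algebraMap (SS k (m+1)) _ z.re
        + algebraMap (SS k (m+1)) _ z.im * QuadraticAlgebra.omega := by
      ext <;> simp [QuadraticAlgebra.algebraMap_eq]
    rw [RingHom.comp_apply, RingHom.id_apply, hz]
    simp only [map_add, map_mul, hb1, hb2, hρ, hfwd, thf_rename, thf_zero]
  · apply Ideal.Quotient.ringHom_ext
    apply MvPolynomial.ringHom_ext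
    · intro r
      change bck (fwd (mk (C r))) = mk (C r)
      rw [hfwd]
      have : thf w (C r) = algebraMap (SS k (m+1)) _ (C r) := by simp [thf]
      rw [this, hb1, hρ, rename_C]
    · intro i
      change bck (fwd (mk (X i))) = mk (X i)
      rw [hfwd]
      refine Fin.cases ?_ (fun j => ?_) i
      · rw [thf_zero, hb2]
      · rw [← rename_X, thf_rename, hb1, hρ]
end rg

section sub
variable {k : Type u} [Field k] {n : ℕ}

noncomputable def lsub (E : (Fin n → k) →ₗ[k] (Fin n → k)) :
    MvPolynomial (Fin n) k →ₐ[k] MvPolynomial (Fin n) k :=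
  aeval fun i => ∑ j, C (E (Pi.single j 1) i) * X j

theorem lsub_hom1 (E : (Fin n → k) →ₗ[k] (Fin n → k)) (i : Fin n) :
    (∑ j, C (E (Pi.single j 1) i) * X j : MvPolynomial (Fin n) k).IsHomogeneous 1 := by
  refine IsHomogeneous.sum _ _ _ fun j _ => ?_
  simpa using (isHomogeneous_C _ _).mul (isHomogeneous_X k j)

theorem lsub_hom (E : (Fin n → k) →ₗ[k] (Fin n → k)) {p : MvPolynomial (Fin n) k} {d : ℕ}
    (hp : p.IsHomogeneous d) : (lsub E p).IsHomogeneous d := by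
  have := IsHomogeneous.aeval hp _ (lsub_hom1 E)
  rw [one_mul] at this
  exact this

theorem eval_lsub (E : (Fin n → k) →ₗ[k] (Fin n → k)) (v : Fin n → k) (p : MvPolynomial (Fin n) k) :
    eval v (lsub E p) = eval (E v) p := by
  have : (aeval v : _ →ₐ[k] k).comp (lsub E) = aeval (E v) := by
    apply MvPolynomial.algHom_ext
    intro i
    simp only [AlgHom.comp_apply, lsub, aeval_X, map_sum, map_mul, algHom_C]
    have hv : v = ∑ j, v j • (Pi.single j 1 : Fin n → k) := by
      ext l; simp [Finset.sum_apply, Pi.single_apply]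
    conv_rhs => rw [hv]
    simp [Finset.sum_apply, mul_comm]
  have := congrArg (fun f => f p) this
  simpa [aeval_eq_eval] using this

theorem two_le_card : ((2 : ℕ) : Cardinal) ≤ Cardinal.mk k := by
  simpa using (Cardinal.two_le_iff.2 ⟨(0:k), 1, zero_ne_one⟩)

theorem lsub_inv (E F : (Fin n → k) →ₗ[k] (Fin n → k)) (h : ∀ v, F (E v) = v) :
    (lsub E).comp (lsub F) = AlgHom.id k _ := by
  apply MvPolynomial.algHom_ext
  intro i
  refine IsHomogeneous.funext_of_le_card (n := 1) (F := lsub E (lsub F (X i))) (G := X i)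
    (lsub_hom _ (lsub_hom _ (isHomogeneous_X k i))) (isHomogeneous_X k i) ?_ ?_
  · intro v
    rw [eval_lsub, eval_lsub, h]
  · exact le_trans (by norm_num) (two_le_card (k := k))

theorem quot_equiv (f : MvPolynomial (Fin n) k) (hf : f.IsHomogeneous 2)
    (w : Fin n → k) (E : (Fin n → k) ≃ₗ[k] (Fin n → k))
    (h : ∀ v, eval v f = ∑ i, w i * (E v i) ^ 2) :
    Nonempty ((MvPolynomial (Fin n) k ⧸ Ideal.span {f}) ≃+*
      (MvPolynomial (Fin n) k ⧸ Ideal.span {Fw w})) := by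
  let e : MvPolynomial (Fin n) k ≃ₐ[k] MvPolynomial (Fin n) k :=
    AlgEquiv.ofAlgHom (lsub E.symm.toLinearMap) (lsub E.toLinearMap)
      (lsub_inv _ _ (by simp)) (lsub_inv _ _ (by simp))
  have he : e f = Fw w := by
    refine IsHomogeneous.funext_of_le_card (n := 2) (lsub_hom E.symm.toLinearMap hf) ?_ ?_ two_le_card
    · refine IsHomogeneous.sum _ _ _ fun j _ => ?_
      simpa using (isHomogeneous_C _ (w j)).mul ((isHomogeneous_X k j).pow 2)
    · intro v
      change eval v (lsub E.symm.toLinearMap f) = _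
      rw [eval_lsub, h]
      simp [Fw]
  refine ⟨Ideal.quotientEquiv _ _ e.toRingEquiv ?_⟩
  rw [Ideal.map_span, Set.image_singleton]
  exact congrArg (fun x => Ideal.span {x}) he.symm

end sub

theorem final (k : Type u) [Field k] (hchar : ringChar k ≠ 2)
    (n : ℕ) (hn : 1 < n)
    (f : MvPolynomial (Fin n) k) (hf : f.IsHomogeneous 2)
    (Q : QuadraticForm k (Fin n → k))
    (hfQ : ∀ v : Fin n → k, MvPolynomial.eval v f = Q v)
    (hnd : Q.polarBilin.Nondegenerate)
    (hsimple : IsSimpleRing (CliffordAlgebra.even Q)) :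
    Nonempty (GGroup (MvPolynomial (Fin n) k ⧸ Ideal.span {f}) ≃+ ℤ × ZMod 2) := by
  have h2 : (2 : k) ≠ 0 := Ring.two_ne_zero hchar
  obtain ⟨m, rfl⟩ : ∃ m, n = m + 2 := ⟨n - 2, by omega⟩
  let _ : Invertible (2 : k) := invertibleOfNonzero h2
  have hsep : (QuadraticMap.associated (R := k) Q).SeparatingLeft := by
    intro x hx
    refine hnd.1 x fun y => ?_
    have := hx y
    rw [QuadraticMap.associated_apply] at this
    rw [QuadraticMap.polarBilin_apply_apply, QuadraticMap.polar]
    simpa [h2] using this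
  obtain ⟨w, E, hw⟩ : ∃ (w : Fin (m+2) → k) (E : (Fin (m+2) → k) ≃ₗ[k] (Fin (m+2) → k)),
      (∀ i, w i ≠ 0) ∧ ∀ v, Q v = ∑ i, w i * (E v i) ^ 2 := by
    obtain ⟨w, ⟨e⟩⟩ := QuadraticForm.equivalent_weightedSumSquares_units_of_nondegenerate' Q hsep
    have hfr : Module.finrank k (Fin (m+2) → k) = m + 2 := Module.finrank_fin_fun k
    generalize Module.finrank k (Fin (m+2) → k) = N at *
    subst hfr
    refine ⟨fun i => w i, e.toLinearEquiv, fun i => (w i).ne_zero, fun v => ?_⟩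
    rw [← e.map_app, QuadraticMap.weightedSumSquares_apply]
    refine Finset.sum_congr rfl fun i _ => ?_
    rw [pow_two, Units.smul_def, smul_eq_mul]; rfl
  obtain ⟨hw0, hQ⟩ := hw
  obtain ⟨e1⟩ := quot_equiv f hf w E (fun v => (hfQ v).trans (hQ v))
  obtain ⟨e2⟩ := rg_equiv w (hw0 0)
  have hs : IsSimpleRing (Cq (cw w)) := by
    let φ : (Fin (m+2) → k) ≃ₗ[k] ((Fin (m+1) → k) × k) :=
      E.trans ((Fin.consLinearEquiv k (fun _ : Fin (m+2) => k)).symm.trans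
        (LinearEquiv.prodComm k _ _))
    have hφ : ∀ v, φ v = (fun i => E v i.succ, E v 0) := fun v => rfl
    obtain ⟨e3⟩ := even_equiv Q
      (CliffordAlgebra.EquivEven.Q' (QuadraticMap.weightedSumSquares k (cw w))) φ (- w 0)
      (neg_ne_zero.2 (hw0 0)) (by
        intro v
        rw [hφ, CliffordAlgebra.EquivEven.Q'_apply, QuadraticMap.weightedSumSquares_apply, hQ,
          Fin.sum_univ_succ, mul_sub, Finset.mul_sum, add_comm, sub_eq_add_neg]
        congr 1
        · refine Finset.sum_congr rfl fun i _ => ?_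
          simp only [cw, smul_eq_mul]
          have := hw0 0
          field_simp
        · ring)
    exact simple_equiv (e3.trans (CliffordAlgebra.equivEven _).symm).toRingEquiv hsimple
  obtain ⟨e4⟩ := main_diag (c := cw w) h2
    (fun i => div_ne_zero (neg_ne_zero.2 (hw0 _)) (hw0 _)) hs
  exact ⟨(gequiv (e1.trans e2)).symm.trans e4⟩

end Swan

/-- **Swan's theorem** (Corollary 2.1).  Let `k` be a field of characteristic not `2`, `n > 1`,
and let `f ∈ k[x₁,…,xₙ]` be a homogeneous polynomial of degree `2` whose associated quadratic
form `Q` (so `f(v) = Q v` for all `v ∈ kⁿ`) is non-degenerate.  If the even part `C₀(Q)` of the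
Clifford algebra of `Q` is a simple ring, then the Grothendieck group of finitely generated
modules over `R = k[x₁,…,xₙ]/(f)` is isomorphic to `ℤ ⊕ ℤ/2ℤ`. -/
theorem swan_grothendieck_group
    (k : Type u) [Field k] (hchar : ringChar k ≠ 2)
    (n : ℕ) (hn : 1 < n)
    (f : MvPolynomial (Fin n) k) (hf : f.IsHomogeneous 2)
    (Q : QuadraticForm k (Fin n → k))
    (hfQ : ∀ v : Fin n → k, MvPolynomial.eval v f = Q v)
    (hnd : Q.polarBilin.Nondegenerate)
    (hsimple : IsSimpleRing (CliffordAlgebra.even Q)) :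
    Nonempty (GGroup (MvPolynomial (Fin n) k ⧸ Ideal.span {f}) ≃+ ℤ × ZMod 2) := by
  exact Swan.final k hchar n hn f hf Q hfQ hnd hsimple
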